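/- arXiv:2107.03855 — 2 statements merged into one kernel-verified Lean document; each statement's English description precedes it below -/
import Mathlib

section
/- There exists a real number M ≥ 1 such that for all x ≥ 8 and y ≥ 2, one has f_a(x,y) ≥ f_a*(x,y) ≥ A(x/M, y, 2). -/
/-- `Pmax n` is the largest prime factor of `n`, with the convention `Pmax 1 = 1`. -/
def Pmax (n : ℕ) : ℕ := if n ≤ 1 then 1 else n.primeFactors.sup id

/-- The Schinzel–Szekeres function: if `n = p₁ p₂ ⋯ p_Ω` with `p₁ ≥ p₂ ≥ ⋯ ≥ p_Ω` prime,
`SS n = max_{1 ≤ k ≤ Ω} p₁ ⋯ p_{k-1} p_k²`, and `SS 1 = 1`.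
(`Nat.primeFactorsList n` is the *increasing* list of prime factors with multiplicity;
the value produced for the index `j` is the one for `k = Ω - j`.) -/
def SS (n : ℕ) : ℕ :=
  ((List.range n.primeFactorsList.length).map
    (fun j => (n.primeFactorsList.drop j).headI * (n.primeFactorsList.drop j).prod)).foldr max 1

/-- A chain in the divisor graph: a finite sequence of pairwise distinct positive
integers in which any two consecutive terms are adjacent in the divisor graph
(the smaller divides the larger). -/
def IsDivChain (l : List ℕ) : Prop :=
  l.Nodup ∧ (∀ n ∈ l, 0 < n) ∧ l.Chain' (fun a b => a ∣ b ∨ b ∣ a)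

/-- `Axyz x y z = #{n ≥ 1 : n ≤ x, P(n) ≤ y, P⁻(n) > z and S(n) ≤ x}`
(the condition `P⁻(n) > z` is expressed as: every prime factor of `n` exceeds `z`,
which is vacuously true for `n = 1`, matching `P⁻(1) = +∞`). -/
noncomputable def Axyz (x y z : ℝ) : ℕ :=
  {n : ℕ | 1 ≤ n ∧ (n : ℝ) ≤ x ∧ (Pmax n : ℝ) ≤ y ∧
    (∀ p : ℕ, p.Prime → p ∣ n → z < (p : ℝ)) ∧ (SS n : ℝ) ≤ x}.ncard

/-- `faxy x y` is the maximum length of a chain all of whose terms `n` belong to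
`𝒜(x) = {n ≥ 1 : S(n) ≤ x}` and satisfy `n ≤ x` and `P(n) ≤ y`. -/
noncomputable def faxy (x y : ℝ) : ℕ :=
  sSup {L : ℕ | ∃ l : List ℕ, IsDivChain l ∧
    (∀ n ∈ l, 1 ≤ n ∧ (SS n : ℝ) ≤ x ∧ (n : ℝ) ≤ x ∧ (Pmax n : ℝ) ≤ y) ∧ l.length = L}

/-- `faxyStar x y` is the maximum length of a chain all of whose terms `n` belong to
`𝒜(x)` and satisfy `√x < n ≤ x` and `P(n) ≤ y`. -/
noncomputable def faxyStar (x y : ℝ) : ℕ :=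
  sSup {L : ℕ | ∃ l : List ℕ, IsDivChain l ∧
    (∀ n ∈ l, 1 ≤ n ∧ (SS n : ℝ) ≤ x ∧ Real.sqrt x < (n : ℝ) ∧ (n : ℝ) ≤ x ∧
      (Pmax n : ℝ) ≤ y) ∧ l.length = L}

/-!
To every odd `n` counted by `A(x/M, y, 2)` attach the path of the integers `n * 2 ^ k` in
`(√x, x / 2]`; as these paths are disjoint and nonempty, it suffices to run through all of them in
one chain. For `n ≠ 1` with smallest prime factor `p`, choose an odd number `m p < p`, the hub of
`p`. With `a = n / p * m p` and `b = n * m p = p * a`, the paths of `a` and `b` can be joined by the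
two edges between `{a * 2 ^ k, a * 2 ^ (k + 1)}` and `{b * 2 ^ k, b * 2 ^ (k + 1)}`, where
`b * 2 ^ k` is about `x / 2 ^ (s p)`. Rotate each path cyclically, in a direction given by the
parity of the number of prime factors; each connection then exchanges two images of the rotation
and merges two cycles. The connection from `n` separates the multiples of `n` by `p`-smooth numbers
from all other paths, and connections from numbers with a smaller prime `p` respect this
separation. Merging in order of increasing `p` thus ends with a single cycle, all of whose steps
are divisibilities except those closing up a path, which are divisibilities too, since the elements
of a path differ by powers of `2`.

Connections must not share an edge of a path. This happens only for primes with the same hub, or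
for a prime with the hub `1`, and is avoided if the shifts `s p` differ enough. They have to stay
bounded for `M` to exist, so each hub may serve only boundedly many primes. As the hubs also have
to satisfy a constraint on their prime factors, they are taken among the dense numbers, those
without large gaps between consecutive divisors, and one needs that there are `≫ X / log X` of
them around `X`, as many as primes. This lower bound comes from a weighted count, in which a
potential involving Mertens sums is conserved when the prime factors are chosen one by one.
-/

namespace DivisorChain

open Finset

section SmoothPart

/-- The largest divisor of `n` all of whose prime factors are less than `u`
(and `1` for `n = 0`). -/
def smoothPart (u n : ℕ) : ℕ := (n.primeFactorsList.filter (· < u)).prod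

/-- All prime factors of `n` are at least `u`. -/
def IsRough (u n : ℕ) : Prop := ∀ p : ℕ, p.Prime → p ∣ n → u ≤ p

variable {a b d n p u v : ℕ}

lemma isRough_minFac (n : ℕ) : IsRough n.minFac n :=
  fun _ hp hd => Nat.minFac_le_of_dvd hp.two_le hd

lemma IsRough.of_dvd (h : IsRough u b) (hd : a ∣ b) : IsRough u a :=
  fun p hp hpa => h p hp (hpa.trans hd)

lemma IsRough.mul (ha : IsRough u a) (hb : IsRough u b) : IsRough u (a * b) :=
  fun p hp hd => (hp.dvd_mul.1 hd).elim (ha p hp) (hb p hp)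

lemma IsRough.mono (h : IsRough v a) (huv : u ≤ v) : IsRough u a :=
  fun p hp hd => huv.trans (h p hp hd)

lemma isRough_of_prime (hp : p.Prime) (h : u ≤ p) : IsRough u p := by
  intro q hq hd
  rwa [(Nat.prime_dvd_prime_iff_eq hq hp).1 hd]

lemma IsRough.succ_of_not_prime (h : IsRough u a) (hu : ¬u.Prime) : IsRough (u + 1) a :=
  fun p hp hd => (h p hp hd).lt_of_ne fun hup => hu (hup ▸ hp)

lemma IsRough.succ_of_not_dvd (h : IsRough u a) (hu : ¬u ∣ a) : IsRough (u + 1) a :=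
  fun p hp hd => (h p hp hd).lt_of_ne fun hup => hu (hup ▸ hd)

lemma prime_pow_mem_smoothNumbers {k : ℕ} (hp : p.Prime) (h : p < u) : p ^ k ∈ u.smoothNumbers :=
  Nat.mem_smoothNumbers'.2 fun _ hq hd =>
    (Nat.prime_dvd_prime_iff_eq hq hp).1 (hq.dvd_of_dvd_pow hd) ▸ h

lemma exists_prime_dvd_of_notMem_smoothNumbers (h : n ∉ u.smoothNumbers) :
    ∃ q : ℕ, q.Prime ∧ q ∣ n ∧ u ≤ q := by
  simpa [Nat.mem_smoothNumbers'] using h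

lemma IsRough.coprime (ha : IsRough u a) (hb : b ∈ u.smoothNumbers) : a.Coprime b :=
  Nat.coprime_of_dvd fun p hp hpa hpb =>
    (ha p hp hpa).not_gt (Nat.mem_smoothNumbers'.1 hb p hp hpb)

lemma smoothPart_mem_smoothNumbers (u n : ℕ) : smoothPart u n ∈ u.smoothNumbers :=
  Nat.prod_mem_smoothNumbers n u

lemma smoothPart_pos (u n : ℕ) : 0 < smoothPart u n :=
  Nat.pos_of_ne_zero (Nat.ne_zero_of_mem_smoothNumbers (smoothPart_mem_smoothNumbers u n))

lemma prod_filter_le_mul_smoothPart (u : ℕ) (hn : n ≠ 0) :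
    (n.primeFactorsList.filter (u ≤ ·)).prod * smoothPart u n = n := by
  have hperm := (List.filter_append_perm (· < u) n.primeFactorsList).prod_eq
  simp only [List.prod_append, Nat.prod_primeFactorsList hn, ← decide_not, not_lt] at hperm
  rwa [mul_comm]

lemma exists_isRough_mul_smoothPart (u : ℕ) (hn : n ≠ 0) :
    ∃ a, IsRough u a ∧ n = a * smoothPart u n := by
  refine ⟨_, fun p hp hd => ?_, (prod_filter_le_mul_smoothPart u hn).symm⟩
  obtain ⟨q, hq, hpq⟩ := hp.prime.dvd_prod_iff.1 hd
  rw [List.mem_filter] at hq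
  rw [(Nat.prime_dvd_prime_iff_eq hp (Nat.prime_of_mem_primeFactorsList hq.1)).1 hpq]
  exact of_decide_eq_true hq.2

lemma smoothPart_dvd (u : ℕ) (hn : n ≠ 0) : smoothPart u n ∣ n :=
  let ⟨a, _, ha⟩ := exists_isRough_mul_smoothPart u hn
  ⟨a, ha.trans (mul_comm _ _)⟩

lemma dvd_smoothPart (hn : n ≠ 0) (hd : d ∣ n) (hs : d ∈ u.smoothNumbers) :
    d ∣ smoothPart u n := by
  obtain ⟨a, ha, hna⟩ := exists_isRough_mul_smoothPart u hn
  exact (ha.coprime hs).symm.dvd_of_dvd_mul_left (hna ▸ hd)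

lemma smoothPart_dvd_smoothPart (u : ℕ) (hb : b ≠ 0) (h : a ∣ b) :
    smoothPart u a ∣ smoothPart u b :=
  dvd_smoothPart hb ((smoothPart_dvd u (ne_zero_of_dvd_ne_zero hb h)).trans h)
    (smoothPart_mem_smoothNumbers u a)

lemma smoothPart_le_smoothPart (u : ℕ) (hb : b ≠ 0) (h : a ∣ b) :
    smoothPart u a ≤ smoothPart u b :=
  Nat.le_of_dvd (smoothPart_pos u b) (smoothPart_dvd_smoothPart u hb h)

lemma smoothPart_smoothPart (hn : n ≠ 0) (h : v ≤ u) :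
    smoothPart v (smoothPart u n) = smoothPart v n :=
  Nat.dvd_antisymm (smoothPart_dvd_smoothPart v hn (smoothPart_dvd u hn))
    (dvd_smoothPart (smoothPart_pos u n).ne'
      (dvd_smoothPart hn (smoothPart_dvd v hn)
        (Nat.smoothNumbers_mono h (smoothPart_mem_smoothNumbers v n)))
      (smoothPart_mem_smoothNumbers v n))

lemma smoothPart_of_mem_smoothNumbers (h : n ∈ u.smoothNumbers) : smoothPart u n = n := by
  rw [smoothPart, List.filter_eq_self.2, Nat.prod_primeFactorsList h.1]
  simpa using (Nat.mem_smoothNumbers.1 h).2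

lemma smoothPart_of_isRough (h : IsRough u n) : smoothPart u n = 1 := by
  rw [smoothPart, List.filter_eq_nil_iff.2, List.prod_nil]
  intro p hp
  simpa using h p (Nat.prime_of_mem_primeFactorsList hp) (Nat.dvd_of_mem_primeFactorsList hp)

lemma smoothPart_mul (u : ℕ) (ha : a ≠ 0) (hb : b ≠ 0) :
    smoothPart u (a * b) = smoothPart u a * smoothPart u b := by
  rw [smoothPart, ((Nat.perm_primeFactorsList_mul ha hb).filter _).prod_eq, List.filter_append,
    List.prod_append, smoothPart, smoothPart]

lemma mul_smoothPart_le (hn : n ≠ 0) (hp : p.Prime) (hd : p ∣ n) : p * smoothPart p n ≤ n :=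
  Nat.le_of_dvd (Nat.pos_of_ne_zero hn) <|
    ((isRough_of_prime hp le_rfl).coprime (smoothPart_mem_smoothNumbers p n)).mul_dvd_of_dvd_of_dvd
      hd (smoothPart_dvd p hn)

end SmoothPart

section Dense

/-- A `c`-dense number: a positive integer coprime to `6` each of whose prime factors `q` is less
than `c` times the product of its prime factors below `q`. -/
def IsDense (c N : ℕ) : Prop :=
  N ≠ 0 ∧ ∀ q : ℕ, q.Prime → q ∣ N → 5 ≤ q ∧ q < c * smoothPart q N

variable {c N p s : ℕ}

lemma isDense_one (c : ℕ) : IsDense c 1 :=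
  ⟨one_ne_zero, fun _ hp hd => absurd (Nat.dvd_one.1 hd) hp.ne_one⟩

lemma IsDense.lt_mul_smoothPart (hN : IsDense c N) (hlt : p < c * N) :
    p < c * smoothPart p N := by
  by_cases hs : N ∈ p.smoothNumbers
  · rwa [smoothPart_of_mem_smoothNumbers hs]
  have hex := exists_prime_dvd_of_notMem_smoothNumbers hs
  classical
  obtain ⟨hl, hlN, hpl⟩ := Nat.find_spec hex
  have hsmooth : smoothPart (Nat.find hex) N ∈ p.smoothNumbers := by
    refine Nat.mem_smoothNumbers'.2 fun r hr hrd => not_le.1 fun hpr => ?_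
    have hlt := Nat.mem_smoothNumbers'.1 (smoothPart_mem_smoothNumbers _ N) r hr hrd
    exact Nat.find_min hex hlt ⟨hr, hrd.trans (smoothPart_dvd _ hN.1), hpr⟩
  calc p ≤ Nat.find hex := hpl
    _ < c * smoothPart (Nat.find hex) N := (hN.2 _ hl hlN).2
    _ ≤ c * smoothPart p N := Nat.mul_le_mul_left c <| Nat.le_of_dvd (smoothPart_pos p N) <|
        dvd_smoothPart hN.1 (smoothPart_dvd _ hN.1) hsmooth

lemma IsDense.mul_prime (hN : IsDense c N) (hp : p.Prime) (h5 : 5 ≤ p) (hlt : p < c * N) :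
    IsDense c (N * p) := by
  have h0 : N * p ≠ 0 := mul_ne_zero hN.1 hp.ne_zero
  have hmono (q : ℕ) : c * smoothPart q N ≤ c * smoothPart q (N * p) :=
    Nat.mul_le_mul_left c (smoothPart_le_smoothPart q h0 (Dvd.intro _ rfl))
  refine ⟨h0, fun q hq hd => ?_⟩
  rcases hq.dvd_mul.1 hd with h | h
  · exact (hN.2 q hq h).imp_right fun hlt => hlt.trans_le (hmono q)
  · obtain rfl : q = p := (Nat.prime_dvd_prime_iff_eq hq hp).1 h
    exact ⟨h5, (hN.lt_mul_smoothPart hlt).trans_le (hmono q)⟩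

lemma IsDense.mul_of_lt (hN : IsDense c N) (hs : s ≠ 0) (h5 : IsRough 5 s) (hlt : s < c * N) :
    IsDense c (N * s) := by
  induction s using Nat.recOnMul generalizing N with
  | zero => exact absurd rfl hs
  | one => simpa using hN
  | prime p hp => exact hN.mul_prime hp (h5 p hp dvd_rfl) hlt
  | mul a b iha ihb =>
    obtain ⟨ha, hb⟩ := mul_ne_zero_iff.1 hs
    rw [← mul_assoc]
    have hNa := iha hN ha (h5.of_dvd (Dvd.intro _ rfl))
      ((Nat.le_mul_of_pos_right a (Nat.pos_of_ne_zero hb)).trans_lt hlt)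
    refine ihb hNa hb (h5.of_dvd (Dvd.intro_left _ rfl)) ?_
    calc b ≤ a * b := Nat.le_mul_of_pos_left b (Nat.pos_of_ne_zero ha)
      _ < c * N := hlt
      _ ≤ c * (N * a) := Nat.mul_le_mul_left c (Nat.le_mul_of_pos_right N (Nat.pos_of_ne_zero ha))

end Dense

section Mertens

/-- The Mertens-type sum of `log p / (p - 1)` over the primes `p < u`. -/
noncomputable def mertensSum (u : ℕ) : ℝ := ∑ p ∈ u.primesBelow, Real.log p / (p - 1)

/-- The Mertens product of `1 - 1 / p` over the primes `p < u`. -/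
noncomputable def mertensProd (u : ℕ) : ℝ := ∏ p ∈ u.primesBelow, (1 - 1 / (p : ℝ))

variable {u : ℕ}

lemma mertensSum_succ_of_prime (hu : u.Prime) :
    mertensSum (u + 1) = mertensSum u + Real.log u / (u - 1) := by
  rw [mertensSum, Nat.primesBelow_succ, if_pos hu, sum_insert (Nat.notMem_primesBelow u), add_comm,
    mertensSum]

lemma mertensSum_succ_of_not_prime (hu : ¬u.Prime) : mertensSum (u + 1) = mertensSum u := by
  rw [mertensSum, Nat.primesBelow_succ, if_neg hu, mertensSum]

lemma mertensProd_succ_of_prime (hu : u.Prime) :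
    mertensProd (u + 1) = mertensProd u * (1 - 1 / u) := by
  rw [mertensProd, Nat.primesBelow_succ, if_pos hu, prod_insert (Nat.notMem_primesBelow u),
    mul_comm, mertensProd]

lemma mertensProd_succ_of_not_prime (hu : ¬u.Prime) : mertensProd (u + 1) = mertensProd u := by
  rw [mertensProd, Nat.primesBelow_succ, if_neg hu, mertensProd]

lemma log_div_sub_one_nonneg {p : ℕ} (hp : p ≠ 0) : 0 ≤ Real.log p / (p - 1) :=
  div_nonneg (Real.log_natCast_nonneg p)
    (sub_nonneg.2 (by exact_mod_cast Nat.one_le_iff_ne_zero.2 hp))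

lemma mertensSum_nonneg (u : ℕ) : 0 ≤ mertensSum u :=
  sum_nonneg fun _ hp => log_div_sub_one_nonneg (Nat.prime_of_mem_primesBelow hp).ne_zero

lemma mertensProd_pos (u : ℕ) : 0 < mertensProd u := by
  refine prod_pos fun p hp => sub_pos.2 ?_
  have hp1 : (1 : ℝ) < p := by exact_mod_cast (Nat.prime_of_mem_primesBelow hp).one_lt
  exact (div_lt_one (by linarith)).2 hp1

lemma sub_one_mul_factorization_factorial_le {p : ℕ} (hp : p.Prime) (n : ℕ) :
    (p - 1) * n.factorial.factorization p ≤ n := by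
  have : Fact p.Prime := ⟨hp⟩
  rw [Nat.factorization_def _ hp, sub_one_mul_padicValNat_factorial]
  exact Nat.sub_le _ _

lemma log_eq_sum_factorization_mul_log {n : ℕ} (hn : n ≠ 0) :
    Real.log n = ∑ p ∈ n.primeFactors, (n.factorization p : ℝ) * Real.log p := by
  conv_lhs => rw [← Nat.prod_factorization_pow_eq_self hn]
  rw [Finsupp.prod, Nat.support_factorization, Nat.cast_prod, Real.log_prod]
  · simp only [Nat.cast_pow, Real.log_pow]
  · intro p hp
    have := (Nat.prime_of_mem_primeFactors hp).ne_zero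
    positivity

lemma log_factorial_le_mul_mertensSum (n : ℕ) :
    Real.log n.factorial ≤ n * mertensSum (n + 1) := by
  have hsub : n.factorial.primeFactors ⊆ (n + 1).primesBelow := fun p hp => by
    have hpp := Nat.prime_of_mem_primeFactors hp
    have hpn := hpp.dvd_factorial.1 (Nat.dvd_of_mem_primeFactors hp)
    exact Nat.mem_primesBelow.2 ⟨Nat.lt_succ_of_le hpn, hpp⟩
  rw [log_eq_sum_factorization_mul_log n.factorial_ne_zero, mertensSum, mul_sum]
  refine (sum_le_sum fun p hp => ?_).trans (sum_le_sum_of_subset_of_nonneg hsub fun p hp _ =>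
    mul_nonneg n.cast_nonneg (log_div_sub_one_nonneg (Nat.prime_of_mem_primesBelow hp).ne_zero))
  have hpp := Nat.prime_of_mem_primeFactors hp
  have hp1 : (1 : ℝ) < p := by exact_mod_cast hpp.one_lt
  have hle : ((p : ℝ) - 1) * n.factorial.factorization p ≤ n := by
    have h : (((p - 1) * n.factorial.factorization p : ℕ) : ℝ) ≤ n := by
      exact_mod_cast sub_one_mul_factorization_factorial_le hpp n
    rwa [Nat.cast_mul, Nat.cast_sub hpp.one_lt.le, Nat.cast_one] at h
  rw [← mul_div_assoc, le_div_iff₀ (by linarith)]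
  calc n.factorial.factorization p * Real.log p * (p - 1)
      = (p - 1) * n.factorial.factorization p * Real.log p := by ring
    _ ≤ n * Real.log p := mul_le_mul_of_nonneg_right hle (Real.log_nonneg hp1.le)

lemma log_sub_one_le_mertensSum {n : ℕ} (hn : n ≠ 0) :
    Real.log n - 1 ≤ mertensSum (n + 1) := by
  have hn1 : (1 : ℝ) ≤ n := by exact_mod_cast Nat.one_le_iff_ne_zero.2 hn
  have hstirling := Stirling.le_log_factorial_stirling hn
  have hlog : 0 ≤ Real.log n := Real.log_nonneg hn1
  have hpi : 0 ≤ Real.log (2 * Real.pi) := Real.log_nonneg (by linarith [Real.pi_gt_three])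
  refine le_of_mul_le_mul_left ?_ (by linarith : (0 : ℝ) < n)
  linarith [log_factorial_le_mul_mertensSum n]

lemma log_sub_two_le_mertensSum (hu : 2 ≤ u) : Real.log u - 2 ≤ mertensSum u := by
  obtain ⟨n, rfl⟩ : ∃ n, u = n + 1 := ⟨u - 1, by omega⟩
  have hn1 : (1 : ℝ) ≤ n := by exact_mod_cast (by omega : 1 ≤ n)
  have hlog : Real.log ((n + 1 : ℕ) : ℝ) ≤ Real.log 2 + Real.log n := by
    rw [← Real.log_mul (by norm_num) (by linarith)]
    exact Real.log_le_log (by positivity) (by push_cast; linarith)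
  linarith [log_sub_one_le_mertensSum (n := n) (by omega), Real.log_two_lt_d9]

end Mertens

section RoughSum

open Classical in
/-- The sum of the reciprocals of the integers in `[1, V]` without prime factors below `u`. -/
noncomputable def roughSum (u V : ℕ) : ℝ := ∑ s ∈ Icc 1 V with IsRough u s, 1 / (s : ℝ)

variable {u : ℕ}

lemma log_le_roughSum_zero (V : ℕ) : Real.log V ≤ roughSum 0 V := by
  classical
  have hharm := log_add_one_le_harmonic V
  rw [harmonic_eq_sum_Icc] at hharm
  push_cast at hharm
  rw [roughSum, filter_true_of_mem fun s _ p _ _ => p.zero_le]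
  simp only [one_div]
  refine le_trans ?_ hharm
  rcases V.eq_zero_or_pos with rfl | hV
  · simp
  · exact Real.log_le_log (by exact_mod_cast hV) (by linarith)

lemma roughSum_succ_of_not_prime (hu : ¬u.Prime) (V : ℕ) : roughSum u V ≤ roughSum (u + 1) V := by
  classical
  exact sum_le_sum_of_subset_of_nonneg
    (monotone_filter_right _ fun _ _ h => h.succ_of_not_prime hu) fun _ _ _ => by positivity

lemma roughSum_le_add_of_prime (hu : u.Prime) (V : ℕ) :
    roughSum u V ≤ roughSum (u + 1) V + 1 / u * roughSum u V := by
  classical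
  set R := (Icc 1 V).filter (IsRough u) with hR
  have hdvd : R.filter (u ∣ ·) ⊆ R.image (u * ·) := by
    intro s hs
    simp only [hR, mem_filter, mem_Icc] at hs
    obtain ⟨⟨⟨hs1, hsV⟩, hrough⟩, t, rfl⟩ := hs
    simp only [hR, mem_image, mem_filter, mem_Icc]
    exact ⟨t, ⟨⟨Nat.pos_of_mul_pos_left hs1, (Nat.le_mul_of_pos_left t hu.pos).trans hsV⟩,
      hrough.of_dvd (Dvd.intro_left _ rfl)⟩, rfl⟩
  have hmul : ∑ s ∈ R.filter (u ∣ ·), 1 / (s : ℝ) ≤ 1 / u * ∑ s ∈ R, 1 / (s : ℝ) := calc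
    _ ≤ ∑ s ∈ R.image (u * ·), 1 / (s : ℝ) :=
      sum_le_sum_of_subset_of_nonneg hdvd fun _ _ _ => by positivity
    _ = ∑ s ∈ R, 1 / ((u * s : ℕ) : ℝ) :=
      sum_image fun a _ b _ hab => Nat.eq_of_mul_eq_mul_left hu.pos hab
    _ = 1 / u * ∑ s ∈ R, 1 / (s : ℝ) := by
      simp only [mul_sum, Nat.cast_mul, div_mul_div_comm, one_mul]
  have hndvd : ∑ s ∈ R.filter (¬u ∣ ·), 1 / (s : ℝ) ≤ roughSum (u + 1) V := by
    refine sum_le_sum_of_subset_of_nonneg (fun s hs => ?_) fun _ _ _ => by positivity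
    simp only [hR, mem_filter] at hs ⊢
    exact ⟨hs.1.1, hs.1.2.succ_of_not_dvd hs.2⟩
  have hsplit := sum_filter_add_sum_filter_not R (u ∣ ·) fun s => 1 / (s : ℝ)
  change ∑ s ∈ R, 1 / (s : ℝ) ≤ _ + 1 / u * ∑ s ∈ R, 1 / (s : ℝ)
  linarith

lemma mertensProd_mul_log_le_roughSum (u V : ℕ) :
    mertensProd u * Real.log V ≤ roughSum u V := by
  induction u with
  | zero => simpa [mertensProd, Nat.primesBelow] using log_le_roughSum_zero V
  | succ u ih =>
    by_cases hu : u.Prime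
    · have hu1 : (1 : ℝ) < u := by exact_mod_cast hu.one_lt
      have hnonneg : 0 ≤ 1 - 1 / (u : ℝ) :=
        sub_nonneg.2 ((div_le_one (by linarith)).2 hu1.le)
      calc mertensProd (u + 1) * Real.log V
          = (1 - 1 / u) * (mertensProd u * Real.log V) := by
            rw [mertensProd_succ_of_prime hu]; ring
        _ ≤ (1 - 1 / u) * roughSum u V := mul_le_mul_of_nonneg_left ih hnonneg
        _ ≤ roughSum (u + 1) V := by linarith [roughSum_le_add_of_prime hu V]
    · rw [mertensProd_succ_of_not_prime hu]
      exact ih.trans (roughSum_succ_of_not_prime hu V)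

end RoughSum

section DenseMass

/-- The potential of a dense number `r` all of whose remaining prime factors are to be at least
`u`. It splits additively at a prime `u`, according to whether `u` divides the cofactor. -/
noncomputable def potential (r u : ℕ) : ℝ :=
  mertensProd u / r * (Real.log r - mertensSum u + 3)

open Classical in
/-- The `c`-dense numbers in `[a, b]`. -/
noncomputable def denseIcc (c a b : ℕ) : Finset ℕ := {N ∈ Icc a b | IsDense c N}

open Classical in
/-- The sum of the reciprocals of the `c`-dense numbers in `[W, Z]` of the form `r * s` with `s`
free of prime factors below `u`. -/
noncomputable def denseMass (c W Z r u : ℕ) : ℝ :=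
  ∑ N ∈ denseIcc c W Z with ∃ s, IsRough u s ∧ N = r * s, 1 / (N : ℝ)

variable {c W V Z r u : ℕ}

lemma mem_denseIcc {a b N : ℕ} : N ∈ denseIcc c a b ↔ (a ≤ N ∧ N ≤ b) ∧ IsDense c N := by
  classical
  rw [denseIcc, mem_filter, mem_Icc]

lemma denseMass_nonneg (c W Z r u : ℕ) : 0 ≤ denseMass c W Z r u :=
  sum_nonneg fun _ _ => by positivity

lemma potential_succ_of_not_prime (hu : ¬u.Prime) (r : ℕ) :
    potential r (u + 1) = potential r u := by
  rw [potential, mertensProd_succ_of_not_prime hu, mertensSum_succ_of_not_prime hu, potential]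

lemma potential_succ_add_potential_mul (hu : u.Prime) (hr : r ≠ 0) :
    potential r (u + 1) + potential (r * u) u = potential r u := by
  have hr0 : (r : ℝ) ≠ 0 := by exact_mod_cast hr
  have hu0 : (u : ℝ) ≠ 0 := by exact_mod_cast hu.ne_zero
  have hu1 : (u : ℝ) - 1 ≠ 0 := sub_ne_zero.2 (by exact_mod_cast hu.one_lt.ne')
  simp only [potential]
  rw [mertensProd_succ_of_prime hu, mertensSum_succ_of_prime hu, Nat.cast_mul,
    Real.log_mul hr0 hu0]
  field_simp
  ring

lemma potential_nonpos (hc : 5 ≤ Real.log c) (hr : r ≠ 0) (hu : 2 ≤ u) (hle : c * r ≤ u) :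
    potential r u ≤ 0 := by
  have hc0 : (c : ℝ) ≠ 0 := fun h => by simp only [h, Real.log_zero] at hc; linarith
  have hr0 : (r : ℝ) ≠ 0 := by exact_mod_cast hr
  have hlog : Real.log c + Real.log r ≤ Real.log u := by
    rw [← Real.log_mul hc0 hr0]
    exact Real.log_le_log ((by positivity : (0 : ℝ) ≤ c * r).lt_of_ne' (mul_ne_zero hc0 hr0))
      (by exact_mod_cast hle)
  refine mul_nonpos_of_nonneg_of_nonpos ?_ (by linarith [log_sub_two_le_mertensSum hu])
  exact div_nonneg (mertensProd_pos u).le r.cast_nonneg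

lemma potential_le (hr : r ≠ 0) {R : ℝ} (hrR : r ≤ R) :
    potential r u ≤ mertensProd u / r * (Real.log R + 3) := by
  have hr0 : (0 : ℝ) < r := by exact_mod_cast Nat.pos_of_ne_zero hr
  have hlog := Real.log_le_log hr0 hrR
  exact mul_le_mul_of_nonneg_left (by linarith [mertensSum_nonneg u])
    (div_nonneg (mertensProd_pos u).le hr0.le)

lemma denseMass_succ_le (c W Z r u : ℕ) :
    denseMass c W Z r (u + 1) ≤ denseMass c W Z r u := by
  classical
  refine sum_le_sum_of_subset_of_nonneg (monotone_filter_right _ ?_) fun _ _ _ => by positivity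
  exact fun N _ ⟨s, hs, h⟩ => ⟨s, hs.mono u.le_succ, h⟩

lemma denseMass_succ_add_denseMass_mul_le (hu : u.Prime) (hr : r ≠ 0) :
    denseMass c W Z r (u + 1) + denseMass c W Z (r * u) u ≤ denseMass c W Z r u := by
  classical
  unfold denseMass
  rw [← sum_union]
  · refine sum_le_sum_of_subset_of_nonneg (fun N hN => ?_) fun _ _ _ => by positivity
    simp only [mem_union, mem_filter] at hN ⊢
    rcases hN with ⟨hN, s, hs, h⟩ | ⟨hN, s, hs, h⟩
    · exact ⟨hN, s, hs.mono u.le_succ, h⟩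
    · exact ⟨hN, u * s, (isRough_of_prime hu le_rfl).mul hs, by rw [h, mul_assoc]⟩
  · rw [disjoint_left]
    intro N hN hN'
    obtain ⟨-, s, hs, rfl⟩ := mem_filter.1 hN
    obtain ⟨-, t, -, h⟩ := mem_filter.1 hN'
    obtain rfl : s = u * t :=
      Nat.eq_of_mul_eq_mul_left (Nat.pos_of_ne_zero hr) (h.trans (mul_assoc _ _ _))
    exact absurd (hs u hu (Dvd.intro _ rfl)) (Nat.not_succ_le_self u)

lemma roughSum_div_le_denseMass (hr : IsDense c r) (hW : W ≤ r) (hV : V < c * r)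
    (hZ : r * V ≤ Z) (hu : 5 ≤ u) : roughSum u V / r ≤ denseMass c W Z r u := by
  classical
  have hr0 : 0 < r := Nat.pos_of_ne_zero hr.1
  calc roughSum u V / r
      = ∑ s ∈ Icc 1 V with IsRough u s, 1 / ((r * s : ℕ) : ℝ) := by
        rw [roughSum, sum_div]
        simp only [Nat.cast_mul, div_div, mul_comm]
    _ = ∑ N ∈ ((Icc 1 V).filter (IsRough u)).image (r * ·), 1 / (N : ℝ) :=
        (sum_image (f := fun N : ℕ => 1 / (N : ℝ)) fun a _ b _ hab =>
          Nat.eq_of_mul_eq_mul_left hr0 hab).symm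
    _ ≤ denseMass c W Z r u := by
        refine sum_le_sum_of_subset_of_nonneg (fun N hN => ?_) fun _ _ _ => by positivity
        simp only [mem_filter, mem_image, mem_Icc, mem_denseIcc] at hN ⊢
        obtain ⟨s, ⟨⟨hs1, hsV⟩, hs⟩, rfl⟩ := hN
        exact ⟨⟨⟨hW.trans (Nat.le_mul_of_pos_right r hs1), (Nat.mul_le_mul_left r hsV).trans hZ⟩,
          hr.mul_of_lt (Nat.ne_of_gt hs1) (hs.mono hu) (hsV.trans_lt hV)⟩, s, hs, rfl⟩

lemma log_mul_potential_le_denseMass_of_le (hc : 2 ≤ c) (hV : 1 ≤ V) (hVW : V ≤ W)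
    (hZ : c * W ^ 2 * V ≤ Z) (hr : IsDense c r) (hu : 5 ≤ u) (hWr : W ≤ r)
    (hrW : r ≤ c * W ^ 2) :
    Real.log V * potential r u ≤ (Real.log (c * W ^ 2) + 3) * denseMass c W Z r u := by
  have : 0 ≤ Real.log V := Real.log_natCast_nonneg V
  have hnorm : 0 ≤ Real.log (c * W ^ 2) + 3 := by
    have := Real.log_natCast_nonneg (c * W ^ 2)
    push_cast at this
    linarith
  have hmass : mertensProd u / r * Real.log V ≤ denseMass c W Z r u := by
    refine le_trans ?_ (roughSum_div_le_denseMass hr hWr (V := V) (by nlinarith)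
      ((Nat.mul_le_mul_right V hrW).trans hZ) hu)
    rw [div_mul_eq_mul_div]
    exact div_le_div_of_nonneg_right (mertensProd_mul_log_le_roughSum u V) r.cast_nonneg
  have hpot := potential_le (u := u) hr.1 (R := c * W ^ 2) (by exact_mod_cast hrW)
  calc Real.log V * potential r u
      ≤ Real.log V * (mertensProd u / r * (Real.log (c * W ^ 2) + 3)) := by gcongr
    _ = (Real.log (c * W ^ 2) + 3) * (mertensProd u / r * Real.log V) := by ring
    _ ≤ _ := by gcongr

-- The potential is conserved when a state `(r, u)` branches, is nonpositive where `u ≥ c * r`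
-- blocks all further prime factors, and is paid for by rough cofactors once `r ≥ W`.
theorem log_mul_potential_le_denseMass (hc : 5 ≤ Real.log c) (hV : 1 ≤ V) (hVW : V ≤ W)
    (hZ : c * W ^ 2 * V ≤ Z) {r u : ℕ} (hr : IsDense c r) (hu : 5 ≤ u) (hrW : r ≤ c * W ^ 2) :
    Real.log V * potential r u ≤ (Real.log (c * W ^ 2) + 3) * denseMass c W Z r u := by
  have hr0 : r ≠ 0 := hr.1
  have hc2 : 2 ≤ c := by
    by_contra! h
    interval_cases c <;> norm_num at hc
  have hlogV : 0 ≤ Real.log V := Real.log_natCast_nonneg V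
  have hnorm : 0 ≤ Real.log (c * W ^ 2) + 3 := by
    have := Real.log_natCast_nonneg (c * W ^ 2)
    push_cast at this
    linarith
  rcases le_or_gt W r with hWr | hWr
  · exact log_mul_potential_le_denseMass_of_le hc2 hV hVW hZ hr hu hWr hrW
  rcases le_or_gt (c * r) u with hcu | hcu
  · exact (mul_nonpos_of_nonneg_of_nonpos hlogV (potential_nonpos hc hr0 (by omega) hcu)).trans
      (mul_nonneg hnorm (denseMass_nonneg c W Z r u))
  have huW : u < c * W := hcu.trans_le (Nat.mul_le_mul_left c hWr.le)
  have hskip := log_mul_potential_le_denseMass hc hV hVW hZ hr (u := u + 1) (by omega) hrW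
  by_cases hup : u.Prime
  · have hmulW : r * u ≤ c * W ^ 2 := by nlinarith
    have : r < r * u := lt_mul_of_one_lt_right (Nat.pos_of_ne_zero hr0) hup.one_lt
    have htake := log_mul_potential_le_denseMass hc hV hVW hZ (hr.mul_prime hup hu hcu) hu hmulW
    calc Real.log V * potential r u
        = Real.log V * potential r (u + 1) + Real.log V * potential (r * u) u := by
          rw [← potential_succ_add_potential_mul hup hr0]; ring
      _ ≤ (Real.log (c * W ^ 2) + 3) * (denseMass c W Z r (u + 1) + denseMass c W Z (r * u) u) := by
          rw [mul_add]; exact add_le_add hskip htake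
      _ ≤ _ := mul_le_mul_of_nonneg_left (denseMass_succ_add_denseMass_mul_le hup hr0) hnorm
  · rw [potential_succ_of_not_prime hup] at hskip
    exact hskip.trans (mul_le_mul_of_nonneg_left (denseMass_succ_le c W Z r u) hnorm)
termination_by (c * W ^ 2 + 1 - r) + (c * W + 1 - u)
decreasing_by all_goals omega

lemma mertensProd_five : mertensProd 5 = 1 / 3 := by
  rw [mertensProd, show Nat.primesBelow 5 = {2, 3} by decide]
  norm_num

lemma mertensSum_five_le : mertensSum 5 ≤ 2 := by
  have h3 : Real.log 3 ≤ 2 * Real.log 2 := calc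
    Real.log 3 ≤ Real.log (2 ^ 2) := Real.log_le_log (by norm_num) (by norm_num)
    _ = 2 * Real.log 2 := by rw [Real.log_pow, Nat.cast_two]
  rw [mertensSum, show Nat.primesBelow 5 = {2, 3} by decide, sum_pair (by norm_num)]
  norm_num
  linarith [Real.log_two_lt_d9]

theorem log_le_mul_sum_isDense (hc : 5 ≤ Real.log c) (hV : 1 ≤ V) (hVW : V ≤ W) :
    Real.log V ≤ 3 * (Real.log (c * W ^ 2) + 3) *
      ∑ N ∈ denseIcc c W (c * W ^ 2 * V), 1 / (N : ℝ) := by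
  have hcW : 1 ≤ c * W ^ 2 := by
    have hc0 : c ≠ 0 := by rintro rfl; norm_num at hc
    have hW0 : W ≠ 0 := by omega
    exact Nat.one_le_iff_ne_zero.2 (by positivity)
  have hlogW : 0 ≤ Real.log (c * W ^ 2) := Real.log_nonneg (by exact_mod_cast hcW)
  have hpot := log_mul_potential_le_denseMass hc hV hVW le_rfl (isDense_one c) (u := 5) le_rfl hcW
  have hstart : 1 / 3 ≤ potential 1 5 := by
    rw [potential, mertensProd_five, Nat.cast_one, Real.log_one]
    linarith [mertensSum_five_le]
  have hmass : denseMass c W (c * W ^ 2 * V) 1 5 ≤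
      ∑ N ∈ denseIcc c W (c * W ^ 2 * V), 1 / (N : ℝ) := by
    classical
    exact sum_le_sum_of_subset_of_nonneg (filter_subset _ _) fun _ _ _ => by positivity
  have hlow := mul_le_mul_of_nonneg_left hstart (Real.log_natCast_nonneg V)
  have hup := mul_le_mul_of_nonneg_left hmass (by linarith : 0 ≤ Real.log (c * W ^ 2) + 3)
  linarith

end DenseMass

section Primes

/-- The primes in the real interval `(a, b]`. -/
noncomputable def primesIoc (a b : ℝ) : Finset ℕ := {p ∈ Ioc ⌊a⌋₊ ⌊b⌋₊ | p.Prime}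

variable {a b d : ℝ} {p : ℕ}

lemma mem_primesIoc (ha : 0 ≤ a) : p ∈ primesIoc a b ↔ p.Prime ∧ a < p ∧ p ≤ b := by
  rw [primesIoc, mem_filter, mem_Ioc, and_comm]
  exact and_congr_right fun hp => and_congr (Nat.floor_lt ha) (Nat.le_floor_iff' hp.ne_zero)

lemma sum_primesIoc_add_sum_primesIoc (f : ℕ → ℝ) (hab : a ≤ b) (hbd : b ≤ d) :
    ∑ p ∈ primesIoc a b, f p + ∑ p ∈ primesIoc b d, f p = ∑ p ∈ primesIoc a d, f p := by
  simp only [primesIoc, sum_filter]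
  exact sum_Ioc_consecutive _ (Nat.floor_mono hab) (Nat.floor_mono hbd)

lemma theta_add_sum_log_primesIoc (ha : 0 ≤ a) (hab : a ≤ b) :
    Chebyshev.theta a + ∑ p ∈ primesIoc a b, Real.log p = Chebyshev.theta b := by
  simpa [Chebyshev.theta, primesIoc] using
    sum_primesIoc_add_sum_primesIoc (fun p => Real.log p) ha hab

lemma theta_sub_theta_le (ha : 0 ≤ a) (hab : a ≤ b) :
    Chebyshev.theta b - Chebyshev.theta a ≤ #(primesIoc a b) * Real.log b := by
  rw [← theta_add_sum_log_primesIoc ha hab, add_sub_cancel_left, ← nsmul_eq_mul]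
  refine sum_le_card_nsmul _ _ _ fun p hp => ?_
  obtain ⟨hp, -, hpb⟩ := (mem_primesIoc ha).1 hp
  exact Real.log_le_log (by exact_mod_cast hp.pos) hpb

lemma card_primesIoc_mul_log_le_theta (ha : 0 < a) (hab : a ≤ b) :
    #(primesIoc a b) * Real.log a ≤ Chebyshev.theta b := by
  refine le_trans ?_ ((le_add_of_nonneg_left (Chebyshev.theta_nonneg a)).trans_eq
    (theta_add_sum_log_primesIoc ha.le hab))
  rw [← nsmul_eq_mul]
  refine card_nsmul_le_sum _ _ _ fun p hp => ?_
  exact Real.log_le_log ha ((mem_primesIoc ha.le).1 hp).2.1.le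

lemma card_primesIoc_four_pow_le {i : ℕ} (hi : 1 ≤ i) :
    (#(primesIoc (4 ^ i) (4 ^ (i + 1))) : ℝ) ≤ 4 ^ (i + 1) / i := by
  have hlog : 0 < Real.log 4 := Real.log_pos (by norm_num)
  have hpow : (4 : ℝ) ^ i ≤ 4 ^ (i + 1) := pow_le_pow_right₀ (by norm_num) i.le_succ
  have hle := (card_primesIoc_mul_log_le_theta (by positivity) hpow).trans
    (Chebyshev.theta_le_log4_mul_x (by positivity))
  rw [Real.log_pow] at hle
  rw [le_div_iff₀ (by exact_mod_cast hi)]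
  refine le_of_mul_le_mul_right ?_ hlog
  linarith

lemma eventually_sqrt_mul_log_le {ε : ℝ} (hε : 0 < ε) :
    ∀ᶠ t : ℝ in Filter.atTop, √t * Real.log t ≤ ε * t := by
  have hlog := (isLittleO_log_rpow_atTop (show (0 : ℝ) < 1 / 2 by norm_num)).bound hε
  filter_upwards [hlog, Filter.eventually_ge_atTop 0] with t ht ht0
  rw [← Real.sqrt_eq_rpow, Real.norm_of_nonneg (Real.sqrt_nonneg t)] at ht
  calc √t * Real.log t ≤ √t * (ε * √t) :=
        mul_le_mul_of_nonneg_left ((Real.le_norm_self _).trans ht) (Real.sqrt_nonneg t)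
    _ = ε * t := by rw [mul_left_comm, Real.mul_self_sqrt ht0]

lemma eventually_div_eight_le_card_primesIoc_mul_log :
    ∀ᶠ t : ℝ in Filter.atTop, t / 8 ≤ #(primesIoc (t / 4) t) * Real.log t := by
  have hlog4 : Real.log 4 = 2 * Real.log 2 := by
    rw [show (4 : ℝ) = 2 ^ 2 by norm_num, Real.log_pow, Nat.cast_two]
  filter_upwards [eventually_sqrt_mul_log_le (show (0 : ℝ) < 1 / 200 by norm_num),
    Filter.eventually_ge_atTop 200] with t hsqrt ht
  have hlogt : Real.log t ≤ √t * Real.log t :=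
    le_mul_of_one_le_left (Real.log_nonneg (by linarith)) (Real.one_le_sqrt.2 (by linarith))
  have hlow := Chebyshev.theta_ge' (show 1 ≤ t by linarith)
  have hup := Chebyshev.theta_le_log4_mul_x (show 0 ≤ t / 4 by linarith)
  have hsub := theta_sub_theta_le (show 0 ≤ t / 4 by linarith) (show t / 4 ≤ t by linarith)
  have hlog2 : Real.log (t + 2) ≤ Real.log t + Real.log 2 := by
    rw [← Real.log_mul (by linarith) (by norm_num)]
    exact Real.log_le_log (by linarith) (by linarith)
  rw [hlog4] at hup
  nlinarith [Real.log_two_gt_d9, Real.log_two_lt_d9]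

lemma eventually_le_sum_inv_primesIoc :
    ∀ᶠ t : ℝ in Filter.atTop, 1 / (8 * Real.log t) ≤ ∑ p ∈ primesIoc (t / 4) t, 1 / (p : ℝ) := by
  filter_upwards [eventually_div_eight_le_card_primesIoc_mul_log, Filter.eventually_gt_atTop 1]
    with t hcard ht
  have hlog : 0 < Real.log t := Real.log_pos ht
  calc 1 / (8 * Real.log t) ≤ #(primesIoc (t / 4) t) * (1 / t) := by
        rw [mul_one_div, div_le_div_iff₀ (by positivity) (by linarith)]
        linarith
    _ = #(primesIoc (t / 4) t) • (1 / t) := (nsmul_eq_mul _ _).symm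
    _ ≤ ∑ p ∈ primesIoc (t / 4) t, 1 / (p : ℝ) := by
        refine card_nsmul_le_sum _ _ _ fun p hp => ?_
        obtain ⟨hp, -, hpt⟩ := (mem_primesIoc (by linarith)).1 hp
        exact one_div_le_one_div_of_le (by exact_mod_cast hp.pos) hpt

lemma tendsto_four_pow : Filter.Tendsto (fun j : ℕ => (4 : ℝ) ^ j) Filter.atTop Filter.atTop :=
  tendsto_pow_atTop_atTop_of_one_lt (by norm_num)

lemma eventually_le_sum_inv_primesIoc_four_pow :
    ∀ᶠ j : ℕ in Filter.atTop, ∀ n k : ℕ, j + k ≤ n →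
      k / (8 * (n * Real.log 4)) ≤ ∑ p ∈ primesIoc (4 ^ j) (4 ^ (j + k)), 1 / (p : ℝ) := by
  obtain ⟨j₀, hj₀⟩ := Filter.eventually_atTop.1
    (tendsto_four_pow.eventually eventually_le_sum_inv_primesIoc)
  refine Filter.eventually_atTop.2 ⟨j₀, fun j hj n k hk => ?_⟩
  induction k with
  | zero => simp [primesIoc]
  | succ k ih =>
    have hblock := hj₀ (j + k + 1) (by omega)
    rw [Real.log_pow, pow_succ _ (j + k), mul_div_cancel_right₀ _ (by norm_num : (4 : ℝ) ≠ 0),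
      ← pow_succ] at hblock
    have : 0 < Real.log 4 := Real.log_pos (by norm_num)
    have hterm : 1 / (8 * (n * Real.log 4)) ≤ 1 / (8 * (((j + k + 1 : ℕ) : ℝ) * Real.log 4)) := by
      gcongr
      exact_mod_cast hk
    rw [← add_assoc j, ← sum_primesIoc_add_sum_primesIoc _
      (pow_le_pow_right₀ (by norm_num) (Nat.le_add_right j k) : (4 : ℝ) ^ j ≤ 4 ^ (j + k))
      (pow_le_pow_right₀ (by norm_num) (Nat.le_succ _)), Nat.cast_succ, add_div]
    exact add_le_add (ih (by omega)) (hterm.trans hblock)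

end Primes

section CountDense

lemma card_primeFactors_filter_le {n w k : ℕ} (hn : n ≠ 0) (h : n < w ^ (k + 1)) :
    #{p ∈ n.primeFactors | w ≤ p} ≤ k := by
  by_contra! hk
  have hw : 0 < w := Nat.pos_of_ne_zero fun hw => by simp [hw] at h
  have hle : w ^ (k + 1) ≤ n := calc
    w ^ (k + 1) ≤ w ^ #{p ∈ n.primeFactors | w ≤ p} := Nat.pow_le_pow_right hw hk
    _ ≤ ∏ p ∈ n.primeFactors with w ≤ p, p :=
      pow_card_le_prod _ _ _ fun p hp => (mem_filter.1 hp).2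
    _ ≤ ∏ p ∈ n.primeFactors, p := prod_le_prod_of_subset_of_one_le' (filter_subset _ _)
      fun p hp _ => (Nat.prime_of_mem_primeFactors hp).one_le
    _ ≤ n := Nat.le_of_dvd (Nat.pos_of_ne_zero hn) (Nat.prod_primeFactors_dvd n)
  omega

lemma sum_sum_mul_prime_le {A T : Finset ℕ} {P : ℕ → Finset ℕ} {f : ℕ → ℝ} {w k : ℕ}
    (hf : ∀ n ∈ T, 0 ≤ f n) (hP : ∀ N ∈ A, ∀ q ∈ P N, q.Prime ∧ w ≤ q ∧ N * q ∈ T)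
    (hT : ∀ n ∈ T, n ≠ 0 ∧ n < w ^ (k + 1)) :
    ∑ N ∈ A, ∑ q ∈ P N, f (N * q) ≤ k * ∑ n ∈ T, f n := by
  have hmaps : ∀ x ∈ A.sigma P, x.1 * x.2 ∈ T := fun x hx =>
    (hP x.1 (mem_sigma.1 hx).1 x.2 (mem_sigma.1 hx).2).2.2
  rw [sum_sigma', ← sum_fiberwise_of_maps_to hmaps, mul_sum]
  refine sum_le_sum fun n hn => ?_
  obtain ⟨hn0, hnw⟩ := hT n hn
  have hfiber : #{x ∈ A.sigma P | x.1 * x.2 = n} ≤ k := by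
    refine le_trans (card_le_card_of_injOn (fun x => x.2) (fun x hx => ?_) ?_)
      (card_primeFactors_filter_le hn0 hnw)
    · obtain ⟨hx, hxn⟩ := mem_filter.1 hx
      obtain ⟨hq, hwq, -⟩ := hP x.1 (mem_sigma.1 hx).1 x.2 (mem_sigma.1 hx).2
      exact mem_filter.2 ⟨Nat.mem_primeFactors.2 ⟨hq, hxn ▸ Dvd.intro_left _ rfl, hn0⟩, hwq⟩
    · rintro ⟨N, q⟩ hx ⟨N', q'⟩ hx' (rfl : q = q')
      have hxn : N * q = n := (mem_filter.1 hx).2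
      have hxn' : N' * q = n := (mem_filter.1 hx').2
      have hq0 : 0 < q := Nat.pos_of_ne_zero fun hq => hn0 (by rw [← hxn, hq, mul_zero])
      rw [Nat.eq_of_mul_eq_mul_right hq0 (hxn.trans hxn'.symm)]
  calc ∑ x ∈ A.sigma P with x.1 * x.2 = n, f (x.1 * x.2)
      = #{x ∈ A.sigma P | x.1 * x.2 = n} * f n := by
        rw [sum_congr rfl fun x hx => by rw [(mem_filter.1 hx).2], sum_const, nsmul_eq_mul]
    _ ≤ k * f n := mul_le_mul_of_nonneg_right (by exact_mod_cast hfiber) (hf n hn)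

lemma five_le_log_243 : 5 ≤ Real.log 243 := by
  rw [Real.le_log_iff_exp_le (by norm_num)]
  calc Real.exp 5 = Real.exp 1 ^ 5 := by rw [← Real.exp_nat_mul]; norm_num
    _ ≤ 3 ^ 5 := pow_le_pow_left₀ (Real.exp_pos 1).le (by linarith [Real.exp_one_lt_d9]) 5
    _ = 243 := by norm_num

lemma one_le_log_four : 1 ≤ Real.log 4 := by
  rw [Real.le_log_iff_exp_le (by norm_num)]
  linarith [Real.exp_one_lt_d9]

lemma le_sum_inv_denseIcc_four_pow {e : ℕ} (he : 1 ≤ e) :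
    1 / 57 ≤ ∑ N ∈ denseIcc 243 (4 ^ (6 * e)) (4 ^ (13 * e + 4)), 1 / (N : ℝ) := by
  set W := 4 ^ (6 * e) with hW
  set m := ∑ N ∈ denseIcc 243 W (4 ^ (13 * e + 4)), 1 / (N : ℝ)
  have hbound : 243 * W ^ 2 ≤ 4 ^ (12 * e + 4) := by
    rw [hW, ← pow_mul, pow_add, mul_comm, show 6 * e * 2 = 12 * e by ring]
    exact Nat.mul_le_mul_left _ (by norm_num)
  have hmono : ∑ N ∈ denseIcc 243 W (243 * W ^ 2 * 4 ^ e), 1 / (N : ℝ) ≤ m := by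
    have hle : 243 * W ^ 2 * 4 ^ e ≤ 4 ^ (13 * e + 4) := calc
      243 * W ^ 2 * 4 ^ e ≤ 4 ^ (12 * e + 4) * 4 ^ e := Nat.mul_le_mul_right _ hbound
      _ = 4 ^ (13 * e + 4) := by rw [← pow_add]; congr 1; ring
    refine sum_le_sum_of_subset_of_nonneg (fun N hN => ?_) fun _ _ _ => by positivity
    rw [mem_denseIcc] at hN ⊢
    exact ⟨⟨hN.1.1, hN.1.2.trans hle⟩, hN.2⟩
  have hlogW : Real.log (243 * W ^ 2) ≤ (12 * e + 4) * Real.log 4 := by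
    have h := Real.log_le_log (by positivity) (show (243 * W ^ 2 : ℝ) ≤ 4 ^ (12 * e + 4) by
      exact_mod_cast hbound)
    rw [Real.log_pow] at h
    exact_mod_cast h
  have hscale : Real.log (243 * W ^ 2) + 3 ≤ 19 * (e * Real.log 4) := by
    nlinarith [one_le_log_four, show (1 : ℝ) ≤ e by exact_mod_cast he]
  have hmass := log_le_mul_sum_isDense (c := 243) (W := W) five_le_log_243
    (Nat.one_le_pow e 4 (by norm_num)) (Nat.pow_le_pow_right (by norm_num) (by omega) : 4 ^ e ≤ W)
  rw [Nat.cast_pow, Real.log_pow] at hmass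
  have hlogV : 0 < e * Real.log 4 := by positivity
  have : 0 ≤ m := sum_nonneg fun _ _ => by positivity
  have hfinal : e * Real.log 4 ≤ 3 * (19 * (e * Real.log 4)) * m :=
    hmass.trans (mul_le_mul (by push_cast; linarith) hmono (sum_nonneg fun _ _ => by positivity)
      (by positivity))
  refine le_of_mul_le_mul_left ?_ hlogV
  linarith

lemma mul_prime_mem_denseIcc {e N q : ℕ} (he : 1 ≤ e)
    (hN : N ∈ denseIcc 243 (4 ^ (6 * e)) (4 ^ (13 * e + 4)))
    (hq : q ∈ primesIoc (4 ^ (5 * e)) (4 ^ (6 * e))) :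
    4 ^ (5 * e) ≤ q ∧ N * q ∈ denseIcc 243 (4 ^ (11 * e)) (4 ^ (19 * e + 4)) := by
  obtain ⟨⟨hNl, hNu⟩, hdense⟩ := mem_denseIcc.1 hN
  obtain ⟨hq, hql, hqu⟩ := (mem_primesIoc (by positivity)).1 hq
  replace hql : 4 ^ (5 * e) < q := by exact_mod_cast hql
  replace hqu : q ≤ 4 ^ (6 * e) := by exact_mod_cast hqu
  have h5 : 5 ≤ q := by
    have : 4 ^ 5 ≤ 4 ^ (5 * e) := Nat.pow_le_pow_right (by norm_num) (by omega)
    omega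
  refine ⟨hql.le, mem_denseIcc.2 ⟨⟨?_, ?_⟩, hdense.mul_prime hq h5 (by have := hq.pos; omega)⟩⟩
  · rw [show 11 * e = 6 * e + 5 * e by ring, pow_add]
    exact Nat.mul_le_mul hNl hql.le
  · rw [show 19 * e + 4 = 13 * e + 4 + 6 * e by ring, pow_add]
    exact Nat.mul_le_mul hNu hqu

-- Starting above `√x`, the mass of dense numbers may lie wholly beyond `x`; an extra prime factor
-- makes the number exceed `√x` while keeping it well below `x`, for `x` about `4 ^ (21 * e)`.
lemma exists_le_sum_inv_denseIcc :
    ∃ δ : ℝ, 0 < δ ∧ ∀ᶠ e : ℕ in Filter.atTop,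
      δ ≤ ∑ n ∈ denseIcc 243 (4 ^ (11 * e)) (4 ^ (19 * e + 4)), 1 / (n : ℝ) := by
  have : 0 < Real.log 4 := Real.log_pos (by norm_num)
  refine ⟨1 / 57 * (1 / (48 * Real.log 4)) / 3, by positivity, ?_⟩
  obtain ⟨j₀, hj₀⟩ := Filter.eventually_atTop.1 eventually_le_sum_inv_primesIoc_four_pow
  filter_upwards [Filter.eventually_ge_atTop (j₀ + 5)] with e he
  set G := denseIcc 243 (4 ^ (6 * e)) (4 ^ (13 * e + 4))
  set Q := primesIoc (4 ^ (5 * e)) (4 ^ (6 * e)) with hQ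
  set B := denseIcc 243 (4 ^ (11 * e)) (4 ^ (19 * e + 4))
  have hsumG : 1 / 57 ≤ ∑ N ∈ G, 1 / (N : ℝ) := le_sum_inv_denseIcc_four_pow (by omega)
  have hsumQ : 1 / (48 * Real.log 4) ≤ ∑ p ∈ Q, 1 / (p : ℝ) := by
    have he0 : (0 : ℝ) < e := by exact_mod_cast (by omega : 0 < e)
    refine le_of_eq_of_le ?_ ((hj₀ (5 * e) (by omega) (6 * e) e (by omega)).trans_eq
      (by rw [hQ, show 5 * e + e = 6 * e by ring]))
    push_cast
    field_simp
    norm_num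
  have hmult : ∑ N ∈ G, ∑ p ∈ Q, 1 / ((N * p : ℕ) : ℝ) ≤ (3 : ℕ) * ∑ n ∈ B, 1 / (n : ℝ) := by
    refine sum_sum_mul_prime_le (f := fun n => 1 / (n : ℝ)) (w := 4 ^ (5 * e))
      (fun _ _ => by positivity) (fun N hN q hq => ⟨((mem_primesIoc (by positivity)).1 hq).1,
        mul_prime_mem_denseIcc (by omega) hN hq⟩) fun n hn => ?_
    obtain ⟨⟨-, hnu⟩, hn⟩ := mem_denseIcc.1 hn
    rw [← pow_mul]
    exact ⟨hn.1, hnu.trans_lt (Nat.pow_lt_pow_right (by norm_num) (by omega))⟩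
  have hprod : (∑ N ∈ G, 1 / (N : ℝ)) * ∑ p ∈ Q, 1 / (p : ℝ) =
      ∑ N ∈ G, ∑ p ∈ Q, 1 / ((N * p : ℕ) : ℝ) := by
    simp only [sum_mul_sum, Nat.cast_mul, div_mul_div_comm, one_mul]
  rw [div_le_iff₀' (by norm_num)]
  exact_mod_cast (mul_le_mul hsumG hsumQ (by positivity) (by linarith)).trans (hprod.trans_le hmult)

lemma mul_prime_mem_denseIcc_of_mem_primesIoc {e i n q : ℕ} (he : 22 ≤ e) (hei : 21 * e ≤ i)
    (hie : i < 21 * e + 21) (hn : n ∈ denseIcc 243 (4 ^ (11 * e)) (4 ^ (19 * e + 4)))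
    (hq : q ∈ primesIoc (4 ^ i / n) (4 ^ (i + 1) / n)) :
    4 ^ e ≤ q ∧ n * q ∈ denseIcc 243 (4 ^ i) (4 ^ (i + 1)) := by
  obtain ⟨⟨hnl, hnu⟩, hdense⟩ := mem_denseIcc.1 hn
  have hn0 : 0 < n := Nat.pos_of_ne_zero hdense.1
  obtain ⟨hq, hql, hqu⟩ := (mem_primesIoc (by positivity)).1 hq
  rw [div_lt_iff₀' (by exact_mod_cast hn0)] at hql
  rw [le_div_iff₀' (by exact_mod_cast hn0)] at hqu
  norm_cast at hql hqu
  have heq : 4 ^ e ≤ q := by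
    refine (Nat.lt_of_mul_lt_mul_left (a := 4 ^ (19 * e + 4)) ?_).le
    calc 4 ^ (19 * e + 4) * 4 ^ e = 4 ^ (20 * e + 4) := by rw [← pow_add]; congr 1; ring
      _ ≤ 4 ^ i := Nat.pow_le_pow_right (by norm_num) (by omega)
      _ < n * q := hql
      _ ≤ 4 ^ (19 * e + 4) * q := Nat.mul_le_mul_right q hnu
  have h5q : 5 ≤ q := by
    have : 4 ^ 2 ≤ 4 ^ e := Nat.pow_le_pow_right (by norm_num) (by omega)
    omega
  have hqn : q < n := by
    refine Nat.lt_of_mul_lt_mul_left (a := n) ?_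
    calc n * q ≤ 4 ^ (i + 1) := hqu
      _ < 4 ^ (22 * e) := Nat.pow_lt_pow_right (by norm_num) (by omega)
      _ = 4 ^ (11 * e) * 4 ^ (11 * e) := by rw [← pow_add]; congr 1; ring
      _ ≤ n * n := Nat.mul_le_mul hnl hnl
  exact ⟨heq, mem_denseIcc.2 ⟨⟨hql.le, hqu⟩, hdense.mul_prime hq h5q (by omega)⟩⟩

lemma eventually_le_card_primesIoc_div :
    ∀ᶠ e : ℕ in Filter.atTop, ∀ i n : ℕ, 21 * e ≤ i → n ≠ 0 → n ≤ 4 ^ (19 * e + 4) →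
      (4 ^ i / i / (4 * Real.log 4) * (1 / n) : ℝ) ≤
        #(primesIoc (4 ^ i / n) (4 ^ (i + 1) / n)) := by
  have : 0 < Real.log 4 := Real.log_pos (by norm_num)
  filter_upwards [tendsto_four_pow.eventually
    (Filter.eventually_forall_ge_atTop.2 eventually_div_eight_le_card_primesIoc_mul_log),
    Filter.eventually_ge_atTop 4] with e he he4 i n hei hn0 hnu
  have hi0 : (1 : ℝ) ≤ i := by exact_mod_cast (by omega : 1 ≤ i)
  have hn1 : (1 : ℝ) ≤ n := by exact_mod_cast Nat.one_le_iff_ne_zero.2 hn0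
  set t : ℝ := 4 ^ (i + 1) / n with ht
  have ht0 : 0 < t := by positivity
  have het : (4 : ℝ) ^ e ≤ t := by
    rw [ht, le_div_iff₀ (by positivity)]
    calc (4 : ℝ) ^ e * n ≤ 4 ^ e * 4 ^ (19 * e + 4) := by gcongr; exact_mod_cast hnu
      _ = 4 ^ (20 * e + 4) := by rw [← pow_add]; congr 1; ring
      _ ≤ 4 ^ (i + 1) := pow_le_pow_right₀ (by norm_num) (by omega)
  have hcard := he t het
  rw [show t / 4 = 4 ^ i / n by rw [ht, pow_succ]; ring] at hcard
  have hlogt : Real.log t ≤ 2 * i * Real.log 4 := calc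
    Real.log t ≤ Real.log (4 ^ (i + 1)) :=
      Real.log_le_log ht0 (div_le_self (by positivity) hn1)
    _ = (i + 1) * Real.log 4 := by rw [Real.log_pow]; push_cast; ring
    _ ≤ 2 * i * Real.log 4 := by gcongr; linarith
  calc 4 ^ i / i / (4 * Real.log 4) * (1 / n) = t / 8 / (2 * i * Real.log 4) := by
        rw [ht]; field_simp; ring
    _ ≤ #(primesIoc (4 ^ i / n) t) := by
        rw [div_le_iff₀ (by positivity)]
        exact hcard.trans (mul_le_mul_of_nonneg_left hlogt (by positivity))

theorem exists_le_card_denseIcc_four_pow :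
    ∃ c : ℝ, 0 < c ∧ ∀ᶠ i : ℕ in Filter.atTop,
      c * (4 ^ i / i) ≤ #(denseIcc 243 (4 ^ i) (4 ^ (i + 1))) := by
  have : 0 < Real.log 4 := Real.log_pos (by norm_num)
  obtain ⟨δ, hδ, hmass⟩ := exists_le_sum_inv_denseIcc
  refine ⟨δ / (4 * Real.log 4) / 21, by positivity, ?_⟩
  filter_upwards [(Nat.tendsto_div_const_atTop (n := 21) (by norm_num)).eventually
    ((hmass.and eventually_le_card_primesIoc_div).and (Filter.eventually_ge_atTop 22))] with i hi
  set e := i / 21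
  obtain ⟨⟨hmass, hprimes⟩, he⟩ := hi
  have hei : 21 * e ≤ i := by omega
  set B := denseIcc 243 (4 ^ (11 * e)) (4 ^ (19 * e + 4))
  set T := denseIcc 243 (4 ^ i) (4 ^ (i + 1))
  set P : ℕ → Finset ℕ := fun n => primesIoc (4 ^ i / n) (4 ^ (i + 1) / n)
  have hmult : ∑ n ∈ B, ∑ _ ∈ P n, (1 : ℝ) ≤ (21 : ℕ) * ∑ n ∈ T, 1 := by
    refine sum_sum_mul_prime_le (f := fun _ => 1) (w := 4 ^ e) (fun _ _ => zero_le_one)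
      (fun n hn _ hq => ⟨((mem_primesIoc (by positivity)).1 hq).1,
        mul_prime_mem_denseIcc_of_mem_primesIoc he hei (by omega) hn hq⟩) fun n hn => ?_
    obtain ⟨⟨-, hnu⟩, hn⟩ := mem_denseIcc.1 hn
    rw [← pow_mul]
    exact ⟨hn.1, hnu.trans_lt (Nat.pow_lt_pow_right (by norm_num) (by omega))⟩
  have hlower : 4 ^ i / i / (4 * Real.log 4) * δ ≤ ∑ n ∈ B, ∑ _ ∈ P n, (1 : ℝ) := calc
    4 ^ i / i / (4 * Real.log 4) * δ ≤ 4 ^ i / i / (4 * Real.log 4) * ∑ n ∈ B, 1 / (n : ℝ) := by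
      gcongr
    _ ≤ ∑ n ∈ B, ∑ _ ∈ P n, (1 : ℝ) := by
      rw [mul_sum]
      refine sum_le_sum fun n hn => ?_
      obtain ⟨⟨-, hnu⟩, hn⟩ := mem_denseIcc.1 hn
      rw [sum_const, nsmul_one]
      exact hprimes i n hei hn.1 hnu
  rw [sum_const, nsmul_one, Nat.cast_ofNat] at hmult
  calc δ / (4 * Real.log 4) / 21 * (4 ^ i / i) = 4 ^ i / i / (4 * Real.log 4) * δ / 21 := by ring
    _ ≤ #T := by linarith

end CountDense

section Hubs

/-- A choice of an odd number `m p`, the hub, and an exponent `s p` for every prime `p`. The paths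
of the odd numbers `n / p * m p` and `n * m p`, for `n` with smallest prime factor `p`, are to be
connected at the height `Y / 2 ^ s p`; `slot_gap` keeps the connections at a hub apart. -/
structure IsHubAssignment (p₀ : ℕ) (m s : ℕ → ℕ) : Prop where
  hub_of_le {p : ℕ} : p ≤ p₀ → m p = 1
  slot_of_le {p : ℕ} : p ≤ p₀ → s p = p ^ 2
  odd_hub (p : ℕ) : Odd (m p)
  lt_smoothPart {p q : ℕ} : q.Prime → q ∣ m p → q ≠ 3 → q < smoothPart q (m p)
  three_dvd_hub {p : ℕ} : p.Prime → p₀ < p → 3 ∣ m p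
  three_mul_hub_le {p : ℕ} : p.Prime → p₀ < p → 3 * m p ≤ p
  twelve_le_slot {p : ℕ} : p₀ < p → 12 ≤ s p
  pow_slot_le {p : ℕ} : p.Prime → p₀ < p → 2 ^ (s p + 1) ≤ p₀
  slot_gap {p p' : ℕ} : p.Prime → p₀ < p → p'.Prime → p₀ < p' → p ≠ p' → m p = m p' →
    p ≤ 4 * p' ∧ (s p + 4 ≤ s p' ∨ s p' + 4 ≤ s p)

lemma exists_injOn_primesIoc_four_pow :
    ∃ J : ℕ, ∀ᶠ i : ℕ in Filter.atTop, ∃ F : ℕ → ℕ × ℕ,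
      (∀ p ∈ primesIoc (4 ^ (i + 6)) (4 ^ (i + 7)),
        F p ∈ denseIcc 243 (4 ^ i) (4 ^ (i + 1)) ×ˢ range J) ∧
      Set.InjOn F (primesIoc (4 ^ (i + 6)) (4 ^ (i + 7))) := by
  obtain ⟨c, hc, hdense⟩ := exists_le_card_denseIcc_four_pow
  refine ⟨⌈4 ^ 7 / c⌉₊, ?_⟩
  filter_upwards [hdense, Filter.eventually_ge_atTop 1] with i hi hi1
  have : (0 : ℝ) < i := by exact_mod_cast hi1
  have hJ : 4 ^ 7 ≤ c * ⌈4 ^ 7 / c⌉₊ := by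
    rw [mul_comm, ← div_le_iff₀ hc]
    exact Nat.le_ceil _
  have hcard : (#(primesIoc (4 ^ (i + 6)) (4 ^ (i + 7))) : ℝ) ≤
      #(denseIcc 243 (4 ^ i) (4 ^ (i + 1)) ×ˢ range ⌈4 ^ 7 / c⌉₊) := calc
    _ ≤ (4 : ℝ) ^ (i + 7) / (i + 6 : ℕ) := card_primesIoc_four_pow_le (by omega)
    _ ≤ 4 ^ i * 4 ^ 7 / i := by rw [pow_add]; gcongr; omega
    _ ≤ 4 ^ i * (c * ⌈4 ^ 7 / c⌉₊) / i := by gcongr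
    _ = c * (4 ^ i / i) * ⌈4 ^ 7 / c⌉₊ := by ring
    _ ≤ _ := by rw [card_product, card_range, Nat.cast_mul]; gcongr
  have hencard : Set.encard (primesIoc (4 ^ (i + 6)) (4 ^ (i + 7)) : Set ℕ) ≤
      Set.encard ((denseIcc 243 (4 ^ i) (4 ^ (i + 1)) ×ˢ range ⌈4 ^ 7 / c⌉₊ :
        Finset (ℕ × ℕ)) : Set (ℕ × ℕ)) := by
    rw [Set.encard_coe_eq_coe_finsetCard, Set.encard_coe_eq_coe_finsetCard]
    exact_mod_cast hcard
  obtain ⟨F, hF, hinj⟩ := (finite_toSet _).exists_injOn_of_encard_le hencard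
  exact ⟨F, fun p hp => hF hp, hinj⟩

lemma log_four_eq_of_mem_denseIcc {i N : ℕ} (h : N ∈ denseIcc 243 (4 ^ i) (4 ^ (i + 1))) :
    Nat.log 4 N = i := by
  obtain ⟨⟨hl, hu⟩, hN⟩ := mem_denseIcc.1 h
  refine Nat.log_eq_of_pow_le_of_lt_pow hl (hu.lt_of_ne ?_)
  rintro rfl
  have := (hN.2 2 Nat.prime_two (dvd_pow (by norm_num) i.succ_ne_zero)).1
  omega

lemma mem_primesIoc_four_pow_log {p : ℕ} (hp : p.Prime) (h : 4 ^ 6 < p) :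
    p ∈ primesIoc (4 ^ (Nat.log 4 p - 6 + 6)) (4 ^ (Nat.log 4 p - 6 + 7)) := by
  have hlog : 6 ≤ Nat.log 4 p := Nat.le_log_of_pow_le (by norm_num) h.le
  rw [mem_primesIoc (by positivity), show Nat.log 4 p - 6 + 6 = Nat.log 4 p by omega,
    show Nat.log 4 p - 6 + 7 = Nat.log 4 p + 1 by omega]
  refine ⟨hp, ?_, by exact_mod_cast (Nat.lt_pow_succ_log_self (by norm_num) p).le⟩
  refine lt_of_le_of_ne (by exact_mod_cast Nat.pow_log_le_self 4 hp.ne_zero) fun heq => ?_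
  have : ¬(4 ^ Nat.log 4 p).Prime := Nat.Prime.not_prime_pow (by omega)
  exact this (by rwa [show 4 ^ Nat.log 4 p = p by exact_mod_cast heq])

lemma exists_injective_denseIcc_prod :
    ∃ (p₁ J : ℕ) (N j : ℕ → ℕ), ∀ p : ℕ, p.Prime → p₁ < p →
      N p ∈ denseIcc 243 (4 ^ (Nat.log 4 p - 6)) (4 ^ (Nat.log 4 p - 6 + 1)) ∧ j p < J ∧
      ∀ p' : ℕ, p'.Prime → p₁ < p' → N p = N p' →
        Nat.log 4 p = Nat.log 4 p' ∧ (j p = j p' → p = p') := by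
  obtain ⟨J, hJ⟩ := exists_injOn_primesIoc_four_pow
  obtain ⟨F, hF⟩ := hJ.choice
  obtain ⟨i₀, hF⟩ := Filter.eventually_atTop.1 hF
  set block : ℕ → ℕ := fun p => Nat.log 4 p - 6
  have hlog {p : ℕ} (h : 4 ^ (i₀ + 6) < p) : i₀ + 6 ≤ Nat.log 4 p :=
    Nat.le_log_of_pow_le (by norm_num) h.le
  have hi₀ {p : ℕ} (h : 4 ^ (i₀ + 6) < p) : i₀ ≤ block p := Nat.le_sub_of_add_le (hlog h)
  have hmem {p : ℕ} (hp : p.Prime) (h : 4 ^ (i₀ + 6) < p) :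
      p ∈ primesIoc (4 ^ (block p + 6)) (4 ^ (block p + 7)) :=
    mem_primesIoc_four_pow_log hp
      ((Nat.pow_le_pow_right (by norm_num) (by omega)).trans_lt h)
  have hval {p : ℕ} (hp : p.Prime) (h : 4 ^ (i₀ + 6) < p) :
      (F (block p) p).1 ∈ denseIcc 243 (4 ^ block p) (4 ^ (block p + 1)) ∧
        (F (block p) p).2 < J := by
    have := (hF (block p) (hi₀ h)).1 p (hmem hp h)
    rwa [mem_product, mem_range] at this
  refine ⟨4 ^ (i₀ + 6), J, fun p => (F (block p) p).1, fun p => (F (block p) p).2,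
    fun p hp h => ⟨(hval hp h).1, (hval hp h).2, fun p' hp' h' heq => ?_⟩⟩
  change (F _ p).1 = (F _ p').1 at heq
  have hblock : block p = block p' := by
    rw [← log_four_eq_of_mem_denseIcc (hval hp h).1, heq,
      log_four_eq_of_mem_denseIcc (hval hp' h').1]
  have hlogeq : Nat.log 4 p = Nat.log 4 p' := by
    have hp6 := hlog h
    have hp6' := hlog h'
    change Nat.log 4 p - 6 = Nat.log 4 p' - 6 at hblock
    omega
  refine ⟨hlogeq, fun (hj : (F _ p).2 = (F _ p').2) => ?_⟩
  have hF' : F (block p) p = F (block p) p' := by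
    rw [Prod.ext heq hj, hblock]
  exact (hF (block p) (hi₀ h)).2 (hmem hp h) (by rw [hblock]; exact hmem hp' h') hF'

lemma IsDense.odd {c N : ℕ} (hN : IsDense c N) : Odd N := by
  rw [← Nat.not_even_iff_odd, even_iff_two_dvd]
  intro h
  have := (hN.2 2 Nat.prime_two h).1
  omega

lemma IsDense.lt_smoothPart_mul {N q : ℕ} (hN : IsDense 243 N) (hq : q.Prime) (hd : q ∣ 243 * N)
    (hq3 : q ≠ 3) : q < smoothPart q (243 * N) := by
  have hqN : q ∣ N := (hq.dvd_mul.1 hd).resolve_left fun h3 => hq3 <|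
    (Nat.prime_dvd_prime_iff_eq hq Nat.prime_three).1 <|
      hq.dvd_of_dvd_pow (show q ∣ 3 ^ 5 from h3)
  obtain ⟨h5, hlt⟩ := hN.2 q hq hqN
  have hsmooth : 243 ∈ q.smoothNumbers :=
    prime_pow_mem_smoothNumbers (k := 5) Nat.prime_three (by omega)
  rwa [smoothPart_mul q hsmooth.1 hN.1, smoothPart_of_mem_smoothNumbers hsmooth]

lemma three_mul_le_of_le_four_pow_log {p N : ℕ} (h : 4 ^ 6 ≤ p)
    (hN : N ≤ 4 ^ (Nat.log 4 p - 6 + 1)) : 3 * (243 * N) ≤ p := by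
  have hlog : 6 ≤ Nat.log 4 p := Nat.le_log_of_pow_le (by norm_num) h
  calc 3 * (243 * N) ≤ 3 * (243 * 4 ^ (Nat.log 4 p - 6 + 1)) := by gcongr
    _ ≤ 4 ^ (Nat.log 4 p - 6 + 1 + 5) := by rw [pow_add _ _ 5]; omega
    _ = 4 ^ Nat.log 4 p := by congr 1; omega
    _ ≤ p := Nat.pow_log_le_self 4 (by omega)

lemma le_mul_of_log_eq {b p q : ℕ} (hb : 1 < b) (hq : q ≠ 0) (h : Nat.log b p = Nat.log b q) :
    p ≤ b * q := calc
  p ≤ b ^ (Nat.log b q + 1) := h ▸ (Nat.lt_pow_succ_log_self hb p).le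
  _ = b * b ^ Nat.log b q := pow_succ' _ _
  _ ≤ b * q := Nat.mul_le_mul_left b (Nat.pow_log_le_self b hq)

/-- The hubs of the large primes are `3 ^ 5 * N` with `N` dense; a positive proportion of the
integers being dense after weighting by `log`, each hub serves a bounded number of primes. -/
theorem exists_isHubAssignment : ∃ (p₀ : ℕ) (m s : ℕ → ℕ), IsHubAssignment p₀ m s := by
  obtain ⟨p₁, J, N, j, hNj⟩ := exists_injective_denseIcc_prod
  set p₀ := p₁ + 4 ^ 6 + 2 ^ (9 + 4 * J)
  have hp₁ : p₁ + 4 ^ 6 ≤ p₀ := Nat.le_add_right _ _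
  have hN {p : ℕ} (hp : p.Prime) (h : p₀ < p) := mem_denseIcc.1 (hNj p hp (by omega)).1
  refine ⟨p₀, fun p => if p.Prime ∧ p₀ < p then 243 * N p else 1,
    fun p => if p₀ < p then 12 + 4 * j p else p ^ 2, ?_⟩
  constructor
  case hub_of_le => exact fun {p} h => if_neg (by omega)
  case slot_of_le => exact fun {p} h => if_neg (by omega)
  case odd_hub =>
    intro p
    split_ifs with h
    · exact Odd.mul (by decide) (hN h.1 h.2).2.odd
    · exact odd_one
  case lt_smoothPart =>
    intro p q hq hd hq3
    split_ifs at hd ⊢ with h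
    · exact (hN h.1 h.2).2.lt_smoothPart_mul hq hd hq3
    · exact absurd (Nat.dvd_one.1 hd) hq.ne_one
  case three_dvd_hub =>
    intro p hp h
    rw [if_pos ⟨hp, h⟩]
    exact Dvd.dvd.mul_right (by norm_num) _
  case three_mul_hub_le =>
    intro p hp h
    rw [if_pos ⟨hp, h⟩]
    exact three_mul_le_of_le_four_pow_log (by omega) (hN hp h).1.2
  case twelve_le_slot => intro p h; rw [if_pos h]; omega
  case pow_slot_le =>
    intro p hp h
    rw [if_pos h]
    have := (hNj p hp (by omega)).2.1
    exact (Nat.pow_le_pow_right two_pos (by omega)).trans (Nat.le_add_left _ _)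
  case slot_gap =>
    intro p p' hp h hp' h' hne heq
    rw [if_pos ⟨hp, h⟩, if_pos ⟨hp', h'⟩] at heq
    obtain ⟨hlog, hj⟩ := (hNj p hp (by omega)).2.2 p' hp' (by omega) (by omega)
    rw [if_pos h, if_pos h']
    exact ⟨le_mul_of_log_eq (by norm_num) hp'.ne_zero hlog, by have := mt hj hne; omega⟩

end Hubs

section Conflicts

/-- The dyadic intervals `[a, 2 * a)` and `[b, 2 * b)` meet. -/
def Overlap (a b : ℕ) : Prop := a < 2 * b ∧ b < 2 * a

lemma Overlap.symm {a b : ℕ} (h : Overlap a b) : Overlap b a := ⟨h.2, h.1⟩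

lemma Overlap.eq_of_two_pow {a b : ℕ} (h : Overlap (2 ^ a) (2 ^ b)) : a = b := by
  have hle {a b : ℕ} (h : 2 ^ a < 2 * 2 ^ b) : a ≤ b :=
    Nat.lt_succ_iff.1 ((Nat.pow_lt_pow_iff_right one_lt_two).1 (by rwa [pow_succ']))
  exact le_antisymm (hle h.1) (hle h.2)

namespace IsHubAssignment

variable {p₀ p p' q o : ℕ} {m s : ℕ → ℕ}

lemma hub_le (h : IsHubAssignment p₀ m s) (hp : p.Prime) : m p ≤ p := by
  rcases le_or_gt p p₀ with hle | hlt
  · exact (h.hub_of_le hle).trans_le hp.one_le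
  · exact (Nat.le_mul_of_pos_left _ three_pos).trans (h.three_mul_hub_le hp hlt)

lemma hub_ne_zero (h : IsHubAssignment p₀ m s) (p : ℕ) : m p ≠ 0 := (h.odd_hub p).pos.ne'

lemma hub_mem_smoothNumbers (h : IsHubAssignment p₀ m s) (hp : p.Prime) :
    m p ∈ p.smoothNumbers := by
  refine Nat.mem_smoothNumbers_of_lt (h.odd_hub p).pos ?_
  rcases le_or_gt p p₀ with hle | hlt
  · exact (h.hub_of_le hle).trans_lt hp.one_lt
  · have := h.three_mul_hub_le hp hlt
    have := h.hub_ne_zero p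
    omega

lemma mul_hub_le (h : IsHubAssignment p₀ m s) (hp : p.Prime) (hq : q.Prime) (hd : q ∣ m p) :
    q * m p ≤ p * smoothPart q (m p) := by
  by_cases hq3 : q = 3
  · subst hq3
    rcases le_or_gt p p₀ with hle | hlt
    · rw [h.hub_of_le hle] at hd
      exact absurd (Nat.dvd_one.1 hd) (by norm_num)
    · exact (h.three_mul_hub_le hp hlt).trans (Nat.le_mul_of_pos_right p (smoothPart_pos _ _))
  · calc q * m p ≤ smoothPart q (m p) * p :=
        Nat.mul_le_mul (h.lt_smoothPart hq hd hq3).le (h.hub_le hp)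
      _ = p * smoothPart q (m p) := mul_comm _ _

lemma two_pow_thirteen_le (h : IsHubAssignment p₀ m s) (hp : p.Prime) (hlt : p₀ < p) :
    2 ^ 13 ≤ p₀ :=
  (Nat.pow_le_pow_right two_pos (Nat.succ_le_succ (h.twelve_le_slot hlt))).trans
    (h.pow_slot_le hp hlt)

lemma slot_le (h : IsHubAssignment p₀ m s) (hp : p.Prime) : s p ≤ p₀ ^ 2 := by
  rcases le_or_gt p p₀ with hle | hlt
  · exact (h.slot_of_le hle).trans_le (Nat.pow_le_pow_left hle 2)
  · calc s p ≤ s p + 1 := Nat.le_succ _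
      _ ≤ 2 ^ (s p + 1) := Nat.lt_two_pow_self.le
      _ ≤ p₀ := h.pow_slot_le hp hlt
      _ ≤ p₀ ^ 2 := Nat.le_self_pow two_ne_zero p₀

lemma two_le_slot (h : IsHubAssignment p₀ m s) (hp : p.Prime) : 2 ≤ s p := by
  rcases le_or_gt p p₀ with hle | hlt
  · rw [h.slot_of_le hle]
    nlinarith [hp.two_le]
  · exact (by norm_num : 2 ≤ 12).trans (h.twelve_le_slot hlt)

lemma hub_eq_smoothPart_hub (hpo : smoothPart p o = m p) (hpo' : smoothPart p' o = m p')
    (ho : o ≠ 0) (hlt : p' ≤ p) : smoothPart p' (m p) = m p' := by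
  rw [← hpo, smoothPart_smoothPart ho hlt, hpo']

lemma eq_three (h : IsHubAssignment p₀ m s) (hp : p.Prime) (hlt : p₀ < p) (hle : p' ≤ p₀)
    (hp' : 3 ≤ p') (ho : o ≠ 0) (hpo : smoothPart p o = m p) (hpo' : smoothPart p' o = m p') :
    p' = 3 := by
  by_contra hne
  have h3 : 3 ∣ smoothPart p' (m p) := dvd_smoothPart (h.hub_ne_zero p) (h.three_dvd_hub hp hlt)
    (Nat.mem_smoothNumbers_of_lt three_pos (by omega))
  rw [hub_eq_smoothPart_hub hpo hpo' ho (by omega), h.hub_of_le hle] at h3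
  omega

lemma slot_ne (h : IsHubAssignment p₀ m s) (hp : p.Prime) (hp' : p'.Prime) (hp3 : 3 ≤ p')
    (ho : o ≠ 0) (hpo : smoothPart p o = m p) (hpo' : smoothPart p' o = m p') (hd : p' ∣ o)
    (hlt : p' < p) : s p ≠ s p' := by
  have hdm : p' ∣ m p :=
    hpo ▸ dvd_smoothPart ho hd (Nat.mem_smoothNumbers_of_lt hp'.pos hlt)
  have hlarge : p₀ < p := not_le.1 fun hle =>
    hp'.ne_one (Nat.dvd_one.1 (h.hub_of_le hle ▸ hdm))
  intro hs
  rcases le_or_gt p' p₀ with hle' | hlarge'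
  · have hs' := h.slot_of_le hle'
    rw [h.eq_three hp hlarge hle' hp3 ho hpo hpo'] at hs hs'
    have := h.twelve_le_slot hlarge
    omega
  · have hsmooth := h.lt_smoothPart hp' hdm
      (by have := h.two_pow_thirteen_le hp hlarge; omega)
    rw [hub_eq_smoothPart_hub hpo hpo' ho hlt.le] at hsmooth
    exact hsmooth.not_ge (h.hub_le hp')

lemma eq_of_slot_eq (h : IsHubAssignment p₀ m s) (hp : p.Prime) (hp' : p'.Prime) (hp3 : 3 ≤ p)
    (hp3' : 3 ≤ p') (ho : o ≠ 0) (hpo : smoothPart p o = m p) (hpo' : smoothPart p' o = m p')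
    (hd : p ∣ o) (hd' : p' ∣ o) (hs : s p = s p') : p = p' := by
  rcases lt_trichotomy p p' with hlt | heq | hlt
  · exact absurd hs.symm (h.slot_ne hp' hp hp3 ho hpo' hpo hd hlt)
  · exact heq
  · exact absurd hs (h.slot_ne hp hp' hp3' ho hpo hpo' hd' hlt)

lemma two_mul_mul_two_pow_le_of_lt (h : IsHubAssignment p₀ m s) (hp : p.Prime) (hp' : p'.Prime)
    (hlarge' : p₀ < p') (ho : o ≠ 0) (hpo : smoothPart p o = m p) (hpo' : smoothPart p' o = m p')
    (hlt : p' < p) (hne : m p ≠ m p') : 2 * (p' * 2 ^ s p') ≤ p := by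
  have hsmooth : m p ∉ p'.smoothNumbers := fun hs => hne <| by
    rw [← smoothPart_of_mem_smoothNumbers hs, hub_eq_smoothPart_hub hpo hpo' ho hlt.le]
  obtain ⟨q, hq, hqd, hp'q⟩ := exists_prime_dvd_of_notMem_smoothNumbers hsmooth
  have hq3 : q ≠ 3 := by
    have := h.two_pow_thirteen_le hp' hlarge'
    omega
  calc 2 * (p' * 2 ^ s p') = p' * 2 ^ (s p' + 1) := by ring
    _ ≤ q * smoothPart q (m p) := Nat.mul_le_mul hp'q <| (h.pow_slot_le hp' hlarge').trans <|
        hlarge'.le.trans <| hp'q.trans (h.lt_smoothPart hq hqd hq3).le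
    _ ≤ m p := mul_smoothPart_le (h.hub_ne_zero p) hq hqd
    _ ≤ p := h.hub_le hp

lemma not_overlap_mul_mul (h : IsHubAssignment p₀ m s) (hp : p.Prime) (hp' : p'.Prime)
    (hp3 : 3 ≤ p') (ho : o ≠ 0) (hpo : smoothPart p o = m p) (hpo' : smoothPart p' o = m p')
    (hlt : p' < p) : ¬Overlap (p * 2 ^ s p) (p' * 2 ^ s p') := by
  have hpow {a b : ℕ} (hab : a + 1 ≤ b) : 2 * (p' * 2 ^ a) ≤ p * 2 ^ b := calc
    2 * (p' * 2 ^ a) = p' * 2 ^ (a + 1) := by ring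
    _ ≤ p * 2 ^ b := Nat.mul_le_mul hlt.le (Nat.pow_le_pow_right two_pos hab)
  suffices 2 * (p' * 2 ^ s p') ≤ p * 2 ^ s p ∨ 2 * (p * 2 ^ s p) ≤ p' * 2 ^ s p' by
    rintro ⟨h₁, h₂⟩
    omega
  rcases le_or_gt p p₀ with hle | hlarge
  · rw [h.slot_of_le hle, h.slot_of_le (hlt.le.trans hle)]
    exact Or.inl (hpow (Nat.pow_lt_pow_left hlt two_ne_zero))
  rcases le_or_gt p' p₀ with hle' | hlarge'
  · obtain rfl := h.eq_three hp hlarge hle' hp3 ho hpo hpo'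
    have := h.twelve_le_slot hlarge
    rw [h.slot_of_le hle']
    exact Or.inl (hpow (by omega))
  by_cases hm : m p = m p'
  · obtain ⟨hp4, hs | hs⟩ := h.slot_gap hp hlarge hp' hlarge' hlt.ne' hm
    · right
      calc 2 * (p * 2 ^ s p) ≤ 2 * (4 * p' * 2 ^ s p) := by gcongr
        _ = p' * 2 ^ (s p + 3) := by ring
        _ ≤ p' * 2 ^ s p' := Nat.mul_le_mul_left p' (Nat.pow_le_pow_right two_pos (by omega))
    · exact Or.inl (hpow (by omega))
  · exact Or.inl <| (h.two_mul_mul_two_pow_le_of_lt hp hp' hlarge' ho hpo hpo' hlt hm).trans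
      (Nat.le_mul_of_pos_right p (by positivity))

lemma eq_of_overlap_mul_mul (h : IsHubAssignment p₀ m s) (hp : p.Prime) (hp' : p'.Prime)
    (hp3 : 3 ≤ p) (hp3' : 3 ≤ p') (ho : o ≠ 0) (hpo : smoothPart p o = m p)
    (hpo' : smoothPart p' o = m p') (hover : Overlap (p * 2 ^ s p) (p' * 2 ^ s p')) : p = p' := by
  rcases lt_trichotomy p p' with hlt | heq | hlt
  · exact absurd hover.symm (h.not_overlap_mul_mul hp' hp hp3 ho hpo' hpo hlt)
  · exact heq
  · exact absurd hover (h.not_overlap_mul_mul hp hp' hp3' ho hpo hpo' hlt)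

lemma not_overlap_mul_two_pow_sq {a b : ℕ} (ha : 2 ≤ a) :
    ¬Overlap (a * 2 ^ a ^ 2) (2 ^ b ^ 2) := by
  rintro ⟨h₁, h₂⟩
  rcases lt_or_ge a b with hlt | hle
  · refine h₂.not_ge ?_
    calc 2 * (a * 2 ^ a ^ 2) ≤ 2 * (2 ^ a * 2 ^ a ^ 2) := by gcongr; exact Nat.lt_two_pow_self.le
      _ = 2 ^ (a ^ 2 + a + 1) := by ring
      _ ≤ 2 ^ b ^ 2 := Nat.pow_le_pow_right two_pos (by nlinarith)
  · refine h₁.not_ge ?_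
    exact Nat.mul_le_mul ha (Nat.pow_le_pow_right two_pos (Nat.pow_le_pow_left hle 2))

lemma not_overlap_mul_two_pow (h : IsHubAssignment p₀ m s) (hp : p.Prime) (hp' : p'.Prime)
    (hp3 : 3 ≤ p) (hp3' : 3 ≤ p') (ho : o ≠ 0) (hpo : smoothPart p o = m p)
    (hpo' : smoothPart p' o = m p') : ¬Overlap (p * 2 ^ s p) (2 ^ s p') := by
  rcases le_or_gt p p₀ with hle | hlarge <;> rcases le_or_gt p' p₀ with hle' | hlarge'
  · rw [h.slot_of_le hle, h.slot_of_le hle']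
    exact not_overlap_mul_two_pow_sq hp.two_le
  · rintro ⟨-, h₂⟩
    have hs := Nat.pow_le_pow_right two_pos (h.twelve_le_slot hlarge')
    rw [h.slot_of_le hle, h.eq_three hp' hlarge' hle hp3 ho hpo' hpo] at h₂
    omega
  · rintro ⟨h₁, -⟩
    have := h.two_pow_thirteen_le hp hlarge
    rw [h.slot_of_le hle', h.eq_three hp hlarge hle' hp3' ho hpo hpo'] at h₁
    have := Nat.le_mul_of_pos_right p (show 0 < 2 ^ s p by positivity)
    omega
  · rintro ⟨h₁, -⟩
    have hslot := h.pow_slot_le hp' hlarge'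
    rw [pow_succ] at hslot
    have := Nat.le_mul_of_pos_right p (show 0 < 2 ^ s p by positivity)
    omega

end IsHubAssignment
end Conflicts

section Permutations

open Equiv

variable {V ι : Type*} {f g π : Perm V}

lemma rel_of_sameCycle (r : Setoid V) (h : ∀ x, r x (f x)) {x y : V} (hxy : f.SameCycle x y) :
    r x y := by
  obtain ⟨i, rfl⟩ := hxy
  induction i using Int.induction_on with
  | zero => exact r.refl x
  | succ i ih =>
    rw [add_comm, zpow_add, zpow_one, Perm.mul_apply]
    exact r.trans ih (h _)
  | pred i ih =>
    have hstep := h ((f ^ (-(i : ℤ) - 1)) x)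
    rw [← Perm.mul_apply, ← zpow_one_add, add_sub_cancel] at hstep
    exact r.trans ih (r.symm hstep)

lemma sameCycle_mul_swap [Finite V] [DecidableEq V] {u v : V} (huv : ¬f.SameCycle u v) :
    (f * swap u v).SameCycle u v := by
  set g := f * swap u v
  have hiter (i : ℕ) : g.SameCycle u ((f ^ (i + 1)) v) := by
    have hu : g u = f v := by simp [g]
    have hfv : g.SameCycle u (f v) := hu ▸ (Perm.SameCycle.refl g u).apply_right
    induction i with
    | zero => simpa using hfv
    | succ i ih =>
      rw [pow_succ', Perm.mul_apply]
      set w := (f ^ (i + 1)) v with hw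
      have hwu : w ≠ u := fun h => huv (Perm.SameCycle.symm ⟨(i + 1 : ℕ), hw ▸ h⟩)
      by_cases hwv : w = v
      · rwa [hwv]
      · have hgw : g w = f w := by simp [g, swap_apply_of_ne_of_ne hwu hwv]
        exact hgw ▸ ih.apply_right
  have := hiter (orderOf f - 1)
  rwa [Nat.sub_add_cancel (orderOf_pos f), pow_orderOf_eq_one, Perm.one_apply] at this

lemma sameCycle_mul_swap_of_sameCycle [Finite V] [DecidableEq V] {u v x y : V}
    (huv : ¬f.SameCycle u v) (hxy : f.SameCycle x y) : (f * swap u v).SameCycle x y := by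
  have hmerge := sameCycle_mul_swap huv
  refine rel_of_sameCycle (Perm.SameCycle.setoid (f * swap u v)) (fun z => ?_) hxy
  change (f * swap u v).SameCycle z (f z)
  by_cases hzu : z = u
  · simpa [hzu] using hmerge.apply_right
  by_cases hzv : z = v
  · simpa [hzv] using hmerge.symm.apply_right
  · simpa [swap_apply_of_ne_of_ne hzu hzv] using
      (Perm.SameCycle.refl (f * swap u v) z).apply_right

/-- The permutation `g` arises from `π` by exchanging the images of `u i` and `v i` for some
indices `i` in `s`, which joins the cycles of `u i` and `v i`. -/
structure IsMerge (π : Perm V) (u v : ι → V) (s : Finset ι) (g : Perm V) : Prop where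
  sameCycle_of_sameCycle {x y : V} : π.SameCycle x y → g.SameCycle x y
  sameCycle {i : ι} : i ∈ s → g.SameCycle (u i) (v i)
  apply_eq (x : V) : g x = π x ∨
    ∃ i ∈ s, (x = u i ∧ g x = π (v i)) ∨ (x = v i ∧ g x = π (u i))

/-- The sets `T i` are `π`-invariant and separate `u i` from `v i`; merging in the order of
increasing rank `rk`, they still do so when it is the turn of `i`. -/
theorem exists_isMerge [Finite V] {u v : ι → V} (hu : u.Injective) (hv : v.Injective)
    (huv : ∀ i j, u i ≠ v j) (T : ι → Set V) (rk : ι → ℕ) (hT : ∀ i x, π x ∈ T i ↔ x ∈ T i)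
    (huT : ∀ i, u i ∉ T i) (hvT : ∀ i, v i ∈ T i)
    (hrk : ∀ i j, i ≠ j → rk j ≤ rk i → (u j ∈ T i ↔ v j ∈ T i)) (s : Finset ι) :
    ∃ g, IsMerge π u v s g := by
  classical
  induction s using Finset.induction_on_max_value rk with
  | empty => exact ⟨π, id, by simp, fun x => Or.inl rfl⟩
  | insert a s has hmax ih =>
  obtain ⟨g, hg⟩ := ih
  have hinv (x : V) : g x ∈ T a ↔ x ∈ T a := by
    rcases hg.apply_eq x with h | ⟨i, hi, ⟨rfl, h⟩ | ⟨rfl, h⟩⟩ <;> rw [h, hT]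
    · exact (hrk a i (ne_of_mem_of_not_mem hi has).symm (hmax i hi)).symm
    · exact hrk a i (ne_of_mem_of_not_mem hi has).symm (hmax i hi)
  have hsep : ¬g.SameCycle (u a) (v a) := fun h => huT a <|
    (rel_of_sameCycle (Setoid.comap (· ∈ T a) ⟨(· = ·), eq_equivalence⟩)
      (fun x => propext (hinv x).symm) h).mpr (hvT a)
  have hgu : g (u a) = π (u a) := (hg.apply_eq (u a)).resolve_right fun ⟨i, hi, h⟩ =>
    h.elim (fun h => has (hu h.1 ▸ hi)) fun h => huv _ _ h.1
  have hgv : g (v a) = π (v a) := (hg.apply_eq (v a)).resolve_right fun ⟨i, hi, h⟩ =>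
    h.elim (fun h => huv _ _ h.1.symm) fun h => has (hv h.1 ▸ hi)
  refine ⟨g * swap (u a) (v a), fun h => sameCycle_mul_swap_of_sameCycle hsep
    (hg.sameCycle_of_sameCycle h), fun {i} hi => ?_, fun x => ?_⟩
  · rcases Finset.mem_insert.1 hi with rfl | hi
    · exact sameCycle_mul_swap hsep
    · exact sameCycle_mul_swap_of_sameCycle hsep (hg.sameCycle hi)
  · rw [Perm.mul_apply]
    by_cases hxu : x = u a
    · exact Or.inr ⟨a, mem_insert_self a s, Or.inl ⟨hxu, by rw [hxu, swap_apply_left, hgv]⟩⟩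
    by_cases hxv : x = v a
    · exact Or.inr ⟨a, mem_insert_self a s, Or.inr ⟨hxv, by rw [hxv, swap_apply_right, hgu]⟩⟩
    rw [swap_apply_of_ne_of_ne hxu hxv]
    exact (hg.apply_eq x).imp_right fun ⟨i, hi, h⟩ => ⟨i, mem_insert_of_mem hi, h⟩

lemma exists_list_isChain_of_sameCycle [Fintype V] (hg : ∀ x y, g.SameCycle x y)
    {R : V → V → Prop} (hR : ∀ x, R x (g x)) :
    ∃ l : List V, l.Nodup ∧ l.IsChain R ∧ l.length = Fintype.card V := by
  rcases isEmpty_or_nonempty V with hV | ⟨⟨x⟩⟩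
  · exact ⟨[], List.nodup_nil, List.isChain_nil, by simp⟩
  refine ⟨(List.range (Fintype.card V)).map fun k => (g ^ k) x, ?_, ?_, by simp⟩
  · have hcycle : g.IsCycleOn (univ : Finset V) :=
      ⟨by simp, fun y _ z _ => hg y z⟩
    refine (List.nodup_map_iff_inj_on List.nodup_range).2 fun k hk l hl hkl => ?_
    rw [hcycle.pow_apply_eq_pow_apply (mem_univ x), card_univ] at hkl
    exact hkl.eq_of_lt_of_lt (List.mem_range.1 hk) (List.mem_range.1 hl)
  · rw [List.isChain_map, List.isChain_range]
    intro k _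
    rw [pow_succ', Perm.mul_apply]
    exact hR _

end Permutations

section Slots

open Equiv

variable {O ι : Type*} {ℓ : O → ℕ}

/-- The lower (`b = true`) or upper (`b = false`) end of the unit interval `[i, i + 1]`. -/
def intervalEnd {n : ℕ} (b : Bool) (i : Fin n) : Fin (n + 1) := if b then i.castSucc else i.succ

/-- The end of a slot, a slot being a unit interval in one of the paths `0, 1, …, ℓ o`. -/
def slotEnd (b : Bool) (t : Σ o, Fin (ℓ o)) : Σ o, Fin (ℓ o + 1) := ⟨t.1, intervalEnd b t.2⟩

/-- The permutation rotating each path `0, 1, …, ℓ o`, upwards if `ε o` and downwards if not. -/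
def rotatePaths (ε : O → Bool) : Perm (Σ o, Fin (ℓ o + 1)) :=
  Equiv.sigmaCongrRight fun o => if ε o then finRotate (ℓ o + 1) else (finRotate (ℓ o + 1))⁻¹

lemma intervalEnd_injective {n : ℕ} (b : Bool) :
    Function.Injective (intervalEnd b : Fin n → Fin (n + 1)) := by
  cases b
  · exact Fin.succ_injective n
  · exact Fin.castSucc_injective n

lemma rotatePaths_slotEnd (ε : O → Bool) (t : Σ o, Fin (ℓ o)) :
    rotatePaths ε (slotEnd (ε t.1) t) = slotEnd (!ε t.1) t := by
  obtain ⟨o, i⟩ := t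
  have hrot : finRotate (ℓ o + 1) i.castSucc = i.succ := by
    rw [finRotate_apply, Fin.coeSucc_eq_succ]
  cases h : ε o
  · simp [rotatePaths, slotEnd, intervalEnd, h, ← Fin.coeSucc_eq_succ]
  · simp [rotatePaths, slotEnd, intervalEnd, h, hrot]

lemma sameCycle_rotatePaths (ε : O → Bool) (o : O) (i j : Fin (ℓ o + 1)) :
    (rotatePaths ε).SameCycle ⟨o, i⟩ ⟨o, j⟩ := by
  have hstep (i : Fin (ℓ o)) :
      (rotatePaths ε).SameCycle (⟨o, i.castSucc⟩ : Σ o, Fin (ℓ o + 1)) ⟨o, i.succ⟩ := by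
    have h : (rotatePaths ε).SameCycle (slotEnd (ε o) ⟨o, i⟩) (slotEnd (!ε o) ⟨o, i⟩) :=
      rotatePaths_slotEnd ε ⟨o, i⟩ ▸ (Perm.SameCycle.refl _ _).apply_right
    cases hε : ε o
    · rw [hε] at h
      exact h.symm
    · rwa [hε] at h
  have hzero (i : Fin (ℓ o + 1)) : (rotatePaths ε).SameCycle ⟨o, 0⟩ ⟨o, i⟩ := by
    induction i using Fin.induction with
    | zero => exact Perm.SameCycle.refl _ _
    | succ i ih => exact ih.trans (hstep i)
  exact (hzero i).symm.trans (hzero j)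

/-- Opposite orientations of the two paths make the merged permutation jump between ends of
slots on the same side. -/
theorem exists_perm_of_slots [Finite O] [Finite ι] {lo up : ι → Σ o, Fin (ℓ o)} {ε : O → Bool}
    (hlo : lo.Injective) (hup : up.Injective) (hne : ∀ n n', lo n ≠ up n')
    (hε : ∀ n, ε (up n).1 = !ε (lo n).1) (T : ι → Set O) (rk : ι → ℕ)
    (hloT : ∀ n, (lo n).1 ∉ T n) (hupT : ∀ n, (up n).1 ∈ T n)
    (hrk : ∀ n n', n ≠ n' → rk n' ≤ rk n → ((lo n').1 ∈ T n ↔ (up n').1 ∈ T n))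
    (hconn : ∀ r : Setoid O, (∀ n, r (lo n).1 (up n).1) → ∀ o o', r o o') :
    ∃ g : Perm (Σ o, Fin (ℓ o + 1)), (∀ x y, g.SameCycle x y) ∧
      ∀ x, (g x).1 = x.1 ∨ ∃ n b, (x = slotEnd b (lo n) ∧ g x = slotEnd b (up n)) ∨
        (x = slotEnd b (up n) ∧ g x = slotEnd b (lo n)) := by
  have := Fintype.ofFinite ι
  set φ : (Σ o, Fin (ℓ o)) → Σ o, Fin (ℓ o + 1) := fun t => slotEnd (ε t.1) t
  have hφ : φ.Injective := by
    rintro ⟨o, i⟩ ⟨o', i'⟩ h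
    obtain ⟨rfl, h⟩ := Sigma.mk.inj_iff.1 h
    exact congrArg (Sigma.mk o) (intervalEnd_injective _ (eq_of_heq h))
  obtain ⟨g, hg⟩ := exists_isMerge (π := rotatePaths ε) (u := φ ∘ lo) (v := φ ∘ up)
    (hφ.comp hlo) (hφ.comp hup) (fun n n' h => hne n n' (hφ h)) (fun n => {x | x.1 ∈ T n}) rk
    (fun _ _ => Iff.rfl) hloT hupT hrk univ
  have hpath (o : O) (i j : Fin (ℓ o + 1)) : g.SameCycle ⟨o, i⟩ ⟨o, j⟩ :=
    hg.sameCycle_of_sameCycle (sameCycle_rotatePaths ε o i j)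
  refine ⟨g, fun x y => ?_, fun x => ?_⟩
  · have h := hconn ((Perm.SameCycle.setoid g).comap fun o => (⟨o, 0⟩ : Σ o, Fin (ℓ o + 1)))
      (fun n => (hpath _ _ _).trans ((hg.sameCycle (mem_univ n)).trans (hpath _ _ _))) x.1 y.1
    exact (hpath x.1 x.2 0).trans (Perm.SameCycle.trans h (hpath y.1 0 y.2))
  · rcases hg.apply_eq x with h | ⟨n, -, ⟨rfl, h⟩ | ⟨rfl, h⟩⟩
    · exact Or.inl (by rw [h]; rfl)
    · refine Or.inr ⟨n, ε (lo n).1, Or.inl ⟨rfl, ?_⟩⟩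
      rw [h, Function.comp_apply, rotatePaths_slotEnd, hε, Bool.not_not]
    · refine Or.inr ⟨n, ε (up n).1, Or.inr ⟨rfl, ?_⟩⟩
      rw [h, Function.comp_apply, rotatePaths_slotEnd, hε]

end Slots

section SchinzelSzekeres

variable {n X : ℕ}

lemma foldr_max_one_le_iff (l : List ℕ) : l.foldr max 1 ≤ X ↔ 1 ≤ X ∧ ∀ a ∈ l, a ≤ X := by
  induction l with
  | nil => simp
  | cons b l ih => rw [List.foldr_cons, max_le_iff, ih, List.forall_mem_cons, and_left_comm]

lemma forall_headI_mul_prod_drop_le_iff {l : List ℕ} (hl : l.Pairwise (· ≤ ·))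
    (h0 : ∀ a ∈ l, a ≠ 0) :
    (∀ j < l.length, (l.drop j).headI * (l.drop j).prod ≤ X) ↔
      ∀ q ∈ l, q * (l.filter (q ≤ ·)).prod ≤ X := by
  induction l with
  | nil => simp
  | cons a t ih =>
  obtain ⟨hat, ht⟩ := List.pairwise_cons.1 hl
  obtain ⟨ha0, ht0⟩ := List.forall_mem_cons.1 h0
  have hself : (a :: t).filter (a ≤ ·) = a :: t := List.filter_eq_self.2 fun b hb =>
    decide_eq_true ((List.mem_cons.1 hb).elim ge_of_eq (hat b))
  rw [List.length_cons, Nat.forall_lt_succ_left, List.forall_mem_cons, hself]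
  simp only [List.drop_zero, List.headI_cons, List.drop_succ_cons]
  rw [ih ht ht0]
  refine and_congr_right fun hX => forall₂_congr fun q hq => ?_
  rcases (hat q hq).eq_or_lt with rfl | haq
  · rw [hself]
    refine iff_of_true (le_trans (Nat.mul_le_mul_left a ?_) hX) hX
    rw [List.filter_eq_self.2 fun b hb => decide_eq_true (hat b hb), List.prod_cons]
    exact Nat.le_mul_of_pos_left _ (Nat.pos_of_ne_zero ha0)
  · rw [List.filter_cons_of_neg (by simpa using haq)]

lemma SS_le_iff (hn : n ≠ 0) :
    SS n ≤ X ↔ 1 ≤ X ∧ ∀ q : ℕ, q.Prime → q ∣ n → q * n ≤ X * smoothPart q n := by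
  rw [SS, foldr_max_one_le_iff, List.forall_mem_map]
  simp only [List.mem_range]
  rw [forall_headI_mul_prod_drop_le_iff (Nat.primeFactorsList_sorted n).pairwise
    fun a ha => (Nat.prime_of_mem_primeFactorsList ha).ne_zero]
  simp only [Nat.mem_primeFactorsList hn, and_imp]
  refine and_congr_right fun _ => forall₃_congr fun q _ _ => ?_
  rw [← Nat.mul_le_mul_right_iff (smoothPart_pos q n), mul_assoc,
    prod_filter_le_mul_smoothPart q hn]

lemma Pmax_le_iff {y : ℝ} (hn : n ≠ 0) (hy : 1 ≤ y) :
    (Pmax n : ℝ) ≤ y ↔ ∀ q : ℕ, q.Prime → q ∣ n → (q : ℝ) ≤ y := by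
  have hy0 : 0 ≤ y := zero_le_one.trans hy
  rw [Pmax]
  split_ifs with h
  · obtain rfl : n = 1 := by omega
    refine iff_of_true (by exact_mod_cast hy) fun q hq hd => ?_
    exact absurd (Nat.dvd_one.1 hd) hq.ne_one
  · simp only [← Nat.le_floor_iff hy0, Finset.sup_le_iff, id, Nat.mem_primeFactors]
    exact forall_congr' fun q => ⟨fun h hq hd => h ⟨hq, hd, hn⟩, fun h hq => h hq.1 hq.2.1⟩

end SchinzelSzekeres

section Nodes

/-- The odd integers counted by `Axyz (x / M) y 2`, for `Y = ⌊x⌋`, with the condition `SS n ≤ x / M`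
expressed through the smooth parts of `n`. -/
structure IsNode (M Y : ℕ) (y : ℝ) (n : ℕ) : Prop where
  odd : Odd n
  mul_le : M * n ≤ Y
  prime_le {q : ℕ} : q.Prime → q ∣ n → (q : ℝ) ≤ y
  mul_mul_le {q : ℕ} : q.Prime → q ∣ n → M * (q * n) ≤ Y * smoothPart q n

variable {M Y a b k m n : ℕ} {x y : ℝ}

lemma isNode_of_SS_le (hM : M ≠ 0) (hx : 0 ≤ x) (hy : 1 ≤ y) (h1 : 1 ≤ n) (hnx : n ≤ x / M)
    (hP : Pmax n ≤ y) (hodd : ∀ p : ℕ, p.Prime → p ∣ n → 2 < (p : ℝ)) (hS : SS n ≤ x / M) :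
    IsNode M ⌊x⌋₊ y n := by
  have hn : n ≠ 0 := by omega
  have hM0 : (0 : ℝ) < M := by exact_mod_cast Nat.pos_of_ne_zero hM
  have hfloor {k : ℕ} (hk : k ≤ x / M) : M * k ≤ ⌊x⌋₊ := by
    rw [Nat.le_floor_iff hx, Nat.cast_mul, mul_comm]
    exact (le_div_iff₀ hM0).1 hk
  refine ⟨?_, hfloor hnx, fun hq hd => (Pmax_le_iff hn hy).1 hP _ hq hd, fun {q} hq hd => ?_⟩
  · rw [← Nat.not_even_iff_odd, even_iff_two_dvd]
    exact fun h2 => lt_irrefl (2 : ℝ) (hodd 2 Nat.prime_two h2)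
  · calc M * (q * n) ≤ M * (SS n * smoothPart q n) :=
          Nat.mul_le_mul_left _ (((SS_le_iff hn).1 le_rfl).2 q hq hd)
      _ = M * SS n * smoothPart q n := (mul_assoc _ _ _).symm
      _ ≤ ⌊x⌋₊ * smoothPart q n := Nat.mul_le_mul_right _ (hfloor hS)

namespace IsNode

lemma ne_zero (h : IsNode M Y y n) : n ≠ 0 := h.odd.pos.ne'

lemma eq_two_or_dvd {q : ℕ} (hq : q.Prime) (hd : q ∣ n * 2 ^ k) : q = 2 ∨ q ∣ n :=
  (hq.dvd_mul.1 hd).symm.imp_left fun h =>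
    (Nat.prime_dvd_prime_iff_eq hq Nat.prime_two).1 (hq.dvd_of_dvd_pow h)

lemma SS_mul_two_pow_le (h : IsNode M Y y n) (hM : M ≠ 0) (hk : 2 * (n * 2 ^ k) ≤ Y) :
    SS (n * 2 ^ k) ≤ Y := by
  have h2k : 2 ^ k ≠ 0 := by positivity
  have hnk : n * 2 ^ k ≠ 0 := mul_ne_zero h.ne_zero h2k
  refine (SS_le_iff hnk).2 ⟨by omega, fun q hq hd => ?_⟩
  by_cases hq2 : q = 2
  · exact hq2 ▸ hk.trans (Nat.le_mul_of_pos_right _ (smoothPart_pos _ _))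
  have hqn := (eq_two_or_dvd hq hd).resolve_left hq2
  rw [smoothPart_mul q h.ne_zero h2k, smoothPart_of_mem_smoothNumbers
    (prime_pow_mem_smoothNumbers Nat.prime_two (hq.two_le.lt_of_ne' hq2))]
  calc q * (n * 2 ^ k) = q * n * 2 ^ k := (mul_assoc _ _ _).symm
    _ ≤ M * (q * n) * 2 ^ k :=
        Nat.mul_le_mul_right _ (Nat.le_mul_of_pos_left _ (Nat.pos_of_ne_zero hM))
    _ ≤ Y * smoothPart q n * 2 ^ k := Nat.mul_le_mul_right _ (h.mul_mul_le hq hqn)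
    _ = Y * (smoothPart q n * 2 ^ k) := mul_assoc _ _ _

lemma Pmax_mul_two_pow_le (h : IsNode M Y y n) (hy : 2 ≤ y) (k : ℕ) :
    Pmax (n * 2 ^ k) ≤ y := by
  refine (Pmax_le_iff (mul_ne_zero h.ne_zero (by positivity)) (by linarith)).2 fun q hq hd => ?_
  rcases eq_two_or_dvd hq hd with rfl | hqn
  · exact_mod_cast hy
  · exact h.prime_le hq hqn

lemma of_dvd (h : IsNode M Y y b) (hd : a ∣ b) : IsNode M Y y a := by
  obtain ⟨c, rfl⟩ := hd
  obtain ⟨ha, hc⟩ := mul_ne_zero_iff.1 h.ne_zero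
  have hc0 := Nat.pos_of_ne_zero hc
  refine ⟨(Nat.odd_mul.1 h.odd).1, ?_, fun hq hqa => h.prime_le hq (hqa.mul_right c),
    fun {q} hq hqa => ?_⟩
  · exact (Nat.mul_le_mul_left _ (Nat.le_mul_of_pos_right a hc0)).trans h.mul_le
  · refine Nat.le_of_mul_le_mul_right ?_ hc0
    calc M * (q * a) * c = M * (q * (a * c)) := by ring
      _ ≤ Y * smoothPart q (a * c) := h.mul_mul_le hq (hqa.mul_right c)
      _ ≤ Y * (smoothPart q a * c) := by
          rw [smoothPart_mul q ha hc]
          gcongr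
          exact Nat.le_of_dvd hc0 (smoothPart_dvd q hc)
      _ = Y * smoothPart q a * c := (mul_assoc _ _ _).symm

lemma three_le_minFac (h : IsNode M Y y n) (hn : n ≠ 1) : 3 ≤ n.minFac := by
  have hodd := h.odd.of_dvd_nat n.minFac_dvd
  have := (Nat.minFac_prime hn).two_le
  rcases hodd with ⟨t, ht⟩
  omega

lemma mul_minFac_mul_le (h : IsNode M Y y n) (hn : n ≠ 1) : M * (n.minFac * n) ≤ Y := by
  simpa [smoothPart_of_isRough (isRough_minFac n)] using
    h.mul_mul_le (Nat.minFac_prime hn) n.minFac_dvd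

lemma mul (h : IsNode M Y y n) (hn : n ≠ 1) (hodd : Odd m) (hsmooth : m ∈ n.minFac.smoothNumbers)
    (hle : m ≤ n.minFac)
    (hm : ∀ q : ℕ, q.Prime → q ∣ m → q * m ≤ n.minFac * smoothPart q m) :
    IsNode M Y y (n * m) := by
  have hpn := h.mul_minFac_mul_le hn
  have hlt {q : ℕ} (hq : q.Prime) (hqm : q ∣ m) : q < n.minFac :=
    Nat.mem_smoothNumbers'.1 hsmooth q hq hqm
  refine ⟨h.odd.mul hodd, ?_, fun {q} hq hd => ?_, fun {q} hq hd => ?_⟩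
  · rw [mul_comm n.minFac] at hpn
    exact (Nat.mul_le_mul_left _ (Nat.mul_le_mul_left _ hle)).trans hpn
  · rcases hq.dvd_mul.1 hd with hqn | hqm
    · exact h.prime_le hq hqn
    · exact (Nat.cast_le.2 (hlt hq hqm).le).trans
        (h.prime_le (Nat.minFac_prime hn) n.minFac_dvd)
  rw [smoothPart_mul q h.ne_zero hodd.pos.ne']
  by_cases hqm : q ∣ m
  · rw [smoothPart_of_isRough ((isRough_minFac n).mono (hlt hq hqm).le), one_mul]
    calc M * (q * (n * m)) = M * n * (q * m) := by ring
      _ ≤ M * n * (n.minFac * smoothPart q m) := Nat.mul_le_mul_left _ (hm q hq hqm)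
      _ = M * (n.minFac * n) * smoothPart q m := by ring
      _ ≤ Y * smoothPart q m := Nat.mul_le_mul_right _ hpn
  · have hqn := (hq.dvd_mul.1 hd).resolve_right hqm
    rw [smoothPart_of_mem_smoothNumbers
      (Nat.smoothNumbers_mono (Nat.minFac_le_of_dvd hq.two_le hqn) hsmooth)]
    calc M * (q * (n * m)) = M * (q * n) * m := by ring
      _ ≤ Y * smoothPart q n * m := Nat.mul_le_mul_right _ (h.mul_mul_le hq hqn)
      _ = Y * (smoothPart q n * m) := mul_assoc _ _ _

end IsNode
end Nodes

section Ends

variable {M Y a c k n n' p p₀ : ℕ} {y : ℝ} {m s : ℕ → ℕ}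

/-- The odd part of the lower end of the connection built from `n`: the smallest prime factor `p`
of `n` is replaced by the hub `m p`. -/
def lowerEnd (m : ℕ → ℕ) (n : ℕ) : ℕ := n / n.minFac * m n.minFac

/-- The odd part of the upper end of the connection built from `n`, namely `p` times the lower end,
for `p` the smallest prime factor of `n`. -/
def upperEnd (m : ℕ → ℕ) (n : ℕ) : ℕ := n * m n.minFac

lemma upperEnd_eq_lowerEnd_mul_minFac (m : ℕ → ℕ) (n : ℕ) :
    upperEnd m n = lowerEnd m n * n.minFac := by
  rw [upperEnd, lowerEnd, mul_right_comm, Nat.div_mul_cancel n.minFac_dvd]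

lemma lowerEnd_dvd_upperEnd (m : ℕ → ℕ) (n : ℕ) : lowerEnd m n ∣ upperEnd m n :=
  ⟨_, upperEnd_eq_lowerEnd_mul_minFac m n⟩

lemma smoothPart_mul_of_isRough_of_mem_smoothNumbers (ha : a ≠ 0) (hrough : IsRough p a)
    (hsmooth : c ∈ p.smoothNumbers) : smoothPart p (a * c) = c := by
  rw [smoothPart_mul p ha (Nat.ne_zero_of_mem_smoothNumbers hsmooth), smoothPart_of_isRough hrough,
    smoothPart_of_mem_smoothNumbers hsmooth, one_mul]

lemma minFac_mul_of_isRough (hrough : IsRough p a) (hc : c ≠ 1) (hcp : c.minFac < p) :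
    (a * c).minFac = c.minFac := by
  have hac : a * c ≠ 1 := fun h => hc (Nat.eq_one_of_mul_eq_one_left h)
  refine le_antisymm (Nat.minFac_le_of_dvd (Nat.minFac_prime hc).two_le
    (c.minFac_dvd.mul_left a)) ?_
  have hq := Nat.minFac_prime hac
  rcases hq.dvd_mul.1 (a * c).minFac_dvd with hqa | hqc
  · exact hcp.le.trans (hrough _ hq hqa)
  · exact Nat.minFac_le_of_dvd hq.two_le hqc

/-- The multiples of `n` by the integers whose prime factors are at most the smallest prime factor
of `n`. -/
def tailSet (n : ℕ) : Set ℕ := {b | ∃ t ∈ (n.minFac + 1).smoothNumbers, b = n * t}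

namespace IsHubAssignment

lemma smoothPart_lowerEnd (h : IsHubAssignment p₀ m s) (hn : n ≠ 1) (hn0 : n ≠ 0) :
    smoothPart n.minFac (lowerEnd m n) = m n.minFac := by
  have hd := Nat.div_dvd_of_dvd n.minFac_dvd
  exact smoothPart_mul_of_isRough_of_mem_smoothNumbers (ne_zero_of_dvd_ne_zero hn0 hd)
    ((isRough_minFac n).of_dvd hd) (h.hub_mem_smoothNumbers (Nat.minFac_prime hn))

lemma smoothPart_upperEnd (h : IsHubAssignment p₀ m s) (hn : n ≠ 1) (hn0 : n ≠ 0) :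
    smoothPart n.minFac (upperEnd m n) = m n.minFac :=
  smoothPart_mul_of_isRough_of_mem_smoothNumbers hn0 (isRough_minFac n)
    (h.hub_mem_smoothNumbers (Nat.minFac_prime hn))

lemma eq_of_upperEnd_eq (h : IsHubAssignment p₀ m s) (hp : n.minFac = n'.minFac)
    (he : upperEnd m n = upperEnd m n') : n = n' := by
  rw [upperEnd, upperEnd, hp] at he
  exact Nat.eq_of_mul_eq_mul_right (Nat.pos_of_ne_zero (h.hub_ne_zero _)) he

lemma eq_of_lowerEnd_eq (h : IsHubAssignment p₀ m s) (hp : n.minFac = n'.minFac)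
    (he : lowerEnd m n = lowerEnd m n') : n = n' :=
  h.eq_of_upperEnd_eq hp <| by
    rw [upperEnd_eq_lowerEnd_mul_minFac, he, hp, ← upperEnd_eq_lowerEnd_mul_minFac]

lemma isNode_upperEnd (h : IsHubAssignment p₀ m s) (hnode : IsNode M Y y n) (hn : n ≠ 1) :
    IsNode M Y y (upperEnd m n) :=
  have hp := Nat.minFac_prime hn
  hnode.mul hn (h.odd_hub _) (h.hub_mem_smoothNumbers hp) (h.hub_le hp)
    fun _ hq hd => h.mul_hub_le hp hq hd

lemma isNode_lowerEnd (h : IsHubAssignment p₀ m s) (hnode : IsNode M Y y n) (hn : n ≠ 1) :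
    IsNode M Y y (lowerEnd m n) :=
  (h.isNode_upperEnd hnode hn).of_dvd (lowerEnd_dvd_upperEnd m n)

lemma upperEnd_mem_tailSet (h : IsHubAssignment p₀ m s) (hn : n ≠ 1) :
    upperEnd m n ∈ tailSet n :=
  ⟨_, Nat.smoothNumbers_mono (Nat.le_succ _) (h.hub_mem_smoothNumbers (Nat.minFac_prime hn)), rfl⟩

lemma lowerEnd_notMem_tailSet (h : IsHubAssignment p₀ m s) (hn : n ≠ 1) (hn0 : n ≠ 0) :
    lowerEnd m n ∉ tailSet n := by
  rintro ⟨t, -, ht⟩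
  have hp := Nat.minFac_prime hn
  have hmul : n * m n.minFac = n * (t * n.minFac) := by
    rw [← mul_assoc, ← ht, ← upperEnd_eq_lowerEnd_mul_minFac, upperEnd]
  have hdvd : n.minFac ∣ m n.minFac :=
    ⟨t, by rw [Nat.eq_of_mul_eq_mul_left (Nat.pos_of_ne_zero hn0) hmul, mul_comm]⟩
  exact lt_irrefl _ (Nat.mem_smoothNumbers'.1 (h.hub_mem_smoothNumbers hp) _ hp hdvd)

lemma lowerEnd_mem_tailSet_iff (h : IsHubAssignment p₀ m s) (hn0 : n ≠ 0)
    (hn' : n' ≠ 1) (hn0' : n' ≠ 0) (hne : n ≠ n') (hle : n'.minFac ≤ n.minFac) :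
    lowerEnd m n' ∈ tailSet n ↔ upperEnd m n' ∈ tailSet n := by
  have hp' := Nat.minFac_prime hn'
  have hsmooth : n'.minFac ∈ (n.minFac + 1).smoothNumbers := by
    simpa using prime_pow_mem_smoothNumbers (k := 1) hp' (Nat.lt_succ_of_le hle)
  rw [upperEnd_eq_lowerEnd_mul_minFac]
  refine ⟨fun ⟨t, ht, he⟩ => ⟨t * n'.minFac, Nat.mul_mem_smoothNumbers ht hsmooth, ?_⟩,
    fun ⟨t, ht, he⟩ => ?_⟩
  · rw [he, mul_assoc]
  by_cases hd : n'.minFac ∣ t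
  · obtain ⟨t, rfl⟩ := hd
    refine ⟨t, Nat.mem_smoothNumbers_of_dvd ht (dvd_mul_left _ _), ?_⟩
    exact Nat.eq_of_mul_eq_mul_right hp'.pos (he.trans (by ring))
  -- The two smallest prime factors coincide, and `t` and their hub are both the smooth part of the
  -- same number at that prime.
  have hpn : n'.minFac ∣ n := (hp'.dvd_mul.1 ⟨_, he.symm.trans (mul_comm _ _)⟩).resolve_right hd
  have hpp : n'.minFac = n.minFac := hle.antisymm (Nat.minFac_le_of_dvd hp'.two_le hpn)
  have ht' : t ∈ n.minFac.smoothNumbers := Nat.mem_smoothNumbers'.2 fun q hq hqt =>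
    (Nat.lt_succ_iff.1 (Nat.mem_smoothNumbers'.1 ht q hq hqt)).lt_of_ne fun hqp =>
      hd (hpp ▸ hqp ▸ hqt)
  rw [← upperEnd_eq_lowerEnd_mul_minFac] at he
  have htm : m n.minFac = t := by
    rw [← hpp, ← h.smoothPart_upperEnd hn' hn0', he, hpp,
      smoothPart_mul_of_isRough_of_mem_smoothNumbers hn0 (isRough_minFac n) ht']
  exact absurd (h.eq_of_upperEnd_eq hpp.symm (by rw [he, upperEnd, htm])) hne

end IsHubAssignment
end Ends

section Connectivity

variable {α : Type*} {F : ℕ → α} {D : Set ℕ} {a c n p : ℕ}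

lemma eq_of_mul_smooth (hD : ∀ b ∈ D, ∀ a, a ∣ b → a ∈ D)
    (hdiv : ∀ n ∈ D, n ≠ 1 → n.minFac < p → F n = F (n / n.minFac)) (ha : IsRough p a)
    (hc : c ∈ p.smoothNumbers) (hac : a * c ∈ D) : F (a * c) = F a := by
  induction c using Nat.strong_induction_on with
  | _ c ih =>
  rcases eq_or_ne c 1 with rfl | hc1
  · rw [mul_one]
  have hq := Nat.minFac_prime hc1
  have hqp := Nat.mem_smoothNumbers'.1 hc _ hq c.minFac_dvd
  have hmin := minFac_mul_of_isRough ha hc1 hqp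
  have hd := Nat.div_dvd_of_dvd c.minFac_dvd
  have hac1 : a * c ≠ 1 := fun h => hc1 (Nat.eq_one_of_mul_eq_one_left h)
  rw [hdiv _ hac hac1 (hmin ▸ hqp), hmin, Nat.mul_div_assoc _ c.minFac_dvd]
  exact ih _ (Nat.div_lt_self (Nat.pos_of_ne_zero hc.1) hq.one_lt)
    (Nat.mem_smoothNumbers_of_dvd hc hd) (hD _ hac _ (mul_dvd_mul_left a hd))

lemma eq_div_minFac_of_hubs (hD : ∀ b ∈ D, ∀ a, a ∣ b → a ∈ D)
    (hF : ∀ n ∈ D, n ≠ 1 → ∃ c ∈ n.minFac.smoothNumbers, n * c ∈ D ∧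
      F (n / n.minFac * c) = F (n * c)) (hn : n ∈ D) (hn1 : n ≠ 1) :
    F n = F (n / n.minFac) := by
  induction hp : n.minFac using Nat.strong_induction_on generalizing n with
  | _ p ih =>
  subst hp
  have hdiv : ∀ b ∈ D, b ≠ 1 → b.minFac < n.minFac → F b = F (b / b.minFac) :=
    fun b hb hb1 hlt => ih _ hlt hb hb1 rfl
  obtain ⟨c, hc, hnc, he⟩ := hF n hn hn1
  have hd := Nat.div_dvd_of_dvd n.minFac_dvd
  have hrough := isRough_minFac n
  calc F n = F (n * c) := (eq_of_mul_smooth hD hdiv hrough hc hnc).symm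
    _ = F (n / n.minFac * c) := he.symm
    _ = F (n / n.minFac) := eq_of_mul_smooth hD hdiv (hrough.of_dvd hd) hc
        (hD _ hnc _ (mul_dvd_mul_right hd c))

lemma eq_apply_one_of_hubs (h0 : 0 ∉ D) (hD : ∀ b ∈ D, ∀ a, a ∣ b → a ∈ D)
    (hF : ∀ n ∈ D, n ≠ 1 → ∃ c ∈ n.minFac.smoothNumbers, n * c ∈ D ∧
      F (n / n.minFac * c) = F (n * c)) (hn : n ∈ D) : F n = F 1 := by
  induction n using Nat.strong_induction_on with
  | _ n ih =>
  rcases eq_or_ne n 1 with rfl | hn1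
  · rfl
  rw [eq_div_minFac_of_hubs hD hF hn hn1]
  exact ih _ (Nat.div_lt_self (Nat.pos_of_ne_zero fun h => h0 (h ▸ hn))
    (Nat.minFac_prime hn1).one_lt) (hD _ hn _ (Nat.div_dvd_of_dvd n.minFac_dvd))

end Connectivity

section Windows

variable {M Y a k o n p s L L' : ℕ}

/-- The least `k` with `√Y < o * 2 ^ k`. -/
def firstExp (Y o : ℕ) : ℕ := Nat.clog 2 (Nat.sqrt Y / o + 1)

/-- The largest `k` with `2 * (o * 2 ^ k) ≤ Y`, for `0 < 2 * o ≤ Y`. -/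
def lastExp (Y o : ℕ) : ℕ := Nat.log 2 (Y / (2 * o))

lemma firstExp_le_iff (ho : o ≠ 0) : firstExp Y o ≤ k ↔ Nat.sqrt Y < o * 2 ^ k := by
  rw [firstExp, Nat.clog_le_iff_le_pow one_lt_two, Nat.succ_le_iff,
    Nat.div_lt_iff_lt_mul (Nat.pos_of_ne_zero ho), mul_comm]

lemma le_lastExp_iff (ho : o ≠ 0) (h : 2 * o ≤ Y) : k ≤ lastExp Y o ↔ 2 * (o * 2 ^ k) ≤ Y := by
  have h0 : 0 < 2 * o := by omega
  rw [lastExp, Nat.le_log_iff_pow_le one_lt_two (Nat.div_pos h h0).ne', Nat.le_div_iff_mul_le h0,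
    mul_comm, mul_assoc]

lemma firstExp_le_lastExp (hY : 16 ≤ Y) (ho : o ≠ 0) (h : 2 * o ≤ Y) :
    firstExp Y o ≤ lastExp Y o := by
  rw [le_lastExp_iff ho h]
  rcases hk : firstExp Y o with _ | k
  · simpa using h
  have hprev : o * 2 ^ k ≤ Nat.sqrt Y := by
    rw [← not_lt, ← firstExp_le_iff ho]
    omega
  have hsqrt : 4 ≤ Nat.sqrt Y := Nat.le_sqrt.2 hY
  calc 2 * (o * 2 ^ (k + 1)) = 4 * (o * 2 ^ k) := by ring
    _ ≤ Nat.sqrt Y * Nat.sqrt Y := Nat.mul_le_mul hsqrt hprev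
    _ ≤ Y := Nat.sqrt_le Y

lemma overlap_of_mul_le_of_lt_mul (h : a * L ≤ Y ∧ Y < a * (2 * L))
    (h' : a * L' ≤ Y ∧ Y < a * (2 * L')) : Overlap L L' :=
  ⟨lt_of_mul_lt_mul_left (h.1.trans_lt h'.2) a.zero_le,
    lt_of_mul_lt_mul_left (h'.1.trans_lt h.2) a.zero_le⟩

/-- The exponent of the lower of the two vertices of a slot that is `s` octaves below `Y`. -/
def slotExp (Y a s : ℕ) : ℕ := Nat.log 2 (Y / a) - s

lemma mul_two_pow_slotExp_le (ha : a ≠ 0) (h : a * 2 ^ s ≤ Y) :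
    a * 2 ^ slotExp Y a s * 2 ^ s ≤ Y ∧ Y < a * 2 ^ slotExp Y a s * (2 * 2 ^ s) := by
  have ha0 := Nat.pos_of_ne_zero ha
  have hdiv : 2 ^ s ≤ Y / a := (Nat.le_div_iff_mul_le ha0).2 (by rwa [mul_comm])
  have hs : s ≤ Nat.log 2 (Y / a) := Nat.le_log_of_pow_le one_lt_two hdiv
  have hpow : a * 2 ^ slotExp Y a s * 2 ^ s = 2 ^ Nat.log 2 (Y / a) * a := by
    rw [slotExp, mul_assoc, ← pow_add, Nat.sub_add_cancel hs, mul_comm]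
  constructor
  · rw [hpow, ← Nat.le_div_iff_mul_le ha0]
    exact Nat.pow_log_le_self 2 (Nat.ne_zero_of_lt ((Nat.two_pow_pos s).trans_le hdiv))
  · rw [mul_left_comm, hpow, ← mul_assoc, ← pow_succ', ← Nat.div_lt_iff_lt_mul ha0]
    exact Nat.lt_pow_succ_log_self one_lt_two _

end Windows

section Connections

variable {Y k k' n n' p₀ : ℕ} {y : ℝ} {m s : ℕ → ℕ}

/-- The factor by which the nodes have to stay below `Y` to leave room for all connections. -/
abbrev scale (p₀ : ℕ) : ℕ := 4 ^ (p₀ ^ 2 + 2)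

lemma two_le_scale (p₀ : ℕ) : 2 ≤ scale p₀ :=
  (by norm_num : 2 ≤ 4).trans (Nat.le_self_pow (by omega) 4)

/-- The exponent `k` of the connection built from `n`, which joins `lowerEnd m n * 2 ^ k` to
`upperEnd m n * 2 ^ k` and the same integers with `k + 1` in place of `k`. -/
def connExp (Y : ℕ) (m s : ℕ → ℕ) (n : ℕ) : ℕ := slotExp Y (upperEnd m n) (s n.minFac)

namespace IsHubAssignment

lemma upperEnd_band (h : IsHubAssignment p₀ m s) (hnode : IsNode (scale p₀) Y y n)
    (hn : n ≠ 1) :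
    upperEnd m n * 2 ^ connExp Y m s n * 2 ^ s n.minFac ≤ Y ∧
      Y < upperEnd m n * 2 ^ connExp Y m s n * (2 * 2 ^ s n.minFac) := by
  have hp := Nat.minFac_prime hn
  refine mul_two_pow_slotExp_le (h.isNode_upperEnd hnode hn).ne_zero ?_
  calc upperEnd m n * 2 ^ s n.minFac ≤ n * n.minFac * 4 ^ (p₀ ^ 2 + 2) := by
        refine Nat.mul_le_mul (Nat.mul_le_mul_left n (h.hub_le hp)) ?_
        exact (Nat.pow_le_pow_left (by norm_num) _).trans
          (Nat.pow_le_pow_right four_pos ((h.slot_le hp).trans (Nat.le_add_right _ 2)))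
    _ = 4 ^ (p₀ ^ 2 + 2) * (n.minFac * n) := by ring
    _ ≤ Y := hnode.mul_minFac_mul_le hn

lemma lowerEnd_band (h : IsHubAssignment p₀ m s) (hnode : IsNode (scale p₀) Y y n)
    (hn : n ≠ 1) :
    lowerEnd m n * 2 ^ connExp Y m s n * (n.minFac * 2 ^ s n.minFac) ≤ Y ∧
      Y < lowerEnd m n * 2 ^ connExp Y m s n * (2 * (n.minFac * 2 ^ s n.minFac)) := by
  have hband := h.upperEnd_band hnode hn
  rw [upperEnd_eq_lowerEnd_mul_minFac] at hband
  convert hband using 2 <;> ring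

lemma two_mul_upperEnd_le (h : IsHubAssignment p₀ m s)
    (hnode : IsNode (scale p₀) Y y n) (hn : n ≠ 1) :
    2 * (upperEnd m n * 2 ^ (connExp Y m s n + 1)) ≤ Y := calc
  _ = upperEnd m n * 2 ^ connExp Y m s n * 2 ^ 2 := by ring
  _ ≤ upperEnd m n * 2 ^ connExp Y m s n * 2 ^ s n.minFac :=
    Nat.mul_le_mul_left _ (Nat.pow_le_pow_right two_pos (h.two_le_slot (Nat.minFac_prime hn)))
  _ ≤ Y := (h.upperEnd_band hnode hn).1

lemma sqrt_lt_lowerEnd (h : IsHubAssignment p₀ m s)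
    (hnode : IsNode (scale p₀) Y y n) (hn : n ≠ 1) :
    Nat.sqrt Y < lowerEnd m n * 2 ^ connExp Y m s n := by
  by_contra! hle
  have hs := h.slot_le (Nat.minFac_prime hn)
  have hlevel : 2 * (n.minFac * 2 ^ s n.minFac) ≤ Nat.sqrt Y := by
    rw [Nat.le_sqrt]
    calc 2 * (n.minFac * 2 ^ s n.minFac) * (2 * (n.minFac * 2 ^ s n.minFac))
        = 4 ^ (s n.minFac + 1) * (n.minFac * n.minFac) := by
          rw [show 4 = 2 * 2 from rfl, mul_pow]
          ring
      _ ≤ 4 ^ (p₀ ^ 2 + 2) * (n.minFac * n) := by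
          gcongr
          · norm_num
          · omega
          · exact Nat.minFac_le (Nat.pos_of_ne_zero hnode.ne_zero)
      _ ≤ Y := hnode.mul_minFac_mul_le hn
  exact ((Nat.mul_le_mul hle hlevel).trans (Nat.sqrt_le Y)).not_gt (h.lowerEnd_band hnode hn).2

lemma sqrt_lt_upperEnd (h : IsHubAssignment p₀ m s)
    (hnode : IsNode (scale p₀) Y y n) (hn : n ≠ 1) :
    Nat.sqrt Y < upperEnd m n * 2 ^ connExp Y m s n :=
  (h.sqrt_lt_lowerEnd hnode hn).trans_le <| Nat.mul_le_mul_right _ <|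
    Nat.le_of_dvd (h.isNode_upperEnd hnode hn).odd.pos (lowerEnd_dvd_upperEnd m n)

lemma two_mul_lowerEnd_le (h : IsHubAssignment p₀ m s)
    (hnode : IsNode (scale p₀) Y y n) (hn : n ≠ 1) :
    2 * (lowerEnd m n * 2 ^ (connExp Y m s n + 1)) ≤ Y :=
  (h.two_mul_upperEnd_le hnode hn).trans' <| Nat.mul_le_mul_left _ <| Nat.mul_le_mul_right _ <|
    Nat.le_of_dvd (h.isNode_upperEnd hnode hn).odd.pos (lowerEnd_dvd_upperEnd m n)

lemma eq_of_lowerEnd_eq_of_connExp_eq (h : IsHubAssignment p₀ m s)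
    (hnode : IsNode (scale p₀) Y y n) (hn : n ≠ 1)
    (hnode' : IsNode (scale p₀) Y y n') (hn' : n' ≠ 1)
    (he : lowerEnd m n = lowerEnd m n') (hk : connExp Y m s n = connExp Y m s n') : n = n' := by
  have hband := h.lowerEnd_band hnode' hn'
  rw [← he, ← hk] at hband
  refine h.eq_of_lowerEnd_eq (h.eq_of_overlap_mul_mul (Nat.minFac_prime hn) (Nat.minFac_prime hn')
    (hnode.three_le_minFac hn) (hnode'.three_le_minFac hn') (h.isNode_lowerEnd hnode hn).ne_zero
    (h.smoothPart_lowerEnd hn hnode.ne_zero) ?_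
    (overlap_of_mul_le_of_lt_mul (h.lowerEnd_band hnode hn) hband)) he
  rw [he, h.smoothPart_lowerEnd hn' hnode'.ne_zero]

lemma eq_of_upperEnd_eq_of_connExp_eq (h : IsHubAssignment p₀ m s)
    (hnode : IsNode (scale p₀) Y y n) (hn : n ≠ 1)
    (hnode' : IsNode (scale p₀) Y y n') (hn' : n' ≠ 1)
    (he : upperEnd m n = upperEnd m n') (hk : connExp Y m s n = connExp Y m s n') : n = n' := by
  have hband := h.upperEnd_band hnode' hn'
  rw [← he, ← hk] at hband
  refine h.eq_of_upperEnd_eq (h.eq_of_slot_eq (Nat.minFac_prime hn) (Nat.minFac_prime hn')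
    (hnode.three_le_minFac hn) (hnode'.three_le_minFac hn') (h.isNode_upperEnd hnode hn).ne_zero
    (h.smoothPart_upperEnd hn hnode.ne_zero) ?_ (n.minFac_dvd.mul_right _)
    (he ▸ n'.minFac_dvd.mul_right _)
    (overlap_of_mul_le_of_lt_mul (h.upperEnd_band hnode hn) hband).eq_of_two_pow) he
  rw [he, h.smoothPart_upperEnd hn' hnode'.ne_zero]

lemma connExp_ne_of_lowerEnd_eq_upperEnd (h : IsHubAssignment p₀ m s)
    (hnode : IsNode (scale p₀) Y y n) (hn : n ≠ 1)
    (hnode' : IsNode (scale p₀) Y y n') (hn' : n' ≠ 1)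
    (he : lowerEnd m n = upperEnd m n') : connExp Y m s n ≠ connExp Y m s n' := by
  intro hk
  have hband := h.upperEnd_band hnode' hn'
  rw [← he, ← hk] at hband
  refine h.not_overlap_mul_two_pow (Nat.minFac_prime hn) (Nat.minFac_prime hn')
    (hnode.three_le_minFac hn) (hnode'.three_le_minFac hn') (h.isNode_lowerEnd hnode hn).ne_zero
    (h.smoothPart_lowerEnd hn hnode.ne_zero) ?_
    (overlap_of_mul_le_of_lt_mul (h.lowerEnd_band hnode hn) hband)
  rw [he, h.smoothPart_upperEnd hn' hnode'.ne_zero]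

end IsHubAssignment
end Connections

section Assembly

variable {M Y k k' p₀ : ℕ} {y : ℝ} {m s : ℕ → ℕ}

/-- The vertices of the chain: the path attached to an odd integer `o` consists of the integers
`o * 2 ^ k` in `(√Y, Y / 2]`, and the `i`-th of them is `o * 2 ^ (firstExp Y o + i)`. -/
abbrev Vertex (M Y : ℕ) (y : ℝ) : Type :=
  Σ o : {n // IsNode M Y y n}, Fin (lastExp Y o - firstExp Y o + 1)

/-- The pairs of consecutive vertices `o * 2 ^ k`, `o * 2 ^ (k + 1)` of a path. -/
abbrev Slot (M Y : ℕ) (y : ℝ) : Type :=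
  Σ o : {n // IsNode M Y y n}, Fin (lastExp Y o - firstExp Y o)

/-- The integer represented by a vertex. -/
def Vertex.value (v : Vertex M Y y) : ℕ := v.1 * 2 ^ (firstExp Y v.1 + v.2)

lemma firstExp_le_and_lt_lastExp {o : ℕ} (ho : o ≠ 0) (hlo : Nat.sqrt Y < o * 2 ^ k)
    (hhi : 2 * (o * 2 ^ (k + 1)) ≤ Y) : firstExp Y o ≤ k ∧ k < lastExp Y o := by
  have h2o : 2 * o ≤ Y := hhi.trans' <| Nat.mul_le_mul_left _ <|
    Nat.le_mul_of_pos_right _ (Nat.two_pow_pos _)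
  exact ⟨(firstExp_le_iff ho).2 hlo, (le_lastExp_iff ho h2o).2 hhi⟩

/-- The slot between `o * 2 ^ k` and `o * 2 ^ (k + 1)`. -/
def Slot.mk (o : {n // IsNode M Y y n}) (k : ℕ) (hlo : Nat.sqrt Y < o * 2 ^ k)
    (hhi : 2 * (o * 2 ^ (k + 1)) ≤ Y) : Slot M Y y :=
  have hk := firstExp_le_and_lt_lastExp o.2.ne_zero hlo hhi
  ⟨o, k - firstExp Y o, Nat.sub_lt_sub_right hk.1 hk.2⟩

lemma Slot.mk_inj {o o' : {n // IsNode M Y y n}} {hlo hhi hlo' hhi'}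
    (h : Slot.mk o k hlo hhi = Slot.mk o' k' hlo' hhi') : o = o' ∧ k = k' := by
  obtain ⟨rfl, h⟩ := Sigma.mk.inj_iff.1 h
  have hk := firstExp_le_and_lt_lastExp o.2.ne_zero hlo hhi
  have hk' := firstExp_le_and_lt_lastExp o.2.ne_zero hlo' hhi'
  have := Fin.mk.inj_iff.1 (eq_of_heq h)
  exact ⟨rfl, by omega⟩

lemma Slot.value_slotEnd_mk {o : {n // IsNode M Y y n}} {hlo hhi} (b : Bool) :
    Vertex.value (slotEnd b (Slot.mk o k hlo hhi)) = o * 2 ^ (k + (!b).toNat) := by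
  have hk := firstExp_le_and_lt_lastExp o.2.ne_zero hlo hhi
  cases b <;> simp only [Vertex.value, slotEnd, intervalEnd, Slot.mk] <;> congr 2 <;> simp <;> omega

lemma eq_and_eq_of_odd_mul_two_pow_eq {o o' : ℕ} (ho : Odd o) (ho' : Odd o')
    (h : o * 2 ^ k = o' * 2 ^ k') : o = o' ∧ k = k' := by
  have hfac {o : ℕ} (ho : Odd o) (k : ℕ) : (o * 2 ^ k).factorization 2 = k := by
    rw [Nat.factorization_mul ho.pos.ne' (by positivity), Finsupp.add_apply,
      Nat.factorization_eq_zero_of_not_dvd ho.not_two_dvd_nat, zero_add,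
      Nat.prime_two.factorization_pow, Finsupp.single_eq_same]
  have hk : k = k' := by rw [← hfac ho k, h, hfac ho']
  subst hk
  exact ⟨Nat.eq_of_mul_eq_mul_right (Nat.two_pow_pos k) h, rfl⟩

lemma Vertex.value_injective : Function.Injective (Vertex.value (M := M) (Y := Y) (y := y)) := by
  rintro ⟨o, i⟩ ⟨o', i'⟩ h
  obtain ⟨ho, hi⟩ := eq_and_eq_of_odd_mul_two_pow_eq o.2.odd o'.2.odd h
  obtain rfl := Subtype.ext ho
  exact congrArg (Sigma.mk o) (Fin.ext (Nat.add_left_cancel hi))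

lemma Vertex.value_dvd_or_dvd {v w : Vertex M Y y} (h : v.1 = w.1) :
    v.value ∣ w.value ∨ w.value ∣ v.value := by
  obtain ⟨o, i⟩ := v
  obtain ⟨o', j⟩ := w
  obtain rfl : o = o' := h
  exact (le_total (firstExp Y o + i) (firstExp Y o + j)).imp
    (fun hij => Nat.mul_dvd_mul_left _ (pow_dvd_pow 2 hij))
    (fun hij => Nat.mul_dvd_mul_left _ (pow_dvd_pow 2 hij))

lemma IsNode.two_mul_le (hM : 2 ≤ M) {n : ℕ} (h : IsNode M Y y n) : 2 * n ≤ Y :=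
  (Nat.mul_le_mul_right n hM).trans h.mul_le

lemma Vertex.value_window (hY : 16 ≤ Y) (hM : 2 ≤ M) (v : Vertex M Y y) :
    Nat.sqrt Y < v.value ∧ 2 * v.value ≤ Y := by
  obtain ⟨o, i⟩ := v
  have ho := o.2.ne_zero
  have h2o := o.2.two_mul_le hM
  refine ⟨(firstExp_le_iff ho).1 (Nat.le_add_right _ _), (le_lastExp_iff ho h2o).1 ?_⟩
  have := firstExp_le_lastExp hY ho h2o
  have := i.2
  dsimp only at *
  omega

lemma finite_setOf_isNode (hM : 2 ≤ M) : {n | IsNode M Y y n}.Finite :=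
  (Set.finite_Iic Y).subset fun n h => by
    have := h.two_mul_le hM
    exact Set.mem_Iic.2 (by omega)

/-- The integers `n` from which a connection is built. -/
abbrev Conn (M Y : ℕ) (y : ℝ) : Type := {n // IsNode M Y y n ∧ n ≠ 1}

namespace IsHubAssignment

/-- The slot at the lower end of the connection built from `n`. -/
def lowerSlot (h : IsHubAssignment p₀ m s) (n : Conn (scale p₀) Y y) :
    Slot (scale p₀) Y y :=
  Slot.mk ⟨lowerEnd m n, h.isNode_lowerEnd n.2.1 n.2.2⟩ (connExp Y m s n)
    (h.sqrt_lt_lowerEnd n.2.1 n.2.2) (h.two_mul_lowerEnd_le n.2.1 n.2.2)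

/-- The slot at the upper end of the connection built from `n`. -/
def upperSlot (h : IsHubAssignment p₀ m s) (n : Conn (scale p₀) Y y) :
    Slot (scale p₀) Y y :=
  Slot.mk ⟨upperEnd m n, h.isNode_upperEnd n.2.1 n.2.2⟩ (connExp Y m s n)
    (h.sqrt_lt_upperEnd n.2.1 n.2.2) (h.two_mul_upperEnd_le n.2.1 n.2.2)

lemma lowerSlot_injective (h : IsHubAssignment p₀ m s) :
    Function.Injective (h.lowerSlot (Y := Y) (y := y)) := fun n n' he =>
  have ⟨ho, hk⟩ := Slot.mk_inj he
  Subtype.ext <| h.eq_of_lowerEnd_eq_of_connExp_eq n.2.1 n.2.2 n'.2.1 n'.2.2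
    (congrArg Subtype.val ho) hk

lemma upperSlot_injective (h : IsHubAssignment p₀ m s) :
    Function.Injective (h.upperSlot (Y := Y) (y := y)) := fun n n' he =>
  have ⟨ho, hk⟩ := Slot.mk_inj he
  Subtype.ext <| h.eq_of_upperEnd_eq_of_connExp_eq n.2.1 n.2.2 n'.2.1 n'.2.2
    (congrArg Subtype.val ho) hk

lemma lowerSlot_ne_upperSlot (h : IsHubAssignment p₀ m s)
    (n n' : Conn (scale p₀) Y y) : h.lowerSlot n ≠ h.upperSlot n' := fun he =>
  have ⟨ho, hk⟩ := Slot.mk_inj he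
  h.connExp_ne_of_lowerEnd_eq_upperEnd n.2.1 n.2.2 n'.2.1 n'.2.2 (congrArg Subtype.val ho) hk

lemma even_cardFactors_upperEnd (h : IsHubAssignment p₀ m s)
    (n : Conn (scale p₀) Y y) :
    Even (ArithmeticFunction.cardFactors (upperEnd m n)) ↔
      ¬Even (ArithmeticFunction.cardFactors (lowerEnd m n)) := by
  have hp := Nat.minFac_prime n.2.2
  rw [upperEnd_eq_lowerEnd_mul_minFac, ArithmeticFunction.cardFactors_mul
    (h.isNode_lowerEnd n.2.1 n.2.2).ne_zero hp.ne_zero,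
    ArithmeticFunction.cardFactors_apply_prime hp, Nat.even_add_one]

lemma setoid_rel_of_slots (h : IsHubAssignment p₀ m s)
    (r : Setoid {n // IsNode (scale p₀) Y y n})
    (hr : ∀ n, r (h.lowerSlot n).1 (h.upperSlot n).1)
    (a b : {n // IsNode (scale p₀) Y y n}) : r a b := by
  classical
  let F : ℕ → Option (Quotient r) := fun n => if hn : IsNode _ Y y n then some ⟦⟨n, hn⟩⟧ else none
  have hF (n : {n // IsNode (scale p₀) Y y n}) : F n = some ⟦n⟧ := dif_pos n.2
  have hone (n : {n // IsNode (scale p₀) Y y n}) : F n = F 1 := by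
    refine eq_apply_one_of_hubs (D := {n | IsNode (scale p₀) Y y n})
      (fun h0 => h0.ne_zero rfl) (fun b hb a ha => hb.of_dvd ha) (fun n hn hn1 => ?_) n.2
    refine ⟨m n.minFac, h.hub_mem_smoothNumbers (Nat.minFac_prime hn1),
      h.isNode_upperEnd hn hn1, ?_⟩
    exact (hF (h.lowerSlot ⟨n, hn, hn1⟩).1).trans
      ((congrArg some (Quotient.sound (hr ⟨n, hn, hn1⟩))).trans
        (hF (h.upperSlot ⟨n, hn, hn1⟩).1).symm)
  refine Quotient.exact (Option.some_injective _ ?_)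
  rw [← hF a, ← hF b, hone a, hone b]

lemma value_slotEnd_lowerSlot_dvd (h : IsHubAssignment p₀ m s)
    (n : Conn (scale p₀) Y y) (b : Bool) :
    Vertex.value (slotEnd b (h.lowerSlot n)) ∣ Vertex.value (slotEnd b (h.upperSlot n)) := by
  rw [lowerSlot, upperSlot, Slot.value_slotEnd_mk, Slot.value_slotEnd_mk]
  exact Nat.mul_dvd_mul_right (lowerEnd_dvd_upperEnd m n) _

lemma exists_perm (h : IsHubAssignment p₀ m s) (Y : ℕ) (y : ℝ) :
    ∃ g : Equiv.Perm (Vertex (scale p₀) Y y), (∀ v w, g.SameCycle v w) ∧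
      ∀ v : Vertex (scale p₀) Y y, v.value ∣ (g v).value ∨ (g v).value ∣ v.value := by
  have hfin : {n | IsNode (scale p₀) Y y n}.Finite := finite_setOf_isNode (two_le_scale p₀)
  have : Finite {n // IsNode (scale p₀) Y y n} := hfin
  have : Finite (Conn (scale p₀) Y y) := hfin.subset fun n hn => hn.1
  obtain ⟨g, hcycle, hstep⟩ := exists_perm_of_slots (up := h.upperSlot)
    (lo := h.lowerSlot (Y := Y) (y := y))
    (ε := fun o => decide (Even (ArithmeticFunction.cardFactors o.1)))
    h.lowerSlot_injective h.upperSlot_injective h.lowerSlot_ne_upperSlot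
    (fun n => by
      rw [Bool.eq_not, ne_eq, decide_eq_decide, not_iff, not_iff_comm]
      exact (h.even_cardFactors_upperEnd n).symm)
    (fun n => {o | (o : ℕ) ∈ tailSet n}) (fun n => n.1.minFac)
    (fun n => h.lowerEnd_notMem_tailSet n.2.2 n.2.1.ne_zero)
    (fun n => h.upperEnd_mem_tailSet n.2.2)
    (fun n n' hne hle => h.lowerEnd_mem_tailSet_iff n.2.1.ne_zero n'.2.2 n'.2.1.ne_zero
      (Subtype.coe_injective.ne hne) hle)
    h.setoid_rel_of_slots
  refine ⟨g, hcycle, fun v => ?_⟩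
  rcases hstep v with hv | ⟨n, b, ⟨hv, hgv⟩ | ⟨hv, hgv⟩⟩
  · exact Vertex.value_dvd_or_dvd hv.symm
  · exact Or.inl (hgv ▸ hv ▸ h.value_slotEnd_lowerSlot_dvd n b)
  · exact Or.inr (hgv ▸ hv ▸ h.value_slotEnd_lowerSlot_dvd n b)

lemma exists_isChain_dvd (h : IsHubAssignment p₀ m s) (y : ℝ) (hY : 16 ≤ Y) :
    ∃ l : List ℕ, l.Nodup ∧ l.IsChain (fun a b => a ∣ b ∨ b ∣ a) ∧
      {n | IsNode (scale p₀) Y y n}.ncard ≤ l.length ∧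
      ∀ v ∈ l, ∃ o k, IsNode (scale p₀) Y y o ∧ v = o * 2 ^ k ∧ Nat.sqrt Y < v ∧ 2 * v ≤ Y := by
  have : Finite {n // IsNode (scale p₀) Y y n} := finite_setOf_isNode (two_le_scale p₀)
  have := Fintype.ofFinite (Vertex (scale p₀) Y y)
  obtain ⟨g, hcycle, hstep⟩ := h.exists_perm Y y
  obtain ⟨l, hnodup, hchain, hlen⟩ := exists_list_isChain_of_sameCycle hcycle
    (R := fun v w => v.value ∣ w.value ∨ w.value ∣ v.value) hstep
  refine ⟨l.map Vertex.value, hnodup.map Vertex.value_injective,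
    (List.isChain_map _).2 hchain, ?_, ?_⟩
  · rw [List.length_map, hlen, ← Nat.card_eq_fintype_card]
    exact Nat.card_le_card_of_injective
      (fun o => (⟨o, 0⟩ : Vertex (scale p₀) Y y)) fun o o' ho => congrArg Sigma.fst ho
  · simp only [List.forall_mem_map]
    exact fun v _ => ⟨_, _, v.1.2, rfl, v.value_window hY (two_le_scale p₀)⟩

end IsHubAssignment
end Assembly

section Conclusion

variable {p₀ : ℕ} {m s : ℕ → ℕ} {x y : ℝ}

lemma bddAbove_length_isDivChain {P : ℕ → Prop} (hP : ∀ n, P n → (n : ℝ) ≤ x) :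
    BddAbove {L : ℕ | ∃ l : List ℕ, IsDivChain l ∧ (∀ n ∈ l, P n) ∧ l.length = L} := by
  refine ⟨#(Icc 1 ⌊x⌋₊), ?_⟩
  rintro L ⟨l, ⟨hnodup, hpos, -⟩, hl, rfl⟩
  rw [← List.toFinset_card_of_nodup hnodup]
  refine card_le_card fun n hn => ?_
  rw [List.mem_toFinset] at hn
  exact mem_Icc.2 ⟨hpos n hn, Nat.le_floor (hP n (hl n hn))⟩

lemma faxyStar_le_faxy (x y : ℝ) : faxyStar x y ≤ faxy x y :=
  csSup_le_csSup (bddAbove_length_isDivChain fun _ h => h.2.2.1)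
    ⟨0, [], ⟨List.nodup_nil, by simp, List.isChain_nil⟩, by simp, rfl⟩
    fun _ ⟨l, hl, hmem, hlen⟩ => ⟨l, hl, fun n hn =>
      have ⟨h1, hS, _, hnx, hP⟩ := hmem n hn
      ⟨h1, hS, hnx, hP⟩, hlen⟩

lemma length_le_faxyStar {l : List ℕ} (hl : IsDivChain l)
    (hmem : ∀ n ∈ l, 1 ≤ n ∧ (SS n : ℝ) ≤ x ∧ √x < n ∧ (n : ℝ) ≤ x ∧ (Pmax n : ℝ) ≤ y) :
    l.length ≤ faxyStar x y :=
  le_csSup (bddAbove_length_isDivChain fun _ h => h.2.2.2.1) ⟨l, hl, hmem, rfl⟩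

lemma sqrt_lt_natCast_of_sqrt_floor_lt {v : ℕ} (hx : 0 ≤ x) (h : Nat.sqrt ⌊x⌋₊ < v) : √x < v := by
  rw [Real.sqrt_lt' (by exact_mod_cast h.pos), ← Nat.cast_pow, ← Nat.floor_lt hx]
  exact Nat.sqrt_lt'.1 h

namespace IsHubAssignment

lemma ncard_isNode_le_faxyStar (h : IsHubAssignment p₀ m s) (hx : 0 ≤ x) (hy : 2 ≤ y) :
    {n | IsNode (scale p₀) ⌊x⌋₊ y n}.ncard ≤ faxyStar x y := by
  rcases Set.eq_empty_or_nonempty {n | IsNode (scale p₀) ⌊x⌋₊ y n} with hempty | ⟨n, hn⟩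
  · rw [hempty, Set.ncard_empty]
    exact Nat.zero_le _
  have hY : 16 ≤ ⌊x⌋₊ := calc
    16 = 4 ^ 2 := rfl
    _ ≤ scale p₀ := Nat.pow_le_pow_right four_pos (Nat.le_add_left _ _)
    _ ≤ scale p₀ * n := Nat.le_mul_of_pos_right _ hn.odd.pos
    _ ≤ ⌊x⌋₊ := hn.mul_le
  obtain ⟨l, hnodup, hchain, hcard, hl⟩ := h.exists_isChain_dvd y hY
  have hmem : ∀ v ∈ l, 1 ≤ v ∧ (SS v : ℝ) ≤ x ∧ √x < v ∧ (v : ℝ) ≤ x ∧ (Pmax v : ℝ) ≤ y := by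
    intro v hv
    obtain ⟨o, k, ho, rfl, hlo, hhi⟩ := hl v hv
    have hle {a : ℕ} (ha : a ≤ ⌊x⌋₊) : (a : ℝ) ≤ x := (Nat.le_floor_iff hx).1 ha
    exact ⟨hlo.pos, hle (ho.SS_mul_two_pow_le (by positivity) hhi),
      sqrt_lt_natCast_of_sqrt_floor_lt hx hlo, hle (by omega), ho.Pmax_mul_two_pow_le hy k⟩
  exact hcard.trans (length_le_faxyStar ⟨hnodup, fun v hv => (hmem v hv).1, hchain⟩ hmem)

lemma Axyz_le_faxyStar (h : IsHubAssignment p₀ m s) (hx : 0 ≤ x) (hy : 2 ≤ y) :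
    Axyz (x / scale p₀) y 2 ≤ faxyStar x y := by
  refine le_trans (Set.ncard_le_ncard ?_ (finite_setOf_isNode (two_le_scale p₀)))
    (h.ncard_isNode_le_faxyStar hx hy)
  rintro n ⟨h1, hnx, hP, hodd, hS⟩
  exact isNode_of_SS_le (by positivity) hx (one_le_two.trans hy) h1 hnx hP hodd hS

end IsHubAssignment
end Conclusion

end DivisorChain

/-- There exists `M ≥ 1` such that for all `x ≥ 8` and `y ≥ 2`,
`f_a(x,y) ≥ f_a*(x,y) ≥ A(x/M, y, 2)`. -/
theorem stmt_3 : ∃ M : ℝ, 1 ≤ M ∧ ∀ x y : ℝ, 8 ≤ x → 2 ≤ y →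
    faxyStar x y ≤ faxy x y ∧ Axyz (x / M) y 2 ≤ faxyStar x y := by
  obtain ⟨p₀, m, s, h⟩ := DivisorChain.exists_isHubAssignment
  refine ⟨DivisorChain.scale p₀, ?_, fun x y hx hy => ⟨DivisorChain.faxyStar_le_faxy x y,
    h.Axyz_le_faxyStar (by linarith) hy⟩⟩
  exact_mod_cast one_le_two.trans (DivisorChain.two_le_scale p₀)
end

section
/- Let x ≥ 2 and y ≥ 2 be real numbers. Let p₁ < p₂ < ⋯ denote the increasing sequence of primes, with the conventions p₀ = 2 and p₋₁ = 1/2, and let j = j(x,y) = π(min(y, x/2)), where π is the prime-counting function. Then there exists a chain, all of whose terms n satisfy n ≤ x and P(n) ≤ y, which begins at 2p_{j−1} (i.e., begins at 1 if j = 0, at 4 if j = 1, and at 2p_{j−1} if j ≥ 2), ends at 2, and whose set of terms contains every element of 𝒜(x/2, y). -/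
/-!
Everything rests on paths through whole layers. Write `p₀ < p₁ < ⋯` for the primes and sort the
integers `n ≤ X` by their largest prime factor `pᵢ`. For `i ≥ 1` the layer of `pᵢ` is `pᵢ` times the
`pᵢ`-smooth integers up to `X / pᵢ`, so by induction on `X` it is traversed, backwards, by a path
from `2 pᵢ` to `2 pᵢ₋₁ pᵢ`, which is adjacent to the start `2 pᵢ₋₁` of the next layer. The layer of
`2` consists of the powers of `2`. The induction is available when `2 pᵢ² ≤ X`; otherwise no `n` in
the layer satisfies `2 S(n) ≤ X`, and the layer can be skipped. The path for the largest prime `pⱼ`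
descends through the layers of `pⱼ₋₁, …, p₀` to `1`, then traverses the layer of `pⱼ` and stops at
`2`. When that last layer may be skipped, it suffices to jump to `1` right after the layer of `pⱼ₋₁`
and to descend from there through the remaining layers to `2`.
-/

open Set

/-- The `i`-th prime, counted from `𝐩 0 = 2`. -/
local notation "𝐩" => Nat.nth Nat.Prime

/-- Some path in the divisor graph leads from `a` to `b`, stays inside `A` and visits every element
of `A ∩ T`. The set `T` of targets is fixed throughout a construction, while `A` grows. -/
def DivPath (T A : Set ℕ) (a b : ℕ) : Prop :=
  ∃ l, IsDivChain l ∧ l.head? = some a ∧ l.getLast? = some b ∧ (∀ n ∈ l, n ∈ A) ∧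
    ∀ n ∈ A, n ∈ T → n ∈ l

namespace DivPath

variable {T T' A A' : Set ℕ} {a b c d : ℕ}

theorem singleton (T : Set ℕ) (ha : 0 < a) : DivPath T {a} a a :=
  ⟨[a], ⟨by simp, by simpa, List.isChain_singleton a⟩, by simp⟩

theorem mono (h : DivPath T A a b) (hA : A ⊆ A') (hT : A' ∩ T' ⊆ A ∩ T) : DivPath T' A' a b := by
  obtain ⟨l, hl, ha, hb, hlA, hAl⟩ := h
  exact ⟨l, hl, ha, hb, fun n hn ↦ hA (hlA n hn),
    fun n hnA hnT ↦ hAl n (hT ⟨hnA, hnT⟩).1 (hT ⟨hnA, hnT⟩).2⟩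

theorem append (h : DivPath T A a b) (h' : DivPath T A' c d) (hbc : b ∣ c ∨ c ∣ b)
    (hA : Disjoint A A') : DivPath T (A ∪ A') a d := by
  obtain ⟨l, ⟨hnodup, hpos, hchain⟩, ha, hb, hlA, hAl⟩ := h
  obtain ⟨l', ⟨hnodup', hpos', hchain'⟩, hc, hd, hlA', hAl'⟩ := h'
  refine ⟨l ++ l', ⟨?_, ?_, ?_⟩, by simp [ha], by simp [hd], ?_, ?_⟩
  · exact hnodup.append hnodup' fun n hn hn' ↦ disjoint_left.1 hA (hlA n hn) (hlA' n hn')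
  · exact fun n hn ↦ (List.mem_append.1 hn).elim (hpos n) (hpos' n)
  · refine List.isChain_append.2 ⟨hchain, hchain', ?_⟩
    simpa [hb, hc] using hbc
  · exact fun n hn ↦ (List.mem_append.1 hn).imp (hlA n) (hlA' n)
  · exact fun n hn hnT ↦ List.mem_append.2 (hn.imp (hAl n · hnT) (hAl' n · hnT))

theorem reverse (h : DivPath T A a b) : DivPath T A b a := by
  obtain ⟨l, ⟨hnodup, hpos, hchain⟩, ha, hb, hlA, hAl⟩ := h
  refine ⟨l.reverse, ⟨by simpa, by simpa, ?_⟩, by simpa, by simpa, by simpa, by simpa⟩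
  exact List.isChain_reverse.2 (hchain.imp fun _ _ ↦ Or.symm)

theorem mul_left (h : DivPath T A a b) (hc : 0 < c) (hT : ∀ n ∈ A, c * n ∈ T' → n ∈ T) :
    DivPath T' ((c * ·) '' A) (c * a) (c * b) := by
  obtain ⟨l, ⟨hnodup, hpos, hchain⟩, ha, hb, hlA, hAl⟩ := h
  refine ⟨l.map (c * ·), ⟨?_, ?_, ?_⟩, by simp [ha], by simp [hb], ?_, ?_⟩
  · exact hnodup.map (mul_right_injective₀ hc.ne')
  · simpa using fun n hn ↦ ⟨hc, hpos n hn⟩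
  · exact (List.isChain_map _).2
      (hchain.imp fun _ _ ↦ Or.imp (Nat.mul_dvd_mul_left c) (Nat.mul_dvd_mul_left c))
  · exact List.forall_mem_map.2 fun n hn ↦ mem_image_of_mem _ (hlA n hn)
  · exact forall_mem_image.2 fun n hn hnT ↦ List.mem_map_of_mem (hAl n hn (hT n hn hnT))

theorem image_Iic (T : Set ℕ) {f : ℕ → ℕ} (hf : StrictMono f) (hpos : 0 < f 0)
    (hdvd : ∀ t, f t ∣ f (t + 1)) (k : ℕ) : DivPath T (f '' Iic k) (f 0) (f k) := by
  induction k with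
  | zero =>
    rw [show Iic 0 = {0} from Iic_bot, image_singleton]
    exact singleton T hpos
  | succ k ih =>
    rw [show Iic (k + 1) = Iic k ∪ {k + 1} by ext; simp; omega, image_union, image_singleton]
    refine ih.append (singleton T (hpos.trans (hf k.succ_pos))) (Or.inl (hdvd k)) ?_
    rw [disjoint_singleton_right, hf.injective.mem_set_image]
    simp

end DivPath

section SchinzelSzekeres

variable {m n p q B : ℕ}

theorem foldr_max_le_iff {α : Type*} [LinearOrder α] {l : List α} {a b : α} :
    l.foldr max a ≤ b ↔ a ≤ b ∧ ∀ v ∈ l, v ≤ b := by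
  induction l with
  | nil => simp
  | cons v l ih => simp only [List.foldr_cons, max_le_iff, ih, List.forall_mem_cons]; tauto

theorem SS_le_iff : SS n ≤ B ↔
    1 ≤ B ∧ ∀ q L, q :: L <:+ n.primeFactorsList → q * (q * L.prod) ≤ B := by
  simp only [SS, foldr_max_le_iff, List.forall_mem_map, List.mem_range]
  refine and_congr_right fun _ ↦ ⟨fun h q L hqL ↦ ?_, fun h j hj ↦ ?_⟩
  · have hlen := hqL.length_le
    rw [List.length_cons] at hlen
    have hdrop := List.suffix_iff_eq_drop.1 hqL
    have hle := h (n.primeFactorsList.length - (q :: L).length) (by rw [List.length_cons]; omega)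
    rwa [← hdrop, List.headI_cons, List.prod_cons] at hle
  · have hsuffix := List.drop_suffix j n.primeFactorsList
    rw [List.drop_eq_getElem_cons hj] at hsuffix ⊢
    simpa only [List.headI_cons, List.prod_cons] using h _ _ hsuffix

theorem one_le_SS (n : ℕ) : 1 ≤ SS n :=
  (SS_le_iff.1 le_rfl).1

theorem mul_prod_le_SS {L : List ℕ} (h : q :: L <:+ n.primeFactorsList) :
    q * (q * L.prod) ≤ SS n :=
  (SS_le_iff.1 le_rfl).2 q L h

theorem sq_le_SS (hn : n ≠ 0) (hq : q.Prime) (hqn : q ∣ n) : q ^ 2 ≤ SS n := by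
  obtain ⟨K, L, hKL⟩ := List.append_of_mem ((Nat.mem_primeFactorsList hn).2 ⟨hq, hqn⟩)
  have hL : 0 < L.prod := List.prod_pos fun r hr ↦
    Nat.pos_of_mem_primeFactorsList (n := n) (by simp [hKL, hr])
  calc q ^ 2 = q * q := sq q
    _ ≤ q * (q * L.prod) := Nat.mul_le_mul_left q (Nat.le_mul_of_pos_right q hL)
    _ ≤ SS n := mul_prod_le_SS ⟨K, hKL.symm⟩

theorem le_SS (n : ℕ) : n ≤ SS n := by
  rcases le_or_gt n 1 with hn | hn
  · exact hn.trans (one_le_SS n)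
  · obtain ⟨q, L, hqL⟩ := List.exists_cons_of_ne_nil ((Nat.primeFactorsList_ne_nil n).2 hn)
    have hq : 0 < q := Nat.pos_of_mem_primeFactorsList (n := n) (by simp [hqL])
    calc n = q * L.prod := by rw [← List.prod_cons, ← hqL, Nat.prod_primeFactorsList (by omega)]
      _ ≤ q * (q * L.prod) := Nat.le_mul_of_pos_left _ hq
      _ ≤ SS n := mul_prod_le_SS ⟨[], hqL.symm⟩

theorem primeFactorsList_mul_of_forall_le (hp : p.Prime) (hm : m ≠ 0)
    (h : ∀ q, q.Prime → q ∣ m → q ≤ p) :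
    (p * m).primeFactorsList = m.primeFactorsList ++ [p] := by
  have hperm : (p * m).primeFactorsList.Perm (m.primeFactorsList ++ [p]) := by
    simpa only [Nat.primeFactorsList_prime hp] using
      (Nat.perm_primeFactorsList_mul hp.ne_zero hm).trans List.perm_append_comm
  have hsorted : (m.primeFactorsList ++ [p]).Pairwise (· ≤ ·) := by
    refine List.pairwise_append.2 ⟨(Nat.primeFactorsList_sorted m).pairwise, by simp, ?_⟩
    simpa using fun q hq hqm _ ↦ h q hq hqm
  exact hperm.eq_of_pairwise' (Nat.primeFactorsList_sorted _).pairwise hsorted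

theorem mul_SS_le_SS_mul (hp : p.Prime) (hm : m ≠ 0) (h : ∀ q, q.Prime → q ∣ m → q ≤ p) :
    p * SS m ≤ SS (p * m) := by
  have hlist := primeFactorsList_mul_of_forall_le hp hm h
  have hSS : SS m ≤ SS (p * m) / p := by
    refine SS_le_iff.2 ⟨?_, fun q L hqL ↦ ?_⟩
    · rw [Nat.one_le_div_iff hp.pos]
      exact (Nat.le_self_pow two_ne_zero p).trans
        (sq_le_SS (Nat.mul_ne_zero hp.ne_zero hm) hp (dvd_mul_right p m))
    · rw [Nat.le_div_iff_mul_le hp.pos]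
      have hsuffix : q :: (L ++ [p]) <:+ (p * m).primeFactorsList := by
        obtain ⟨K, hK⟩ := hqL
        exact ⟨K, by simp [hlist, ← hK]⟩
      simpa [mul_assoc] using mul_prod_le_SS hsuffix
  exact (Nat.mul_le_mul_left p hSS).trans (Nat.mul_div_le _ _)

end SchinzelSzekeres

section Layers

variable {X i j n : ℕ}

theorem strictMono_nth_prime : StrictMono 𝐩 :=
  Nat.nth_strictMono Nat.infinite_setOfPred_prime

theorem nth_prime_le_iff {M : ℕ} : 𝐩 i ≤ M ↔ i < Nat.primeCounting M := by
  rw [Nat.primeCounting, Nat.primeCounting', ← not_le, ← not_lt, not_iff_not,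
    Nat.count_le_iff_le_nth Nat.infinite_setOfPred_prime, Nat.succ_le_iff]

theorem mem_smoothNumbers_nth_prime :
    n ∈ Nat.smoothNumbers (𝐩 j) ↔ ∀ i, 𝐩 i ∣ n → i < j := by
  rw [Nat.mem_smoothNumbers']
  refine ⟨fun h i hi ↦ strictMono_nth_prime.lt_iff_lt.1 (h _ (Nat.prime_nth_prime i) hi),
    fun h q hq hqn ↦ ?_⟩
  obtain ⟨i, rfl⟩ : ∃ i, 𝐩 i = q := ⟨_, Nat.nth_count hq⟩
  exact strictMono_nth_prime (h i hqn)

theorem mem_smoothNumbers_nth_prime_of_not_dvd (h : n ∈ Nat.smoothNumbers (𝐩 (j + 1)))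
    (hj : ¬ 𝐩 j ∣ n) : n ∈ Nat.smoothNumbers (𝐩 j) := by
  refine mem_smoothNumbers_nth_prime.2 fun i hi ↦ ?_
  refine (Nat.lt_succ_iff.1 (mem_smoothNumbers_nth_prime.1 h i hi)).lt_of_ne ?_
  rintro rfl
  exact hj hi

theorem mem_smoothNumbers_nth_prime_succ :
    n ∈ Nat.smoothNumbers (𝐩 (j + 1)) ↔ ∀ q, q.Prime → q ∣ n → q ≤ 𝐩 j := by
  refine ⟨fun h q hq hqn ↦ ?_, fun h ↦ Nat.mem_smoothNumbers'.2 fun q hq hqn ↦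
    (h q hq hqn).trans_lt (strictMono_nth_prime j.lt_succ_self)⟩
  obtain ⟨i, rfl⟩ : ∃ i, 𝐩 i = q := ⟨_, Nat.nth_count hq⟩
  exact strictMono_nth_prime.monotone
    (Nat.lt_succ_iff.1 (mem_smoothNumbers_nth_prime.1 h i hqn))

theorem mem_smoothNumbers_nth_prime_one :
    n ∈ Nat.smoothNumbers (𝐩 1) ↔ ∃ t, n = 2 ^ t := by
  have hmem : n ∈ Nat.smoothNumbers (𝐩 1) ↔ ∀ q, q.Prime → q ∣ n → q ≤ 2 := by
    simpa only [Nat.nth_prime_zero_eq_two] using mem_smoothNumbers_nth_prime_succ (j := 0)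
  constructor
  · exact fun h ↦ ⟨_, Nat.eq_prime_pow_of_unique_prime_dvd (Nat.ne_zero_of_mem_smoothNumbers h)
      fun hq hqn ↦ (hmem.1 h _ hq hqn).antisymm hq.two_le⟩
  · rintro ⟨t, rfl⟩
    exact hmem.2 fun q hq hqt ↦ Nat.le_of_dvd two_pos (hq.dvd_of_dvd_pow hqt)

/-- The integers up to `X` all of whose prime factors are among the first `j` primes. -/
def smoothUpTo (X j : ℕ) : Set ℕ := {n | n ∈ Nat.smoothNumbers (𝐩 j) ∧ n ≤ X}

/-- The integers `n` with `S(n) ≤ X / 2`. -/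
def smallSS (X : ℕ) : Set ℕ := {n | 2 * SS n ≤ X}

/-- The integers up to `X` with largest prime factor `𝐩 i`, except `2`, which is reserved as the
endpoint of the paths. -/
def layer (X i : ℕ) : Set ℕ := {n ∈ smoothUpTo X (i + 1) | 𝐩 i ∣ n ∧ n ≠ 2}

theorem smoothUpTo_mono (h : i ≤ j) : smoothUpTo X i ⊆ smoothUpTo X j :=
  fun _ hn ↦ ⟨Nat.smoothNumbers_mono (strictMono_nth_prime.monotone h) hn.1, hn.2⟩

theorem one_mem_smoothUpTo (hX : 1 ≤ X) : 1 ∈ smoothUpTo X j :=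
  ⟨mem_smoothNumbers_nth_prime.2 fun i hi ↦
    absurd (Nat.dvd_one.1 hi) (Nat.prime_nth_prime i).ne_one, hX⟩

theorem nth_prime_mem_smoothNumbers (h : i < j) : 𝐩 i ∈ Nat.smoothNumbers (𝐩 j) :=
  Nat.mem_smoothNumbers_of_lt (Nat.prime_nth_prime i).pos (strictMono_nth_prime h)

theorem two_mem_smoothUpTo (hX : 2 ≤ X) : 2 ∈ smoothUpTo X (j + 1) :=
  ⟨Nat.nth_prime_zero_eq_two ▸ nth_prime_mem_smoothNumbers j.succ_pos, hX⟩

theorem smoothNumbers_nth_prime_zero : Nat.smoothNumbers (𝐩 0) = {1} := by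
  rw [Nat.nth_prime_zero_eq_two, Nat.smoothNumbers_succ Nat.not_prime_one, Nat.smoothNumbers_one]

theorem smoothUpTo_zero (hX : 1 ≤ X) : smoothUpTo X 0 = {1} := by
  ext n
  rw [smoothUpTo, smoothNumbers_nth_prime_zero]
  exact and_iff_left_of_imp fun hn ↦ hn.trans_le hX

theorem smoothUpTo_zero_sdiff : smoothUpTo X 0 \ {1, 2} = ∅ :=
  sdiff_eq_empty.2 fun _ hn ↦ Or.inl (smoothNumbers_nth_prime_zero.subset hn.1)

theorem layer_subset_smoothUpTo : layer X i ⊆ smoothUpTo X (i + 1) :=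
  sep_subset _ _

theorem disjoint_layer_smoothUpTo : Disjoint (layer X i) (smoothUpTo X i) :=
  disjoint_left.2 fun _ hn hn' ↦ (mem_smoothNumbers_nth_prime.1 hn'.1 i hn.2.1).false

theorem not_dvd_two_of_mem_layer (h : n ∈ layer X i) : ¬ n ∣ 2 := by
  intro hn
  obtain ⟨-, hi, hne⟩ := h
  have := (Nat.dvd_prime Nat.prime_two).1 hn
  rw [this.resolve_right hne] at hi
  exact (Nat.prime_nth_prime i).ne_one (Nat.dvd_one.1 hi)

theorem smoothUpTo_succ_sdiff :
    smoothUpTo X (i + 1) \ {1, 2} = layer X i ∪ smoothUpTo X i \ {1, 2} := by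
  ext n
  constructor
  · rintro ⟨⟨hsmooth, hX⟩, hne⟩
    rw [mem_insert_iff, mem_singleton_iff, not_or] at hne
    by_cases hi : 𝐩 i ∣ n
    · exact Or.inl ⟨⟨hsmooth, hX⟩, hi, hne.2⟩
    · exact Or.inr ⟨⟨mem_smoothNumbers_nth_prime_of_not_dvd hsmooth hi, hX⟩, by simp [hne]⟩
  · rintro (hn | hn)
    · refine ⟨layer_subset_smoothUpTo hn, ?_⟩
      rintro (rfl | rfl)
      exacts [not_dvd_two_of_mem_layer hn (one_dvd 2), not_dvd_two_of_mem_layer hn dvd_rfl]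
    · exact ⟨smoothUpTo_mono i.le_succ hn.1, hn.2⟩

theorem layer_succ : layer X (i + 1) =
    (𝐩 (i + 1) * ·) '' smoothUpTo (X / 𝐩 (i + 1)) (i + 2) := by
  have hp := (Nat.prime_nth_prime (i + 1)).pos
  ext n
  constructor
  · rintro ⟨⟨hsmooth, hX⟩, ⟨m, rfl⟩, -⟩
    exact ⟨m, ⟨Nat.mem_smoothNumbers_of_dvd hsmooth (dvd_mul_left _ _),
      (Nat.le_div_iff_mul_le hp).2 (by rwa [mul_comm])⟩, rfl⟩
  · rintro ⟨m, ⟨hsmooth, hX⟩, rfl⟩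
    rw [Nat.le_div_iff_mul_le hp, mul_comm] at hX
    refine ⟨⟨Nat.mul_mem_smoothNumbers (nth_prime_mem_smoothNumbers (i + 1).lt_succ_self) hsmooth,
      hX⟩, dvd_mul_right _ _, fun htwo ↦ ?_⟩
    have := Nat.le_of_dvd two_pos (Dvd.intro m htwo)
    have := Nat.add_two_le_nth_prime (i + 1)
    omega

theorem layer_zero (hX : 4 ≤ X) :
    layer X 0 = (fun t ↦ 2 ^ (t + 2)) '' Iic (Nat.log 2 X - 2) := by
  have hlog {t : ℕ} : 2 ^ t ≤ X ↔ t ≤ Nat.log 2 X :=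
    (Nat.le_log_iff_pow_le one_lt_two (by omega)).symm
  have hlog_two : 2 ≤ Nat.log 2 X := hlog.1 hX
  ext n
  constructor
  · rintro ⟨⟨hsmooth, hnX⟩, htwo, hne⟩
    rw [Nat.nth_prime_zero_eq_two] at htwo
    obtain ⟨t, rfl⟩ := mem_smoothNumbers_nth_prime_one.1 hsmooth
    match t with
    | 0 => omega
    | 1 => omega
    | s + 2 => exact ⟨s, Nat.le_sub_of_add_le (hlog.1 hnX), rfl⟩
  · rintro ⟨t, ht, rfl⟩
    refine ⟨⟨mem_smoothNumbers_nth_prime_one.2 ⟨_, rfl⟩, hlog.2 ?_⟩, ?_, ?_⟩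
    · exact Nat.add_le_of_le_sub hlog_two ht
    · rw [Nat.nth_prime_zero_eq_two]
      exact dvd_pow_self 2 (Nat.succ_ne_zero (t + 1))
    · exact (Nat.pow_lt_pow_right one_lt_two (by omega : 1 < t + 2)).ne'

theorem two_mul_sq_le_of_mem_smallSS {q : ℕ} (hn : n ≠ 0) (hq : q.Prime) (hqn : q ∣ n)
    (h : n ∈ smallSS X) : 2 * q ^ 2 ≤ X :=
  (Nat.mul_le_mul_left 2 (sq_le_SS hn hq hqn)).trans h

theorem smoothUpTo_succ_inter_smallSS (hj : X < 2 * 𝐩 j ^ 2) :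
    smoothUpTo X (j + 1) ∩ smallSS X ⊆ smoothUpTo X j := by
  rintro n ⟨⟨hsmooth, hX⟩, hSS⟩
  refine ⟨mem_smoothNumbers_nth_prime_of_not_dvd hsmooth fun hjn ↦ hj.not_ge ?_, hX⟩
  exact two_mul_sq_le_of_mem_smallSS (Nat.ne_zero_of_mem_smoothNumbers hsmooth)
    (Nat.prime_nth_prime j) hjn hSS

/-- The layer of `𝐩 i` is traversed by a path which can be continued into the layer of `𝐩 (i - 1)`.
Truncated subtraction gives `2 * 𝐩 (0 - 1) = 4`, the lowest term of the layer of `𝐩 0`. -/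
def HasLayerPath (X i : ℕ) : Prop :=
  ∃ b, 2 * 𝐩 (i - 1) ∣ b ∧ DivPath (smallSS X) (layer X i) (2 * 𝐩 i) b

theorem hasLayerPath_zero (hX : 4 ≤ X) : HasLayerPath X 0 := by
  refine ⟨2 ^ (Nat.log 2 X - 2 + 2), ?_, ?_⟩
  · rw [Nat.nth_prime_zero_eq_two]
    exact ⟨2 ^ (Nat.log 2 X - 2), by ring⟩
  · rw [layer_zero hX, Nat.nth_prime_zero_eq_two]
    exact DivPath.image_Iic _ (fun s t hst ↦ Nat.pow_lt_pow_right one_lt_two (by omega))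
      (by norm_num) (fun t ↦ pow_dvd_pow 2 (by omega)) _

theorem hasLayerPath_succ (h : DivPath (smallSS (X / 𝐩 (i + 1)))
      (smoothUpTo (X / 𝐩 (i + 1)) (i + 2)) (2 * 𝐩 i) 2) :
    HasLayerPath X (i + 1) := by
  have hp := Nat.prime_nth_prime (i + 1)
  refine ⟨𝐩 (i + 1) * (2 * 𝐩 i), dvd_mul_left _ _, ?_⟩
  rw [layer_succ, mul_comm 2 (𝐩 (i + 1))]
  refine (h.mul_left hp.pos fun m hm hSS ↦ (Nat.le_div_iff_mul_le hp.pos).2 ?_).reverse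
  calc 2 * SS m * 𝐩 (i + 1) = 2 * (𝐩 (i + 1) * SS m) := by ring
    _ ≤ 2 * SS (𝐩 (i + 1) * m) := Nat.mul_le_mul_left 2
      (mul_SS_le_SS_mul hp (Nat.ne_zero_of_mem_smoothNumbers hm.1)
        (mem_smoothNumbers_nth_prime_succ.1 hm.1))
    _ ≤ X := hSS

end Layers

section Construction

variable {X i j e : ℕ}

theorem disjoint_layer_insert (he : e ∣ 2) :
    Disjoint (layer X i) (insert e (smoothUpTo X i \ {1, 2})) :=
  disjoint_insert_right.2 ⟨fun h ↦ not_dvd_two_of_mem_layer h he,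
    disjoint_layer_smoothUpTo.mono_right sdiff_subset⟩

theorem insert_smoothUpTo_succ_sdiff (X i e : ℕ) : insert e (smoothUpTo X (i + 1) \ {1, 2}) =
    layer X i ∪ insert e (smoothUpTo X i \ {1, 2}) := by
  rw [smoothUpTo_succ_sdiff, union_insert]

theorem smoothUpTo_succ_eq_insert (hX : 2 ≤ X) :
    smoothUpTo X (i + 1) = insert 1 (insert 2 (smoothUpTo X (i + 1) \ {1, 2})) := by
  have hpair : {1, 2} ⊆ smoothUpTo X (i + 1) :=
    pair_subset (one_mem_smoothUpTo (by omega)) (two_mem_smoothUpTo hX)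
  calc smoothUpTo X (i + 1) = {1, 2} ∪ smoothUpTo X (i + 1) \ {1, 2} :=
        (union_sdiff_cancel hpair).symm
    _ = insert 1 (insert 2 (smoothUpTo X (i + 1) \ {1, 2})) := by
        rw [insert_union, singleton_union]

theorem divPath_descend (he : e ∣ 2) (hlayer : ∀ k ≤ i, HasLayerPath X k) :
    DivPath (smallSS X) (insert e (smoothUpTo X (i + 1) \ {1, 2})) (2 * 𝐩 i) e := by
  induction i with
  | zero =>
    obtain ⟨b, hb, hpath⟩ := hlayer 0 le_rfl
    have hdisj := disjoint_layer_insert (X := X) (i := 0) he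
    rw [insert_smoothUpTo_succ_sdiff]
    rw [smoothUpTo_zero_sdiff, insert_empty_eq] at hdisj ⊢
    exact hpath.append (.singleton _ (Nat.pos_of_dvd_of_pos he two_pos))
      (Or.inr (he.trans (dvd_of_mul_right_dvd hb))) hdisj
  | succ i ih =>
    obtain ⟨b, hb, hpath⟩ := hlayer (i + 1) le_rfl
    rw [insert_smoothUpTo_succ_sdiff]
    exact hpath.append (ih fun k hk ↦ hlayer k (hk.trans i.le_succ)) (Or.inr hb)
      (disjoint_layer_insert he)

theorem exists_divPath_descend (he : e ∣ 2)
    (hlayer : ∀ k, 2 * 𝐩 k ^ 2 ≤ X → HasLayerPath X k) (j : ℕ) :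
    ∃ c, DivPath (smallSS X) (insert e (smoothUpTo X j \ {1, 2})) c e := by
  induction j with
  | zero =>
    rw [smoothUpTo_zero_sdiff, insert_empty_eq]
    exact ⟨e, .singleton _ (Nat.pos_of_dvd_of_pos he two_pos)⟩
  | succ j ih =>
    by_cases hj : 2 * 𝐩 j ^ 2 ≤ X
    · refine ⟨_, divPath_descend he fun k hk ↦ hlayer k (le_trans ?_ hj)⟩
      gcongr
      exact strictMono_nth_prime.monotone hk
    · obtain ⟨c, hc⟩ := ih
      refine ⟨c, hc.mono ?_ ?_⟩
      · gcongr
        exact smoothUpTo_mono j.le_succ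
      · rintro n ⟨rfl | hn, hSS⟩
        · exact ⟨mem_insert _ _, hSS⟩
        · exact ⟨Or.inr ⟨smoothUpTo_succ_inter_smallSS (not_le.1 hj) ⟨hn.1, hSS⟩, hn.2⟩, hSS⟩

theorem exists_divPath_layer (hi : 2 * 𝐩 i ≤ X) (hlayer : 2 * 𝐩 i ^ 2 ≤ X → HasLayerPath X i) :
    ∃ b, DivPath (smallSS X) (layer X i) (2 * 𝐩 i) b := by
  have hp := Nat.prime_nth_prime i
  by_cases hsq : 2 * 𝐩 i ^ 2 ≤ X
  · obtain ⟨b, -, hpath⟩ := hlayer hsq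
    exact ⟨b, hpath⟩
  · refine ⟨2 * 𝐩 i, (DivPath.singleton (smallSS X) (by simp [hp.pos])).mono ?_ ?_⟩
    · refine singleton_subset_iff.2 ⟨⟨?_, hi⟩, dvd_mul_left _ _, ?_⟩
      · exact Nat.mul_mem_smoothNumbers (two_mem_smoothUpTo le_rfl).1
          (nth_prime_mem_smoothNumbers i.lt_succ_self)
      · have := hp.two_le
        omega
    · rintro n ⟨⟨⟨hsmooth, -⟩, hin, -⟩, hSS⟩
      exact absurd (two_mul_sq_le_of_mem_smallSS (Nat.ne_zero_of_mem_smoothNumbers hsmooth)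
        hp hin hSS) hsq

theorem divPath_jump (hi : 2 * 𝐩 i ≤ X) (hlayer : ∀ k, 2 * 𝐩 k ^ 2 ≤ X → HasLayerPath X k) :
    DivPath (smallSS X) (smoothUpTo X (i + 1)) (2 * 𝐩 i) 2 := by
  have hX : 2 ≤ X := by have := (Nat.prime_nth_prime i).pos; omega
  obtain ⟨b, hb⟩ := exists_divPath_layer hi (hlayer i)
  obtain ⟨c, hc⟩ := exists_divPath_descend dvd_rfl hlayer i
  have hone : DivPath (smallSS X) (insert 1 (insert 2 (smoothUpTo X i \ {1, 2}))) 1 2 :=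
    (DivPath.singleton _ one_pos).append hc (Or.inl (one_dvd c)) (by simp)
  rw [smoothUpTo_succ_eq_insert hX, insert_smoothUpTo_succ_sdiff, ← union_insert]
  refine hb.append hone (Or.inr (one_dvd b)) (disjoint_insert_right.2 ⟨?_, ?_⟩)
  · exact fun h ↦ not_dvd_two_of_mem_layer h (one_dvd 2)
  · exact disjoint_layer_insert dvd_rfl

theorem divPath_return (hX : 2 ≤ X) (hlayer : ∀ k ≤ i + 1, HasLayerPath X k) :
    DivPath (smallSS X) (smoothUpTo X (i + 2)) (2 * 𝐩 i) 2 := by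
  have hdown : DivPath (smallSS X) (insert 1 (smoothUpTo X (i + 1) \ {1, 2})) (2 * 𝐩 i) 1 :=
    divPath_descend (one_dvd 2) fun k hk ↦ hlayer k (hk.trans i.le_succ)
  obtain ⟨b, hb, hpath⟩ := hlayer (i + 1) le_rfl
  have hup : DivPath (smallSS X) (layer X (i + 1) ∪ {2}) (2 * 𝐩 (i + 1)) 2 :=
    hpath.append (.singleton _ two_pos) (Or.inr (dvd_of_mul_right_dvd hb))
      (disjoint_singleton_right.2 fun h ↦ not_dvd_two_of_mem_layer h dvd_rfl)
  have hset : smoothUpTo X (i + 2) =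
      insert 1 (smoothUpTo X (i + 1) \ {1, 2}) ∪ (layer X (i + 1) ∪ {2}) := by
    rw [smoothUpTo_succ_eq_insert hX, insert_smoothUpTo_succ_sdiff, union_singleton,
      insert_union, union_insert, union_comm, union_insert]
  rw [hset]
  refine hdown.append hup (Or.inl (one_dvd _)) (disjoint_union_right.2 ⟨?_, ?_⟩)
  · exact (disjoint_layer_insert (one_dvd 2)).symm
  · simp

theorem divPath_smoothUpTo (X j : ℕ) (hj : 2 * 𝐩 j ≤ X) :
    DivPath (smallSS X) (smoothUpTo X (j + 1)) (2 * 𝐩 (j - 1)) 2 := by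
  induction X using Nat.strong_induction_on generalizing j with
  | _ X ih =>
    have hX : 4 ≤ X := by have := (Nat.prime_nth_prime j).two_le; omega
    have hlayer (k : ℕ) (hk : 2 * 𝐩 k ^ 2 ≤ X) : HasLayerPath X k := by
      match k with
      | 0 => exact hasLayerPath_zero hX
      | k + 1 =>
        have hp := Nat.prime_nth_prime (k + 1)
        refine hasLayerPath_succ (ih _ (Nat.div_lt_self (by omega) hp.one_lt) (k + 1) ?_)
        rw [Nat.le_div_iff_mul_le hp.pos]
        linarith
    match j with
    | 0 => exact divPath_jump hj hlayer
    | i + 1 =>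
      have hi : 𝐩 i ≤ 𝐩 (i + 1) := strictMono_nth_prime.monotone i.le_succ
      by_cases hsq : 2 * 𝐩 (i + 1) ^ 2 ≤ X
      · refine divPath_return (by omega) fun k hk ↦ hlayer k (le_trans ?_ hsq)
        gcongr
        exact strictMono_nth_prime.monotone hk
      · rw [Nat.add_sub_cancel]
        refine (divPath_jump (by omega) hlayer).mono (smoothUpTo_mono (i + 1).le_succ) ?_
        exact subset_inter (smoothUpTo_succ_inter_smallSS (not_le.1 hsq)) inter_subset_right

/-- The paper's `2p_{j-1}`, for its `1`-based enumeration of the primes and its conventions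
`p₀ = 2` and `p₋₁ = 1 / 2`. -/
noncomputable def chainStart (j : ℕ) : ℕ :=
  if j = 0 then 1 else if j = 1 then 4 else 2 * 𝐩 (j - 2)

theorem divPath_chainStart (hX : 2 ≤ X) (hj : ∀ i < j, 2 * 𝐩 i ≤ X) :
    DivPath (smallSS X) (insert 2 (smoothUpTo X j)) (chainStart j) 2 := by
  match j with
  | 0 =>
    rw [smoothUpTo_zero (by omega), insert_eq, union_comm]
    exact (DivPath.singleton _ one_pos).append (.singleton _ two_pos) (Or.inl (one_dvd 2)) (by simp)
  | 1 =>
    rw [insert_eq_of_mem (two_mem_smoothUpTo hX)]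
    simpa [chainStart, Nat.nth_prime_zero_eq_two] using divPath_smoothUpTo X 0 (hj 0 one_pos)
  | i + 2 =>
    rw [insert_eq_of_mem (two_mem_smoothUpTo hX)]
    simpa [chainStart] using divPath_smoothUpTo X (i + 1) (hj (i + 1) (by omega))

end Construction

section Parameters

variable {X Y n : ℕ}

theorem Pmax_le_iff (hn : n ≠ 0) (hY : 1 ≤ Y) :
    Pmax n ≤ Y ↔ ∀ q, q.Prime → q ∣ n → q ≤ Y := by
  rw [Pmax]
  split_ifs with hle
  · obtain rfl : n = 1 := by omega
    exact iff_of_true hY fun q hq hq1 ↦ absurd (Nat.dvd_one.1 hq1) hq.ne_one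
  · simp [Finset.sup_le_iff, hn]

theorem Pmax_le_of_mem_smoothUpTo (hY : 1 ≤ Y)
    (hn : n ∈ smoothUpTo X (Nat.primeCounting (min Y (X / 2)))) : Pmax n ≤ Y := by
  refine (Pmax_le_iff (Nat.ne_zero_of_mem_smoothNumbers hn.1) hY).2 fun q hq hqn ↦ ?_
  obtain ⟨i, rfl⟩ : ∃ i, 𝐩 i = q := ⟨_, Nat.nth_count hq⟩
  exact (nth_prime_le_iff.2 (mem_smoothNumbers_nth_prime.1 hn.1 i hqn)).trans (min_le_left _ _)

theorem mem_smoothUpTo_of_mem_smallSS (hn : n ≠ 0) (hY : 1 ≤ Y) (hP : Pmax n ≤ Y)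
    (hSS : n ∈ smallSS X) : n ∈ smoothUpTo X (Nat.primeCounting (min Y (X / 2))) := by
  have hnX : n ≤ X := by
    have hle := le_SS n
    have : 2 * SS n ≤ X := hSS
    omega
  refine ⟨mem_smoothNumbers_nth_prime.2 fun i hi ↦ nth_prime_le_iff.1 (le_min ?_ ?_), hnX⟩
  · exact (Pmax_le_iff hn hY).1 hP _ (Nat.prime_nth_prime i) hi
  · have hsq := two_mul_sq_le_of_mem_smallSS hn (Nat.prime_nth_prime i) hi hSS
    have := Nat.le_self_pow two_ne_zero (𝐩 i)
    omega

theorem floor_min_half (x y : ℝ) : ⌊min y (x / 2)⌋₊ = min ⌊y⌋₊ (⌊x⌋₊ / 2) := by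
  rw [Nat.floor_mono.map_min, ← Nat.floor_div_natCast, Nat.cast_ofNat]

end Parameters

/-- Let `x ≥ 2`, `y ≥ 2` and `j = π(min(y, x/2))`. There exists a chain, all of whose
terms `n` satisfy `n ≤ x` and `P(n) ≤ y`, which begins at `2p_{j-1}` (i.e. at `1` if
`j = 0`, at `4` if `j = 1`, and at twice the `(j-1)`-st prime if `j ≥ 2`), ends at `2`,
and whose set of terms contains every element of `𝒜(x/2, y)`. -/
theorem stmt_5 (x y : ℝ) (hx : 2 ≤ x) (hy : 2 ≤ y) :
    ∃ l : List ℕ, IsDivChain l ∧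
      (∀ n ∈ l, (n : ℝ) ≤ x ∧ (Pmax n : ℝ) ≤ y) ∧
      l.head? = some
        (if Nat.primeCounting ⌊min y (x / 2)⌋₊ = 0 then 1
         else if Nat.primeCounting ⌊min y (x / 2)⌋₊ = 1 then 4
         else 2 * Nat.nth Nat.Prime (Nat.primeCounting ⌊min y (x / 2)⌋₊ - 2)) ∧
      l.getLast? = some 2 ∧
      ∀ n : ℕ, 1 ≤ n → (Pmax n : ℝ) ≤ y → (SS n : ℝ) ≤ x / 2 → n ∈ l := by
  have hX : 2 ≤ ⌊x⌋₊ := Nat.le_floor (by exact_mod_cast hx)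
  have hY : 2 ≤ ⌊y⌋₊ := Nat.le_floor (by exact_mod_cast hy)
  rw [floor_min_half]
  obtain ⟨l, hl, hstart, hend, hmem, hcover⟩ :=
    divPath_chainStart (j := Nat.primeCounting (min ⌊y⌋₊ (⌊x⌋₊ / 2))) hX fun i hi ↦ by
      have := (nth_prime_le_iff.2 hi).trans (min_le_right _ _)
      omega
  refine ⟨l, hl, fun n hn ↦ ?_, hstart, hend, fun n hn hP hSS ↦ ?_⟩
  · rw [← Nat.le_floor_iff (by linarith), ← Nat.le_floor_iff (by linarith)]
    rcases hmem n hn with rfl | hn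
    · exact ⟨hX, (Pmax_le_iff two_ne_zero (by omega)).2 fun q _ hq ↦
        (Nat.le_of_dvd two_pos hq).trans hY⟩
    · exact ⟨hn.2, Pmax_le_of_mem_smoothUpTo (by omega) hn⟩
  · have hsmall : n ∈ smallSS ⌊x⌋₊ := Nat.le_floor (by push_cast; linarith)
    exact hcover n (Or.inr (mem_smoothUpTo_of_mem_smallSS (by omega) (by omega)
      (Nat.le_floor hP) hsmall)) hsmall
end
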